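/- Asymptotically almost surely, the permanent of the random symmetric Rademacher matrix M_n satisfies |per M_n| = n^{n/2+o(n)}; precisely, for every ε > 0, the probability that n^{n/2-εn} ≤ |per M_n| ≤ n^{n/2+εn} tends to 1 as n → ∞. -/

import Mathlib

/-!
The upper bound comes from the second moment. By induction on the size, the permanent of the
submatrix with rows `I` and columns `J` has second moment at most `(2 * n) ^ #I`, up to a factor `n`
if `I = J`, so that Markov's inequality gives `|per M_n| ≤ n ^ (n / 2 + ε * n)`.

For the lower bound, the entries are exposed in successive steps, and each step extends a submatrix
with a large permanent.

* Rectangular growth. Given a large permanent with rows `I` and columns `J`, a batch `D` of new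
  columns is exposed, and rows not used so far are added one by one. Each added row multiplies the
  sum over `K ⊆ D` of the squares of the permanents with columns `J ∪ K` by a factor `γ` with
  probability bounded below, by a Paley-Zygmund argument, where `2 * γ` is the number of columns of
  `D` left over at the end. As `γ` is a constant proportion of `n`, this gives, for any `ε`, a
  submatrix with permanent at least `n ^ (n / 2 - ε * n)` that misses at most `ε * n` rows.
* Few missing indices. Second differences in the entries of a new row show that a suitable choice of
  two of its entries preserves the size of the permanent. They are used to make the row and column
  sets equal, and then to absorb missing indices, up to a bounded number `2 * r` of missing indices
  in a prescribed bounded set.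
* All indices. As the prescribed set can be chosen at random, a positive proportion of the principal
  submatrices that miss `2 * r` indices of a large set have a large permanent. When a new index `w`
  is added, the permanent is a quadratic form in the entries of row `w`, whose coefficients are
  permanents that miss one row and another column. Those in turn are linear forms with coefficients
  that are minors with one more row and column deleted. By the Littlewood-Offord inequality and its
  decoupled version for quadratic forms, a positive density of large principal minors with `m + 3`
  missing indices becomes, with the new index, a positive density of those with `m` missing indices.
  After boundedly many steps no index is missing, and the size has changed only by a constant
  factor.
-/

open Finset

/-- The real number (`1` or `-1`) associated to a Boolean: a Rademacher value. -/
noncomputable def rad (b : Bool) : ℝ := if b then 1 else -1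

/-- The permanent of a square real matrix. -/
noncomputable def perm {n : ℕ} (M : Matrix (Fin n) (Fin n) ℝ) : ℝ :=
  ∑ σ : Equiv.Perm (Fin n), ∏ i, M i (σ i)

/-- The symmetric `n × n` sign matrix determined by Boolean data `ω` (the entries on and
above the diagonal are `rad (ω i j)` for `i ≤ j`; below-diagonal entries are given by
symmetry). As `ω` ranges uniformly over all Boolean data, this is exactly the random
symmetric matrix `M_n` with i.i.d. Rademacher entries on and above the diagonal. -/
noncomputable def symMat (n : ℕ) (ω : Fin n → Fin n → Bool) : Matrix (Fin n) (Fin n) ℝ :=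
  fun i j => if i ≤ j then rad (ω i j) else rad (ω j i)

open Classical in
/-- The probability of the event `P` for the random symmetric Rademacher matrix `M_n`. -/
noncomputable def prob (n : ℕ) (P : Matrix (Fin n) (Fin n) ℝ → Prop) : ℝ :=
  ((univ.filter fun ω : Fin n → Fin n → Bool => P (symMat n ω)).card : ℝ) / 2 ^ (n * n)

open scoped BigOperators

/-! ### Uniform probabilities -/

section UniformProb

open Classical in
/-- The indicator of a proposition, as a real number. -/
noncomputable def ind (p : Prop) : ℝ := if p then 1 else 0

lemma ind_nonneg (p : Prop) : 0 ≤ ind p := by unfold ind; split_ifs <;> norm_num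

lemma ind_le_one (p : Prop) : ind p ≤ 1 := by unfold ind; split_ifs <;> norm_num

lemma ind_of_true {p : Prop} (h : p) : ind p = 1 := by simp [ind, h]

lemma ind_of_false {p : Prop} (h : ¬p) : ind p = 0 := by simp [ind, h]

lemma ind_mono {p q : Prop} (h : p → q) : ind p ≤ ind q := by
  by_cases hp : p
  · rw [ind_of_true hp, ind_of_true (h hp)]
  · rw [ind_of_false hp]; exact ind_nonneg q

lemma ind_not (p : Prop) : ind (¬p) = 1 - ind p := by
  by_cases hp : p <;> simp [ind, hp]

lemma ind_and (p q : Prop) : ind (p ∧ q) = ind p * ind q := by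
  by_cases hp : p <;> by_cases hq : q <;> simp [ind, hp, hq]

lemma ind_or_le (p q : Prop) : ind (p ∨ q) ≤ ind p + ind q := by
  by_cases hp : p <;> by_cases hq : q <;> simp [ind, hp, hq]

variable {Ω : Type*} [Fintype Ω]

/-- The probability of the event `p` for the uniform distribution on a finite type. -/
noncomputable def uniformProb (p : Ω → Prop) : ℝ := 𝔼 a, ind (p a)

lemma uniformProb_eq_card_div (p : Ω → Prop) [DecidablePred p] :
    uniformProb p = #{a | p a} / Fintype.card Ω := by
  rw [natCast_card_filter, uniformProb, Fintype.expect_eq_sum_div_card]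
  refine congrArg (· / _) (sum_congr rfl fun a _ => ?_)
  unfold ind
  congr

lemma uniformProb_nonneg (p : Ω → Prop) : 0 ≤ uniformProb p :=
  expect_nonneg fun _ _ => ind_nonneg _

lemma uniformProb_le_one (p : Ω → Prop) : uniformProb p ≤ 1 := by
  cases isEmpty_or_nonempty Ω
  · simp [uniformProb]
  · exact expect_le univ_nonempty fun _ _ => ind_le_one _

lemma uniformProb_mono {p q : Ω → Prop} (h : ∀ a, p a → q a) : uniformProb p ≤ uniformProb q :=
  expect_le_expect fun a _ => ind_mono (h a)

lemma uniformProb_eq_one [Nonempty Ω] {p : Ω → Prop} (h : ∀ a, p a) : uniformProb p = 1 := by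
  simp [uniformProb, ind, h]

lemma uniformProb_eq_zero {p : Ω → Prop} (h : ∀ a, ¬p a) : uniformProb p = 0 := by
  simp [uniformProb, ind, h]

lemma uniformProb_not [Nonempty Ω] (p : Ω → Prop) :
    uniformProb (fun a => ¬p a) = 1 - uniformProb p := by
  simp_rw [uniformProb, ind_not]
  rw [expect_sub_distrib, Fintype.expect_const]

lemma uniformProb_or_le (p q : Ω → Prop) :
    uniformProb (fun a => p a ∨ q a) ≤ uniformProb p + uniformProb q := by
  unfold uniformProb
  rw [← expect_add_distrib]
  exact expect_le_expect fun a _ => ind_or_le _ _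

lemma uniformProb_comp_equiv {Ω' : Type*} [Fintype Ω'] (e : Ω ≃ Ω') (p : Ω' → Prop) :
    uniformProb (fun a => p (e a)) = uniformProb p :=
  Fintype.expect_equiv e _ _ fun _ => rfl

lemma uniformProb_markov {f : Ω → ℝ} (hf : ∀ a, 0 ≤ f a) {c : ℝ} (hc : 0 < c) :
    uniformProb (fun a => c ≤ f a) ≤ (𝔼 a, f a) / c := by
  rw [le_div_iff₀ hc, uniformProb, expect_mul]
  refine expect_le_expect fun a _ => ?_
  by_cases h : c ≤ f a
  · rwa [ind_of_true h, one_mul]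
  · rw [ind_of_false h, zero_mul]; exact hf a

lemma sq_expect_le (f : Ω → ℝ) : (𝔼 a, f a) ^ 2 ≤ 𝔼 a, f a ^ 2 := by
  cases isEmpty_or_nonempty Ω
  · simp
  · simpa using expect_mul_sq_le_sq_mul_sq univ f fun _ => 1

lemma expect_prod {Ω' : Type*} [Fintype Ω'] (f : Ω × Ω' → ℝ) : 𝔼 p, f p = 𝔼 a, 𝔼 b, f (a, b) :=
  expect_product univ univ f

end UniformProb

/-! ### Resampling some of the coordinates -/

section Resampling

variable {E β : Type*}

open Classical in
/-- Keep the coordinates of `ω` in `S` and take all the others from `ω'`. Averaging over `ω'` is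
conditioning on the coordinates in `S`. -/
noncomputable def resample (S : Set E) (ω ω' : E → β) : E → β :=
  fun e => if e ∈ S then ω e else ω' e

lemma resample_of_mem {S : Set E} {e : E} (h : e ∈ S) (ω ω' : E → β) : resample S ω ω' e = ω e :=
  if_pos h

lemma resample_of_notMem {S : Set E} {e : E} (h : e ∉ S) (ω ω' : E → β) :
    resample S ω ω' e = ω' e :=
  if_neg h

lemma resample_eqOn (S : Set E) (ω ω' : E → β) : Set.EqOn (resample S ω ω') ω S :=
  fun _ he => resample_of_mem he ω ω'

lemma resample_empty (ω ω' : E → β) : resample ∅ ω ω' = ω' :=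
  funext fun e => resample_of_notMem (Set.notMem_empty e) ω ω'

lemma resample_resample {S S' : Set E} (h : S ⊆ S') (ω ω' ω'' : E → β) :
    resample S' (resample S ω ω') ω'' = resample S ω (resample S' ω' ω'') := by
  ext e
  by_cases h1 : e ∈ S
  · rw [resample_of_mem (h h1), resample_of_mem h1, resample_of_mem h1]
  · by_cases h2 : e ∈ S' <;> simp [resample, h1, h2]

variable [Fintype E] [DecidableEq E] [Fintype β]

/-- The probability of the event `P` conditionally on the coordinates in `S` being those of `ω`,
when all coordinates are uniform and independent. -/
noncomputable def condProb (S : Set E) (ω : E → β) (P : (E → β) → Prop) : ℝ :=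
  uniformProb fun ω' => P (resample S ω ω')

lemma condProb_empty (ω : E → β) (P : (E → β) → Prop) : condProb ∅ ω P = uniformProb P := by
  simp_rw [condProb, resample_empty]

lemma condProb_nonneg (S : Set E) (ω : E → β) (P : (E → β) → Prop) : 0 ≤ condProb S ω P :=
  uniformProb_nonneg _

lemma condProb_le_one (S : Set E) (ω : E → β) (P : (E → β) → Prop) : condProb S ω P ≤ 1 :=
  uniformProb_le_one _

lemma condProb_mono {S : Set E} {ω : E → β} {P Q : (E → β) → Prop}
    (h : ∀ η, Set.EqOn η ω S → P η → Q η) : condProb S ω P ≤ condProb S ω Q :=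
  uniformProb_mono fun ω' => h _ (resample_eqOn S ω ω')

lemma condProb_eq_zero {S : Set E} {ω : E → β} {P : (E → β) → Prop}
    (h : ∀ η, Set.EqOn η ω S → ¬P η) : condProb S ω P = 0 :=
  uniformProb_eq_zero fun ω' => h _ (resample_eqOn S ω ω')

variable [Nonempty β]

lemma condProb_not (S : Set E) (ω : E → β) (P : (E → β) → Prop) :
    condProb S ω (fun η => ¬P η) = 1 - condProb S ω P :=
  uniformProb_not _

lemma expect_resample (S : Set E) (f : (E → β) → ℝ) :
    𝔼 ω, 𝔼 ω', f (resample S ω ω') = 𝔼 ω, f ω := by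
  have hswap : Function.Involutive fun p : (E → β) × (E → β) =>
      (resample S p.1 p.2, resample S p.2 p.1) := by
    rintro ⟨ω, ω'⟩
    ext e <;> by_cases he : e ∈ S <;> simp [resample, he]
  have h := Fintype.expect_equiv hswap.toPerm (fun p => f (resample S p.1 p.2)) (fun p => f p.1)
    fun _ => rfl
  rw [expect_prod, expect_prod] at h
  simpa only [Fintype.expect_const] using h

lemma expect_condProb (S : Set E) (P : (E → β) → Prop) : 𝔼 ω, condProb S ω P = uniformProb P :=
  expect_resample S fun ω => ind (P ω)

lemma condProb_tower {S S' : Set E} (h : S ⊆ S') (ω : E → β) (P : (E → β) → Prop) :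
    𝔼 ω', condProb S' (resample S ω ω') P = condProb S ω P := by
  simp_rw [condProb, resample_resample h]
  exact expect_condProb S' fun η => P (resample S ω η)

lemma le_condProb_of_forall {S S' : Set E} (h : S ⊆ S') {ω : E → β} {P : (E → β) → Prop} {c : ℝ}
    (hc : ∀ η, Set.EqOn η ω S → c ≤ condProb S' η P) : c ≤ condProb S ω P := by
  rw [← condProb_tower h]
  exact le_expect univ_nonempty fun ω' _ => hc _ (resample_eqOn S ω ω')

lemma condProb_le_of_forall {S S' : Set E} (h : S ⊆ S') {ω : E → β} {P : (E → β) → Prop} {c : ℝ}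
    (hc : ∀ η, Set.EqOn η ω S → condProb S' η P ≤ c) : condProb S ω P ≤ c := by
  rw [← condProb_tower h]
  exact expect_le univ_nonempty fun ω' _ => hc _ (resample_eqOn S ω ω')

lemma condProb_le_of_event {S S' : Set E} (h : S ⊆ S') {ω : E → β} {G H : (E → β) → Prop}
    {a b c : ℝ} (hab : a ≤ b) (hG : c ≤ condProb S ω G)
    (hH : ∀ η, Set.EqOn η ω S → G η → condProb S' η H ≤ a)
    (hH' : ∀ η, Set.EqOn η ω S → condProb S' η H ≤ b) :
    condProb S ω H ≤ c * a + (1 - c) * b := by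
  calc condProb S ω H = 𝔼 ω', condProb S' (resample S ω ω') H := (condProb_tower h _ _).symm
    _ ≤ 𝔼 ω', (b - ind (G (resample S ω ω')) * (b - a)) := by
        refine expect_le_expect fun ω' _ => ?_
        have hη := resample_eqOn S ω ω'
        by_cases hg : G (resample S ω ω')
        · rw [ind_of_true hg]; linarith [hH _ hη hg]
        · rw [ind_of_false hg]; linarith [hH' _ hη]
    _ = b - condProb S ω G * (b - a) := by
        rw [expect_sub_distrib, Fintype.expect_const, ← expect_mul]; rfl
    _ ≤ c * a + (1 - c) * b := by nlinarith

lemma condProb_not_chain {S S' : Set E} (h : S ⊆ S') {ω : E → β} {G H : (E → β) → Prop}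
    {p q : ℝ} (hq : 0 ≤ q) (hG : condProb S ω (fun η => ¬G η) ≤ p)
    (hH : ∀ η, Set.EqOn η ω S → G η → condProb S' η (fun ζ => ¬H ζ) ≤ q) :
    condProb S ω (fun η => ¬H η) ≤ p + q := by
  have hp : 0 ≤ p := (condProb_nonneg _ _ _).trans hG
  rw [condProb_not] at hG
  rcases le_total q 1 with hq1 | hq1
  · have := condProb_le_of_event h hq1 (sub_le_comm.1 hG) hH fun _ _ => condProb_le_one _ _ _
    nlinarith
  · linarith [condProb_le_one S ω fun η => ¬H η]

/-- `P T R` stands for `R` tasks remaining after the exposure of the coordinates in `F T`. The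
expectation of `2` to the number of remaining tasks decays by a factor `1 - c / 2` per trial. -/
lemma condProb_trials {ι : Type*} [DecidableEq ι] {F : Finset ι → Set E} (hF : Monotone F)
    {P : Finset ι → ℕ → (E → β) → Prop} {U : Finset ι} {s : ℕ} {c : ℝ} (hc : c ≤ 1)
    (advance : ∀ T D R η, D ⊆ U → Disjoint T D → #D = s → P T (R + 1) η →
      c ≤ condProb (F T) η (P (T ∪ D) R))
    (stay : ∀ T D R η η', D ⊆ U → Disjoint T D → P T R η → Set.EqOn η' η (F T) →
      P (T ∪ D) R η')
    {n R : ℕ} {T Q : Finset ι} (hQU : Q ⊆ U) (hTQ : Disjoint T Q) (hQ : #Q = s * n) {ω : E → β}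
    (hP : P T R ω) :
    condProb (F T) ω (fun η => ¬P (T ∪ Q) 0 η) ≤ 2 ^ R * (1 - c / 2) ^ n := by
  induction n generalizing T Q R ω with
  | zero =>
    rw [pow_zero, mul_one]
    exact (condProb_le_one _ _ _).trans (one_le_pow₀ one_le_two)
  | succ n ih =>
    obtain _ | R := R
    · rw [condProb_eq_zero fun η hη hn => hn (stay T Q 0 ω η hQU hTQ hP hη)]
      have : 0 ≤ 1 - c / 2 := by linarith
      positivity
    obtain ⟨D, hDQ, hD⟩ := exists_subset_card_eq (by rw [hQ, mul_add]; omega : s ≤ #Q)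
    have hTD : Disjoint T D := hTQ.mono_right hDQ
    have hrest : Disjoint (T ∪ D) (Q \ D) :=
      disjoint_union_left.2 ⟨hTQ.mono_right sdiff_subset, disjoint_sdiff⟩
    have hcard : #(Q \ D) = s * n := by rw [card_sdiff_of_subset hDQ, hQ, hD, mul_add]; omega
    have hQ' : T ∪ D ∪ Q \ D = T ∪ Q := by rw [union_assoc, union_sdiff_of_subset hDQ]
    have ih' := fun {R η} => ih (R := R) (ω := η) (sdiff_subset.trans hQU) hrest hcard
    simp only [hQ'] at ih'
    have hpos : 0 ≤ (1 - c / 2) ^ n := pow_nonneg (by linarith) n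
    refine (condProb_le_of_event (hF subset_union_left)
      (mul_le_mul_of_nonneg_right (pow_le_pow_right₀ one_le_two R.le_succ) hpos)
      (advance T D R ω (hDQ.trans hQU) hTD hD hP) (fun η _ => ih')
      (fun η hη => ih' (stay T D _ ω η (hDQ.trans hQU) hTD hP hη))).trans_eq ?_
    rw [Nat.succ_eq_add_one]
    ring

lemma expect_comp_injective {κ : Type*} [Fintype κ] [DecidableEq κ] {e : κ → E}
    (he : Function.Injective e) (f : (κ → β) → ℝ) : 𝔼 φ : E → β, f (φ ∘ e) = 𝔼 x, f x := by
  classical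
  let F : (E → β) ≃ (κ → β) × ({x // x ∉ Set.range e} → β) :=
    (Equiv.piEquivPiSubtypeProd (fun x => x ∈ Set.range e) (fun _ => β)).trans
      (Equiv.prodCongr (Equiv.arrowCongr (Equiv.ofInjective e he).symm (Equiv.refl β))
        (Equiv.refl _))
  rw [Fintype.expect_equiv F (fun φ => f (φ ∘ e)) (fun p => f p.1) fun _ => rfl, expect_prod]
  simp only [Fintype.expect_const]

lemma uniformProb_comp_injective {κ : Type*} [Fintype κ] [DecidableEq κ] {e : κ → E}
    (he : Function.Injective e) (p : (κ → β) → Prop) :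
    uniformProb (fun φ : E → β => p (φ ∘ e)) = uniformProb p :=
  expect_comp_injective he fun x => ind (p x)

section Bool

variable {S : Set E} {ω : E → Bool}

lemma uniformProb_eqOn (B : Finset E) (η : E → Bool) :
    uniformProb (fun ω => Set.EqOn ω η B) = (1 / 2) ^ #B := by
  classical
  have hfilter : ({ω | Set.EqOn ω η B} : Finset (E → Bool)) =
      Fintype.piFinset fun e => if e ∈ B then {η e} else univ := by
    ext ω
    simp only [mem_filter_univ, Fintype.mem_piFinset, Set.EqOn, mem_coe]
    refine forall_congr' fun e => ?_
    by_cases he : e ∈ B <;> simp [he]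
  have hcard : #({ω | Set.EqOn ω η B} : Finset (E → Bool)) = 2 ^ #Bᶜ := by
    rw [hfilter, Fintype.card_piFinset, prod_congr rfl fun e _ => apply_ite card _ _ _]
    simp [prod_ite, filter_not, compl_eq_univ_sdiff]
  rw [uniformProb_eq_card_div, hcard, Fintype.card_fun, Fintype.card_bool,
    ← card_add_card_compl B]
  push_cast
  rw [pow_add, div_mul_cancel_right₀ (by positivity), one_div, inv_pow]

lemma half_pow_le_condProb {B : Finset E} (hSB : Disjoint S B) {G : (E → Bool) → Prop}
    (h : ∀ η, Set.EqOn η ω S → ∃ η', Set.EqOn η' η (B : Set E)ᶜ ∧ G η') :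
    (1 / 2) ^ #B ≤ condProb S ω G := by
  refine le_condProb_of_forall (Set.subset_compl_iff_disjoint_right.2 hSB) fun η hη => ?_
  obtain ⟨η', hη', hG⟩ := h η hη
  rw [← uniformProb_eqOn B η']
  refine uniformProb_mono fun ζ hζ => ?_
  have : resample (B : Set E)ᶜ η ζ = η' := by
    ext e
    by_cases he : e ∈ B
    · rw [resample_of_notMem (by simpa using he)]; exact hζ he
    · rw [resample_of_mem (by simpa using he)]; exact (hη' (by simpa using he)).symm
  rwa [this]

lemma condProb_forall_not_le {κ : Type*} {B : κ → Finset E} (hSB : ∀ l, Disjoint S (B l)) {k : ℕ}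
    (hB : ∀ l, #(B l) ≤ k) {G : κ → (E → Bool) → Prop}
    (hG : ∀ l l', l ≠ l' → ∀ η η', Set.EqOn η η' (B l' : Set E)ᶜ → G l η → G l η')
    (h : ∀ l η, Set.EqOn η ω S → ∃ η', Set.EqOn η' η (B l : Set E)ᶜ ∧ G l η') (L : Finset κ) :
    condProb S ω (fun η => ∀ l ∈ L, ¬G l η) ≤ (1 - (1 / 2) ^ k) ^ #L := by
  classical
  induction L using Finset.induction_on with
  | empty => simpa using condProb_le_one S ω _
  | insert b L hb ih =>
    have hk : (1 / 2 : ℝ) ^ k ≤ 1 := pow_le_one₀ (by norm_num) (by norm_num)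
    have hdet : ∀ η, Set.EqOn η ω S →
        condProb (B b : Set E)ᶜ η (fun ζ => ∀ l ∈ insert b L, ¬G l ζ) ≤
          ind (∀ l ∈ L, ¬G l η) * (1 - (1 / 2) ^ k) := by
      intro η hη
      have hζ (ζ : E → Bool) (h : Set.EqOn ζ η (B b : Set E)ᶜ) : Set.EqOn ζ ω S :=
        (h.mono (Set.subset_compl_iff_disjoint_right.2 (hSB b))).trans hη
      by_cases hold : ∀ l ∈ L, ¬G l η
      · rw [ind_of_true hold, one_mul]
        have hlast := half_pow_le_condProb (S := (B b : Set E)ᶜ) (B := B b) (ω := η)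
          disjoint_compl_left (G := G b) fun ζ h' => h b ζ (hζ ζ h')
        have hpow : (1 / 2 : ℝ) ^ k ≤ (1 / 2) ^ #(B b) :=
          pow_le_pow_of_le_one (by norm_num) (by norm_num) (hB b)
        calc _ ≤ condProb (B b : Set E)ᶜ η fun ζ => ¬G b ζ :=
              condProb_mono fun ζ _ h' => h' b (mem_insert_self b L)
          _ ≤ 1 - (1 / 2) ^ k := by rw [condProb_not]; linarith
      · rw [ind_of_false hold, zero_mul]
        push Not at hold
        obtain ⟨l, hl, hGl⟩ := hold
        exact (condProb_eq_zero fun ζ h' hall => hall l (mem_insert_of_mem hl)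
          (hG l b (ne_of_mem_of_not_mem hl hb) η ζ h'.symm hGl)).le
    rw [← condProb_tower (Set.subset_compl_iff_disjoint_right.2 (hSB b)), card_insert_of_notMem hb,
      pow_succ]
    refine (expect_le_expect fun ω' _ => hdet _ (resample_eqOn S ω ω')).trans ?_
    rw [← expect_mul]
    exact mul_le_mul_of_nonneg_right ih (sub_nonneg.2 hk)

end Bool

end Resampling

/-! ### Permanents of submatrices -/

section Subperm

variable {ι κ R : Type*} [DecidableEq ι] [DecidableEq κ] [CommSemiring R]

/-- The permanent of the submatrix of `M` with rows `I` and columns `J`. It is zero unless `I` and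
`J` have the same size. -/
def subperm (M : Matrix ι κ R) (I : Finset ι) (J : Finset κ) : R :=
  ∑ σ : I ≃ J, ∏ i : I, M i (σ i)

lemma subperm_empty (M : Matrix ι κ R) : subperm M ∅ ∅ = 1 := by
  simp [subperm, Fintype.card_equiv (Equiv.equivOfIsEmpty (∅ : Finset ι) (∅ : Finset κ))]

lemma subperm_of_card_ne (M : Matrix ι κ R) {I : Finset ι} {J : Finset κ} (h : #I ≠ #J) :
    subperm M I J = 0 := by
  have : IsEmpty (I ≃ J) := ⟨fun σ => h (by simpa using Fintype.card_congr σ)⟩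
  simp [subperm]

lemma subperm_congr {M N : Matrix ι κ R} {I : Finset ι} {J : Finset κ}
    (h : ∀ i ∈ I, ∀ j ∈ J, M i j = N i j) : subperm M I J = subperm N I J :=
  sum_congr rfl fun σ _ => prod_congr rfl fun i _ => h i i.2 _ (σ i).2

lemma subperm_transpose (M : Matrix ι κ R) (I : Finset ι) (J : Finset κ) :
    subperm M.transpose J I = subperm M I J :=
  Fintype.sum_equiv ⟨Equiv.symm, Equiv.symm, fun _ => rfl, fun _ => rfl⟩ _ _ fun σ =>
    Fintype.prod_equiv σ _ _ fun j => by simp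

lemma subperm_insert_row (M : Matrix ι κ R) {w : ι} {I : Finset ι} (hw : w ∉ I) (J : Finset κ) :
    subperm M (insert w I) J = ∑ j ∈ J, M w j * subperm M I (J.erase j) := by
  let restrict : (insert w I : Finset ι) ≃ Option I := subtypeInsertEquivOption hw
  let eraseEquiv (j : J) : (J.erase j : Finset κ) ≃ {y : J // y ≠ j} :=
    { toFun := fun y =>
        ⟨⟨y, mem_of_mem_erase y.2⟩, fun h => ne_of_mem_erase y.2 (congrArg Subtype.val h)⟩
      invFun := fun y => ⟨y, mem_erase.2 ⟨fun h => y.2 (Subtype.ext h), y.1.2⟩⟩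
      left_inv := fun _ => rfl
      right_inv := fun _ => rfl }
  let split (j : J) : (I ≃ (J.erase j : Finset κ)) ≃ {e : Option I ≃ J // e none = j} :=
    (Equiv.equivCongr (Equiv.refl _) (eraseEquiv j)).trans (Equiv.optionSubtype j).symm
  calc subperm M (insert w I) J
      = ∑ e : Option I ≃ J, M w (e none) * ∏ i : I, M i (e (some i)) := by
        refine Fintype.sum_equiv (Equiv.equivCongr restrict (Equiv.refl _)) _ _ fun σ => ?_
        exact (Equiv.prod_comp restrict.symm fun i => M i (σ i)).symm.trans (Fintype.prod_option _)
    _ = ∑ j : J, ∑ e : {e : Option I ≃ J // e none = j}, M w j * ∏ i : I, M i (e.1 (some i)) := by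
        rw [← (Equiv.sigmaFiberEquiv fun e : Option I ≃ J => e none).sum_comp, Fintype.sum_sigma]
        refine sum_congr rfl fun j _ => sum_congr rfl fun e _ => ?_
        exact congrArg (fun k : J => M w k * ∏ i : I, M i (e.1 (some i))) e.2
    _ = ∑ j ∈ J, M w j * subperm M I (J.erase j) := by
        rw [← sum_coe_sort J]
        refine sum_congr rfl fun j _ => ?_
        rw [← mul_sum, subperm, ← (split j).sum_comp]
        exact congrArg _ (sum_congr rfl fun σ _ => prod_congr rfl fun i _ => rfl)

lemma subperm_insert_col (M : Matrix ι κ R) {c : κ} (I : Finset ι) {J : Finset κ} (hc : c ∉ J) :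
    subperm M I (insert c J) = ∑ i ∈ I, M i c * subperm M (I.erase i) J := by
  simp_rw [← subperm_transpose M, subperm_insert_row _ hc, Matrix.transpose_apply]

lemma subperm_insert_insert (M : Matrix ι ι R) {w : ι} {I J : Finset ι} (hI : w ∉ I) (hJ : w ∉ J) :
    subperm M (insert w I) (insert w J) = M w w * subperm M I J +
      ∑ q ∈ J, ∑ p ∈ I, M w q * M p w * subperm M (I.erase p) (J.erase q) := by
  rw [subperm_insert_row M hI, sum_insert hJ, erase_insert hJ]
  refine congrArg _ (sum_congr rfl fun q hq => ?_)
  rw [erase_insert_of_ne (ne_of_mem_of_not_mem hq hJ).symm,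
    subperm_insert_col M I (fun h => hJ (mem_of_mem_erase h)), mul_sum]
  simp_rw [mul_assoc]

end Subperm

lemma perm_eq_subperm {n : ℕ} (M : Matrix (Fin n) (Fin n) ℝ) : perm M = subperm M univ univ := by
  refine Fintype.sum_equiv (Equiv.equivCongr (Equiv.subtypeUnivEquiv mem_univ).symm
    (Equiv.subtypeUnivEquiv mem_univ).symm) _ _ fun σ => ?_
  exact Fintype.prod_equiv (Equiv.subtypeUnivEquiv mem_univ).symm _ _ fun i => rfl

/-! ### The random symmetric sign matrix -/

lemma rad_true : rad true = 1 := rfl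

lemma rad_false : rad false = -1 := rfl

lemma rad_mul_self (b : Bool) : rad b * rad b = 1 := by cases b <;> simp [rad]

lemma abs_rad (b : Bool) : |rad b| = 1 := by cases b <;> simp [rad]

lemma rad_not (b : Bool) : rad (!b) = -rad b := by cases b <;> simp [rad]

section SignMatrix

variable {ι : Type*}

/-- The symmetric sign matrix with one independent sign for each unordered pair of indices. -/
noncomputable def signMatrix (ω : Sym2 ι → Bool) : Matrix ι ι ℝ := fun i j => rad (ω s(i, j))

lemma signMatrix_transpose (ω : Sym2 ι → Bool) : (signMatrix ω).transpose = signMatrix ω := by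
  ext i j
  rw [Matrix.transpose_apply, signMatrix, signMatrix, Sym2.eq_swap]

variable [DecidableEq ι]

/-- The permanent of the submatrix with rows `I` and columns `J` of the sign matrix of `ω`. -/
noncomputable def per (ω : Sym2 ι → Bool) (I J : Finset ι) : ℝ := subperm (signMatrix ω) I J

lemma per_comm (ω : Sym2 ι → Bool) (I J : Finset ι) : per ω I J = per ω J I := by
  rw [per, ← subperm_transpose, signMatrix_transpose, per]

lemma per_of_card_ne (ω : Sym2 ι → Bool) {I J : Finset ι} (h : #I ≠ #J) : per ω I J = 0 :=
  subperm_of_card_ne _ h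

lemma per_congr {ω ω' : Sym2 ι → Bool} {I J : Finset ι}
    (h : ∀ i ∈ I, ∀ j ∈ J, ω s(i, j) = ω' s(i, j)) : per ω I J = per ω' I J :=
  subperm_congr fun i hi j hj => by rw [signMatrix, h i hi j hj, signMatrix]

lemma per_congr_sym2 {ω ω' : Sym2 ι → Bool} {T I J : Finset ι} (h : Set.EqOn ω ω' T.sym2)
    (hI : I ⊆ T) (hJ : J ⊆ T) : per ω I J = per ω' I J :=
  per_congr fun _ hi _ hj => h (mem_coe.2 (mk_mem_sym2_iff.2 ⟨hI hi, hJ hj⟩))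

lemma per_insert (ω : Sym2 ι → Bool) {w : ι} {I : Finset ι} (hw : w ∉ I) (J : Finset ι) :
    per ω (insert w I) J = ∑ j ∈ J, rad (ω s(w, j)) * per ω I (J.erase j) :=
  subperm_insert_row _ hw J

lemma per_insert_insert (ω : Sym2 ι → Bool) {w : ι} {I J : Finset ι} (hI : w ∉ I) (hJ : w ∉ J) :
    per ω (insert w I) (insert w J) = rad (ω s(w, w)) * per ω I J +
      ∑ q ∈ J, ∑ p ∈ I, rad (ω s(w, q)) * rad (ω s(w, p)) * per ω (I.erase p) (J.erase q) := by
  rw [per, subperm_insert_insert _ hI hJ]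
  simp only [signMatrix, per, Sym2.eq_swap (a := w)]

/-! ### Second differences -/

lemma expect_rad_mul_quadratic_form {i j : ι} (hij : i ≠ j) (y : ι → Bool) (I J : Finset ι)
    (f : ι → ι → ℝ) (c : ℝ) :
    𝔼 b : Bool × Bool, rad b.1 * rad b.2 * (c + ∑ q ∈ J, ∑ p ∈ I,
        rad (Function.update (Function.update y i b.1) j b.2 q) *
          rad (Function.update (Function.update y i b.1) j b.2 p) * f p q) =
      (if i ∈ I ∧ j ∈ J then f i j else 0) + (if j ∈ I ∧ i ∈ J then f j i else 0) := by
  have hterm (p q : ι) : 𝔼 b : Bool × Bool, rad b.1 * rad b.2 *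
      (rad (Function.update (Function.update y i b.1) j b.2 q) *
        rad (Function.update (Function.update y i b.1) j b.2 p) * f p q) =
      (if p = i ∧ q = j then f i j else 0) + (if p = j ∧ q = i then f j i else 0) := by
    rw [Fintype.expect_eq_sum_div_card, Fintype.sum_prod_type]
    simp only [Fintype.sum_bool]
    by_cases hqj : q = j <;> by_cases hpj : p = j <;> by_cases hqi : q = i <;>
      by_cases hpi : p = i <;> first
      | exact absurd (hqi.symm.trans hqj) hij
      | exact absurd (hpi.symm.trans hpj) hij
      | simp [hqj, hpj, hqi, hpi, rad_true, rad_false, hij, hij.symm]; try ring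
  have hconst : 𝔼 b : Bool × Bool, rad b.1 * rad b.2 * c = 0 := by
    rw [Fintype.expect_eq_sum_div_card, Fintype.sum_prod_type]
    simp [rad_true, rad_false]
  simp_rw [mul_add, mul_sum]
  rw [expect_add_distrib, hconst, expect_sum_comm, zero_add]
  simp_rw [expect_sum_comm, hterm, sum_add_distrib, ite_and]
  simp

/-- The left-hand side is a quarter of the second difference of the permanent on the right in the
entries `(w, i)` and `(w, j)`. -/
lemma exists_second_diff_le (ω : Sym2 ι → Bool) {w i j : ι} {I J : Finset ι} (hI : w ∉ I)
    (hJ : w ∉ J) (hij : i ≠ j) (hi : i ≠ w) (hj : j ≠ w) :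
    ∃ η, Set.EqOn η ω {s(w, i), s(w, j)}ᶜ ∧
      |(if i ∈ I ∧ j ∈ J then per ω (I.erase i) (J.erase j) else 0) +
        (if j ∈ I ∧ i ∈ J then per ω (I.erase j) (J.erase i) else 0)| ≤
      |per η (insert w I) (insert w J)| := by
  let η (b : Bool × Bool) := Function.update (Function.update ω s(w, i) b.1) s(w, j) b.2
  have hη (b) : Set.EqOn (η b) ω {s(w, i), s(w, j)}ᶜ := by
    intro e he
    simp only [Set.mem_compl_iff, Set.mem_insert_iff, Set.mem_singleton_iff, not_or] at he
    simp [η, he]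
  have hrow (b) (k : ι) : η b s(w, k) =
      Function.update (Function.update (fun k => ω s(w, k)) i b.1) j b.2 k := by
    simp only [η, Function.update_apply]
    grind
  have hper (b) {I' J' : Finset ι} (hI' : I' ⊆ I) (hJ' : J' ⊆ J) : per (η b) I' J' = per ω I' J' :=
    per_congr fun p hp q hq => hη b (by grind)
  have hexpand (b) : per (η b) (insert w I) (insert w J) = rad (ω s(w, w)) * per ω I J +
      ∑ q ∈ J, ∑ p ∈ I, rad (Function.update (Function.update (fun k => ω s(w, k)) i b.1) j b.2 q) *
        rad (Function.update (Function.update (fun k => ω s(w, k)) i b.1) j b.2 p) *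
          per ω (I.erase p) (J.erase q) := by
    rw [per_insert_insert _ hI hJ, hper b subset_rfl subset_rfl, hη b (by grind)]
    simp_rw [hper b (erase_subset _ _) (erase_subset _ _), hrow]
  rw [← expect_rad_mul_quadratic_form hij (fun k => ω s(w, k)) I J
    (fun p q => per ω (I.erase p) (J.erase q)) (rad (ω s(w, w)) * per ω I J)]
  simp_rw [← hexpand]
  obtain ⟨b, -, hb⟩ := exists_le_of_le_expect univ_nonempty (abs_expect_le univ
    fun b : Bool × Bool => rad b.1 * rad b.2 * per (η b) (insert w I) (insert w J))
  exact ⟨η b, hη b, hb.trans_eq (by simp [abs_mul, abs_rad])⟩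

end SignMatrix

/-! ### Making the two index sets equal -/

section Cancellation

variable {ι : Type*} [DecidableEq ι]

lemma exists_two_thirds_abs_le (x y z : ℝ) :
    2 / 3 * |x| ≤ |x + y| ∨ 2 / 3 * |x| ≤ |x + z| ∨ 2 / 3 * |x| ≤ |y + z| := by
  by_contra! h
  have := abs_lt.1 h.1
  have := abs_lt.1 h.2.1
  have := abs_lt.1 h.2.2
  rcases abs_cases x with hx | hx <;> linarith

/-- The permanents of `(I, J)` and of two pairs obtained from it by exchanging elements of the
symmetric difference are neighbours of each other, so that not all three sums of two of them can be
small. -/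
lemma exists_swap_abs_add_ge (ω : Sym2 ι → Bool) {I J : Finset ι} (hc : #I = #J)
    (hR : 0 < #(I \ J)) :
    ∃ I₁ J₁ : Finset ι, ∃ a b : ι, I₁ ∪ J₁ = I ∪ J ∧ #I₁ = #I ∧ #J₁ = #I ∧ #(I₁ \ J₁) = #(I \ J) ∧
      a ∈ J₁ ∧ a ∉ I₁ ∧ b ∈ I₁ ∧ b ∉ J₁ ∧ 2 / 3 * |per ω I J| ≤
        |per ω I₁ J₁ + per ω ((insert a I₁).erase b) ((insert b J₁).erase a)| := by
  have hR' : #(J \ I) = #(I \ J) := card_sdiff_comm hc.symm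
  obtain ⟨a, ha⟩ := card_pos.1 (hR'.symm ▸ hR)
  obtain ⟨b, hb⟩ := card_pos.1 hR
  have ⟨haJ, haI⟩ := mem_sdiff.1 ha
  have ⟨hbI, hbJ⟩ := mem_sdiff.1 hb
  have hab : a ≠ b := fun h => haI (h ▸ hbI)
  by_cases h1 : #(I \ J) = 1
  · have honly : ∀ x ∈ I, x ∉ J → x = b := fun x hxI hxJ =>
      card_le_one.1 h1.le x (mem_sdiff.2 ⟨hxI, hxJ⟩) b hb
    have honly' : ∀ x ∈ J, x ∉ I → x = a := fun x hxJ hxI =>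
      card_le_one.1 (hR'.trans h1).le x (mem_sdiff.2 ⟨hxJ, hxI⟩) a ha
    have hIJ : (insert a I).erase b = J := by grind
    have hJI : (insert b J).erase a = I := by grind
    refine ⟨I, J, a, b, rfl, rfl, hc.symm, rfl, haJ, haI, hbI, hbJ, ?_⟩
    rw [hIJ, hJI, per_comm ω J I, ← two_mul, abs_mul, abs_two]
    linarith [abs_nonneg (per ω I J)]
  · obtain ⟨b', hb', hbb⟩ := exists_mem_ne (by omega : 1 < #(I \ J)) b
    have ⟨hbI', hbJ'⟩ := mem_sdiff.1 hb'
    rcases exists_two_thirds_abs_le (per ω I J)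
      (per ω ((insert a I).erase b) ((insert b J).erase a))
      (per ω ((insert a I).erase b') ((insert b' J).erase a)) with h | h | h
    · exact ⟨I, J, a, b, rfl, rfl, hc.symm, rfl, haJ, haI, hbI, hbJ, h⟩
    · exact ⟨I, J, a, b', rfl, rfl, hc.symm, rfl, haJ, haI, hbI', hbJ', h⟩
    · have hswap : (insert a I).erase b \ (insert b J).erase a = insert a ((I \ J).erase b) := by
        grind
      have hIJ : (insert b ((insert a I).erase b)).erase b' = (insert a I).erase b' := by grind
      have hJI : (insert b' ((insert b J).erase a)).erase b = (insert b' J).erase a := by grind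
      refine ⟨(insert a I).erase b, (insert b J).erase a, b, b', by grind, by grind, by grind, ?_,
        by grind, by grind, by grind, by grind, ?_⟩
      · rw [hswap]; grind
      · rwa [hIJ, hJI]

variable [Fintype ι]

lemma one_fourth_le_condProb_cancel {T I J : Finset ι} {w : ι} {ω : Sym2 ι → Bool} {lam : ℝ} {R : ℕ}
    (hw : w ∉ T) (hI : I ⊆ T) (hJ : J ⊆ T) (hc : #I = #J) (hR : #(I \ J) = R + 1)
    (hlam : lam * (3 / 2) ≤ |per ω I J|) :
    1 / 4 ≤ condProb (T.sym2 : Set (Sym2 ι)) ω fun η => ∃ I' ⊆ insert w T, ∃ J' ⊆ insert w T,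
      #I' = #I + 2 ∧ #J' = #I + 2 ∧ #(I' \ J') = R ∧ lam ≤ |per η I' J'| := by
  obtain ⟨I₁, J₁, a, b, hun, hI₁, hJ₁, hR₁, ha, ha', hb, hb', hval⟩ :=
    exists_swap_abs_add_ge ω hc (by omega)
  have hIT : I₁ ∪ J₁ ⊆ T := hun ▸ union_subset hI hJ
  have hI' : insert a I₁ ⊆ T := by grind
  have hJ' : insert b J₁ ⊆ T := by grind
  have hRR : insert w (insert a I₁) \ insert w (insert b J₁) = (I₁ \ J₁).erase b := by grind
  have hdisj : Disjoint (T.sym2 : Set (Sym2 ι)) ({s(w, a), s(w, b)} : Finset (Sym2 ι)) := by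
    simp [hw]
  have key := half_pow_le_condProb (ω := ω) hdisj
    (G := fun η => ∃ I' ⊆ insert w T, ∃ J' ⊆ insert w T,
      #I' = #I + 2 ∧ #J' = #I + 2 ∧ #(I' \ J') = R ∧ lam ≤ |per η I' J'|) fun η hη => ?_
  · refine le_trans ?_ key
    have : #({s(w, a), s(w, b)} : Finset (Sym2 ι)) ≤ 2 := card_le_two
    exact le_trans (by norm_num) (pow_le_pow_of_le_one (by norm_num) (by norm_num) this)
  · obtain ⟨η', hη', hle⟩ := exists_second_diff_le η (w := w) (i := a) (j := b)
      (I := insert a I₁) (J := insert b J₁) (fun h => hw (hI' h)) (fun h => hw (hJ' h))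
      (by grind) (by grind) (by grind)
    refine ⟨η', by simpa using hη', _, insert_subset_insert w hI', _, insert_subset_insert w hJ',
      by grind, by grind, by grind, ?_⟩
    rw [if_pos (by simp), if_pos (by simp [ha, hb]), erase_insert ha', erase_insert hb',
      per_congr_sym2 hη (by grind) (by grind), per_congr_sym2 hη (by grind) (by grind)] at hle
    linarith

/-- Each new index lets one element of the symmetric difference be cancelled with probability at
least `1 / 4`, and an index for which this fails is left unused. -/
lemma condProb_not_exists_principal_le {T Q I J : Finset ι} {ω : Sym2 ι → Bool} {lam : ℝ}
    (hTQ : Disjoint T Q) (hI : I ⊆ T) (hJ : J ⊆ T) (hc : #I = #J)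
    (hlam : lam * (3 / 2) ^ #(I \ J) ≤ |per ω I J|) :
    condProb (T.sym2 : Set (Sym2 ι)) ω (fun η => ¬∃ A ⊆ T ∪ Q, #A = #I + 2 * #(I \ J) ∧
      lam ≤ |per η A A|) ≤ 2 ^ #(I \ J) * (7 / 8) ^ #Q := by
  let P (T' : Finset ι) (R : ℕ) (η : Sym2 ι → Bool) : Prop := ∃ I' ⊆ T', ∃ J' ⊆ T', #I' = #J' ∧
    #I' + 2 * R = #I + 2 * #(I \ J) ∧ #(I' \ J') = R ∧ lam * (3 / 2) ^ R ≤ |per η I' J'|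
  have key := condProb_trials (F := fun T => (T.sym2 : Set (Sym2 ι))) (P := P) (s := 1) (c := 1 / 4)
    (fun T T' h => coe_subset.2 (sym2_mono h)) (by norm_num) ?_ ?_ subset_rfl hTQ (one_mul _).symm
    (ω := ω) ⟨I, hI, J, hJ, hc, rfl, rfl, hlam⟩
  · norm_num only at key
    refine (condProb_mono fun η _ hnot => ?_).trans key
    rintro ⟨A, hA, A', hA', hcard, hsize, hdiff, hper⟩
    obtain rfl : A = A' := eq_of_subset_of_card_le (by grind) hcard.ge
    exact hnot ⟨A, hA, by omega, by simpa using hper⟩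
  · rintro T' D R η - hTD hD ⟨I', hI', J', hJ', hcard, hsize, hdiff, hper⟩
    obtain ⟨w, rfl⟩ := card_eq_one.1 hD
    refine (one_fourth_le_condProb_cancel (disjoint_singleton_right.1 hTD) hI' hJ' hcard hdiff
      (lam := lam * (3 / 2) ^ R) (by rwa [mul_assoc, ← pow_succ])).trans (condProb_mono ?_)
    rintro ζ - ⟨I₂, hI₂, J₂, hJ₂, hc₁, hc₂, hd, hp⟩
    rw [← union_singleton] at hI₂ hJ₂
    exact ⟨I₂, hI₂, J₂, hJ₂, by omega, by omega, hd, hp⟩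
  · rintro T' D R η η' - - ⟨I', hI', J', hJ', hcard, hsize, hdiff, hper⟩ hη
    exact ⟨I', by grind, J', by grind, hcard, hsize, hdiff,
      by rwa [per_congr_sym2 hη hI' hJ']⟩

end Cancellation

/-! ### Enlarging a principal submatrix -/

section Principal

variable {ι : Type*} [DecidableEq ι]

/-- Two new rows suffice: expanding along `w₁` passes to the pair of index sets obtained by adding
`w₁` and one of `i`, `j` to `A`, and expanding along `w₂` makes the pair symmetric again. -/
lemma exists_abs_per_le_abs_per_insert (ω : Sym2 ι → Bool) {A : Finset ι} {i j w₁ w₂ : ι}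
    (hij : i ≠ j) (hi : i ∉ A) (hj : j ∉ A) (hw : w₁ ≠ w₂) (hw₁ : w₁ ∉ insert i (insert j A))
    (hw₂ : w₂ ∉ insert i (insert j A)) :
    ∃ η, Set.EqOn η ω {s(w₁, i), s(w₁, j), s(w₂, i), s(w₂, j)}ᶜ ∧ |per ω A A| ≤
      |per η (A ∪ {i, j, w₁, w₂}) (A ∪ {i, j, w₁, w₂})| := by
  obtain ⟨η₁, hη₁, h₁⟩ := exists_second_diff_le ω (w := w₁) (i := i) (j := j) (I := insert j A)
    (J := insert i A) (by grind) (by grind) hij (by grind) (by grind)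
  rw [if_neg (by grind), if_pos (by simp), erase_insert hj, erase_insert hi, zero_add] at h₁
  set C := insert w₁ (insert i (insert j A))
  obtain ⟨η₂, hη₂, h₂⟩ := exists_second_diff_le η₁ (w := w₂) (i := i) (j := j) (I := C) (J := C)
    (by grind) (by grind) hij (by grind) (by grind)
  have hCi : C.erase i = insert w₁ (insert j A) := by grind
  have hCj : C.erase j = insert w₁ (insert i A) := by grind
  have hCw : insert w₂ C = A ∪ {i, j, w₁, w₂} := by grind
  rw [if_pos (by grind), if_pos (by grind), hCi, hCj, per_comm η₁ (insert w₁ (insert i A)),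
    ← two_mul, abs_mul, abs_two, hCw] at h₂
  refine ⟨η₂, (hη₂.mono (by grind)).trans (hη₁.mono (by grind)), h₁.trans ?_⟩
  linarith [abs_nonneg (per η₁ (insert w₁ (insert j A)) (insert w₁ (insert i A)))]

variable [Fintype ι]

/-- Each of the `b` enlargements can be made to succeed by four entries that do not occur in the
others. -/
lemma condProb_forall_insert_pair_lt_le {κ : Type*} [Fintype κ] {T A : Finset ι}
    {ω : Sym2 ι → Bool} {w₁ w₂ : ι} {lam : ℝ} (hA : A ⊆ T) (hw : w₁ ≠ w₂) (hw₁ : w₁ ∉ T)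
    (hw₂ : w₂ ∉ T) (hlam : lam ≤ |per ω A A|) {z : κ × Bool → ι} (hz : Function.Injective z)
    (hzA : ∀ x, z x ∈ T \ A) :
    condProb (T.sym2 : Set (Sym2 ι)) ω (fun η => ∀ l,
      ¬lam ≤ |per η (A ∪ {z (l, true), z (l, false), w₁, w₂})
        (A ∪ {z (l, true), z (l, false), w₁, w₂})|) ≤ (15 / 16) ^ Fintype.card κ := by
  let B (l : κ) : Finset (Sym2 ι) :=
    {s(w₁, z (l, true)), s(w₁, z (l, false)), s(w₂, z (l, true)), s(w₂, z (l, false))}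
  have key := condProb_forall_not_le (S := (T.sym2 : Set (Sym2 ι))) (ω := ω) (B := B) (k := 4)
    (fun l => by simp [B, hw₁, hw₂]) (fun l => card_le_four)
    (G := fun l η => lam ≤ |per η (A ∪ {z (l, true), z (l, false), w₁, w₂})
        (A ∪ {z (l, true), z (l, false), w₁, w₂})|) ?_ ?_ univ
  · norm_num at key ⊢
    exact key
  · intro l l' hl η η' hη h
    have hout (y : Bool) : z (l', y) ∉ A ∪ {z (l, true), z (l, false), w₁, w₂} := by
      have hne (x) : z (l', y) ≠ z (l, x) := fun h => hl (congrArg Prod.fst (hz h)).symm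
      have hzT := mem_sdiff.1 (hzA (l', y))
      simp [hne, hzT.2, ne_of_mem_of_not_mem hzT.1 hw₁, ne_of_mem_of_not_mem hzT.1 hw₂]
    rwa [← per_congr fun p hp q hq => hη ?_]
    have hpz (y) := ne_of_mem_of_not_mem hp (hout y)
    have hqz (y) := ne_of_mem_of_not_mem hq (hout y)
    simp [B, hpz, hqz]
  · intro l η hη
    have hmem (x) := mem_sdiff.1 (hzA x)
    have hne : z (l, true) ≠ z (l, false) := fun h => by simpa using hz h
    obtain ⟨η', hη', h⟩ := exists_abs_per_le_abs_per_insert η hne (hmem _).2 (hmem _).2 hw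
      (by grind) (by grind)
    exact ⟨η', by simpa [B] using hη', (hlam.trans_eq (by rw [per_congr_sym2 hη hA hA])).trans h⟩

end Principal

section Shrinking

variable {ι : Type*} [DecidableEq ι]

lemma exists_abs_per_le_abs_per_insert_insert (ω : Sym2 ι → Bool) {I J : Finset ι} {w : ι}
    (hI : w ∉ I) (hJ : w ∉ J) : ∃ η, Set.EqOn η ω {s(w, w)}ᶜ ∧
      |per ω I J| ≤ |per η (insert w I) (insert w J)| := by
  by_cases h : |per ω I J| ≤ |per ω (insert w I) (insert w J)|
  · exact ⟨ω, Set.eqOn_refl _ _, h⟩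
  let η := Function.update ω s(w, w) (!ω s(w, w))
  have hη : Set.EqOn η ω {s(w, w)}ᶜ := fun e he => Function.update_of_ne he _ _
  have hper {I' J' : Finset ι} (hI' : I' ⊆ I) (hJ' : J' ⊆ J) : per η I' J' = per ω I' J' :=
    per_congr fun p hp q hq => hη (by grind)
  have hsum : ∑ q ∈ J, ∑ p ∈ I, rad (η s(w, q)) * rad (η s(w, p)) * per η (I.erase p) (J.erase q) =
      ∑ q ∈ J, ∑ p ∈ I, rad (ω s(w, q)) * rad (ω s(w, p)) * per ω (I.erase p) (J.erase q) :=
    sum_congr rfl fun q hq => sum_congr rfl fun p hp => by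
      rw [hη (by grind), hη (by grind), hper (erase_subset _ _) (erase_subset _ _)]
  refine ⟨η, hη, ?_⟩
  rw [per_insert_insert ω hI hJ] at h
  rw [per_insert_insert η hI hJ, hsum, hper subset_rfl subset_rfl]
  have hflip : η s(w, w) = !ω s(w, w) := Function.update_self _ _ _
  rw [hflip, rad_not]
  have habs : |rad (ω s(w, w)) * per ω I J| = |per ω I J| := by rw [abs_mul, abs_rad, one_mul]
  set x := rad (ω s(w, w)) * per ω I J
  set r := ∑ q ∈ J, ∑ p ∈ I, rad (ω s(w, q)) * rad (ω s(w, p)) * per ω (I.erase p) (J.erase q)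
  rw [neg_mul, ← habs]
  rw [← habs, not_le, abs_lt] at h
  rcases abs_cases x with hx | hx <;>
    linarith [neg_le_abs (-x + r), le_abs_self (-x + r)]

variable [Fintype ι]

lemma condProb_not_exists_insert_pair_le {T A : Finset ι} {ω : Sym2 ι → Bool} {w₁ w₂ : ι} {lam : ℝ}
    {b : ℕ} (hA : A ⊆ T) (hw : w₁ ≠ w₂) (hw₁ : w₁ ∉ T) (hw₂ : w₂ ∉ T) (hlam : lam ≤ |per ω A A|)
    (hb : 2 * b ≤ #(T \ A)) :
    condProb (T.sym2 : Set (Sym2 ι)) ω (fun η => ¬∃ A', A ∪ {w₁, w₂} ⊆ A' ∧ A' ⊆ T ∪ {w₁, w₂} ∧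
      #A' = #A + 4 ∧ lam ≤ |per η A' A'|) ≤ (15 / 16) ^ b := by
  obtain ⟨z⟩ : Nonempty (Fin b × Bool ↪ ↥(T \ A)) :=
    Function.Embedding.nonempty_of_card_le (by
      rw [Fintype.card_coe]; simpa [mul_comm] using hb)
  have hz : Function.Injective fun x => (z x : ι) := Subtype.val_injective.comp z.injective
  have key := condProb_forall_insert_pair_lt_le hA hw hw₁ hw₂ hlam hz fun x => (z x).2
  rw [Fintype.card_fin] at key
  refine (condProb_mono fun η _ hnot l hle => hnot ⟨_, ?_, ?_, ?_, hle⟩).trans key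
  · grind
  · grind
  · have hne : (z (l, true) : ι) ≠ z (l, false) := fun h => by simpa using hz h
    have h₁ := mem_sdiff.1 (z (l, true)).2
    have h₂ := mem_sdiff.1 (z (l, false)).2
    grind

/-- As long as many unused indices remain, many disjoint pairs of them are available to the next two
new indices. -/
lemma condProb_not_exists_sdiff_card_eq_le (l m : ℕ) {T A Q : Finset ι} {ω : Sym2 ι → Bool}
    {lam : ℝ} (hTQ : Disjoint T Q) (hA : A ⊆ T) (hQ : #Q = 2 * m) (hTA : #(T \ A) = l + 2 * m)
    (hlam : lam ≤ |per ω A A|) :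
    condProb (T.sym2 : Set (Sym2 ι)) ω (fun η => ¬∃ A', A ∪ Q ⊆ A' ∧ A' ⊆ T ∪ Q ∧
      #((T ∪ Q) \ A') = l ∧ lam ≤ |per η A' A'|) ≤
        16 * (15 / 16) ^ (l / 2 + 1) * (1 - (15 / 16) ^ m) := by
  induction m generalizing T A Q ω with
  | zero =>
    obtain rfl : Q = ∅ := by simpa using hQ
    refine (condProb_eq_zero fun η hη => not_not.2 ⟨A, by simp, by simpa, by simpa using hTA,
      ?_⟩).trans_le (by simp)
    rwa [per_congr_sym2 hη hA hA]
  | succ m ih =>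
    obtain ⟨D, hDQ, hD⟩ := exists_subset_card_eq (show 2 ≤ #Q by omega)
    obtain ⟨w₁, w₂, hw, rfl⟩ := card_eq_two.1 hD
    have hdisj : Disjoint (T ∪ {w₁, w₂}) (Q \ {w₁, w₂}) :=
      disjoint_union_left.2 ⟨hTQ.mono_right sdiff_subset, disjoint_sdiff⟩
    have hunion : T ∪ {w₁, w₂} ∪ Q \ {w₁, w₂} = T ∪ Q := by grind
    have hw₁ : w₁ ∉ T := disjoint_right.1 hTQ (by grind)
    have hw₂ : w₂ ∉ T := disjoint_right.1 hTQ (by grind)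
    have hpow : (15 / 16 : ℝ) ^ m ≤ 1 := pow_le_one₀ (by norm_num) (by norm_num)
    refine (condProb_not_chain (S' := (T ∪ {w₁, w₂}).sym2)
      (coe_subset.2 (sym2_mono subset_union_left))
      (q := 16 * (15 / 16) ^ (l / 2 + 1) * (1 - (15 / 16) ^ m))
      (mul_nonneg (by positivity) (sub_nonneg.2 hpow))
      (condProb_not_exists_insert_pair_le hA hw hw₁ hw₂ hlam (b := l / 2 + (m + 1)) (by omega))
      ?_).trans_eq ?_
    · rintro η - ⟨A', hAA', hA'T, hA'c, hper⟩
      have hTAc := card_sdiff_add_card_eq_card hA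
      have hTAc' := card_sdiff_add_card_eq_card hA'T
      have hTc : #(T ∪ {w₁, w₂}) = #T + 2 := by
        rw [card_union_of_disjoint (hTQ.mono_right hDQ), hD]
      have hAQ : A ∪ Q ⊆ A' ∪ Q \ {w₁, w₂} := by clear ih; grind
      refine (condProb_mono fun ζ _ hnot => ?_).trans
        (ih hdisj hA'T (by rw [card_sdiff_of_subset hDQ]; omega) (by omega) hper)
      rw [hunion]
      rintro ⟨A'', h₁, h₂⟩
      exact hnot ⟨A'', hAQ.trans h₁, h₂⟩
    · ring

lemma one_sixteenth_le_condProb_insert_pair {T A : Finset ι} {ω : Sym2 ι → Bool}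
    {i j w₁ w₂ : ι} {lam : ℝ} (hA : A ⊆ T) (hij : i ≠ j) (hi : i ∈ T \ A) (hj : j ∈ T \ A)
    (hw : w₁ ≠ w₂) (hw₁ : w₁ ∉ T) (hw₂ : w₂ ∉ T) (hlam : lam ≤ |per ω A A|) :
    1 / 16 ≤ condProb (T.sym2 : Set (Sym2 ι)) ω fun η =>
      lam ≤ |per η (A ∪ {i, j, w₁, w₂}) (A ∪ {i, j, w₁, w₂})| := by
  have key := condProb_forall_insert_pair_lt_le (κ := Unit) hA hw hw₁ hw₂ hlam
    (z := fun x => bif x.2 then i else j)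
    (by
      rintro ⟨⟨⟩, _ | _⟩ ⟨⟨⟩, _ | _⟩ h
      exacts [rfl, absurd h.symm hij, absurd h hij, rfl])
    (by rintro ⟨-, _ | _⟩; exacts [hj, hi])
  simp only [forall_const, cond_true, cond_false, condProb_not, Fintype.card_unit, pow_one] at key
  linarith

/-- Two new indices enlarge the principal submatrix by two prescribed unused indices with
probability at least `1 / 16`, and stay unused when this fails. -/
lemma condProb_not_exists_superset_le {T A Q : Finset ι} {ω : Sym2 ι → Bool} {lam : ℝ} {R a : ℕ}
    (hTQ : Disjoint T Q) (hA : A ⊆ T) (hQ : #Q = 2 * a) (hTA : #(T \ A) = 2 * R)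
    (hlam : lam ≤ |per ω A A|) :
    condProb (T.sym2 : Set (Sym2 ι)) ω (fun η => ¬∃ A', T ⊆ A' ∧ A' ⊆ T ∪ Q ∧ #A' = #A + 4 * R ∧
      lam ≤ |per η A' A'|) ≤ 2 ^ R * (31 / 32) ^ a := by
  let P (T' : Finset ι) (R' : ℕ) (η : Sym2 ι → Bool) : Prop := T ⊆ T' ∧ ∃ A' ⊆ T',
    #(T \ A') = 2 * R' ∧ #A' + 4 * R' = #A + 4 * R ∧ lam ≤ |per η A' A'|
  have key := condProb_trials (F := fun T => (T.sym2 : Set (Sym2 ι))) (P := P) (s := 2)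
    (c := 1 / 16) (fun T T' h => coe_subset.2 (sym2_mono h)) (by norm_num) ?_ ?_ subset_rfl hTQ hQ
    (ω := ω) ⟨subset_rfl, A, hA, hTA, rfl, hlam⟩
  · norm_num only at key
    refine (condProb_mono fun η _ hnot => ?_).trans key
    rintro ⟨-, A', hA', hT, hc, hper⟩
    exact hnot ⟨A', sdiff_eq_empty_iff_subset.1 (by simpa using hT), hA', by omega, hper⟩
  · rintro T' D R' η - hTD hD ⟨hTT', A', hA', hT, hc, hper⟩
    obtain ⟨w₁, w₂, hw, rfl⟩ := card_eq_two.1 hD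
    obtain ⟨i, hi, j, hj, hij⟩ := one_lt_card.1 (show 1 < #(T \ A') by omega)
    have hw₁ : w₁ ∉ T' := disjoint_right.1 hTD (by simp)
    have hw₂ : w₂ ∉ T' := disjoint_right.1 hTD (by simp)
    refine (one_sixteenth_le_condProb_insert_pair hA' hij (by grind) (by grind) hw hw₁ hw₂
      hper).trans (condProb_mono fun ζ _ hζ => ⟨by grind, _, by grind, ?_, by grind, hζ⟩)
    have hsdiff : T \ (A' ∪ {i, j, w₁, w₂}) = ((T \ A').erase i).erase j := by grind
    rw [hsdiff]; grind
  · rintro T' D R' η η' - - ⟨hTT', A', hA', hT, hc, hper⟩ hη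
    exact ⟨by grind, A', by grind, hT, hc, by rwa [per_congr_sym2 hη hA' hA']⟩

lemma one_half_le_condProb_insert_insert {T I J : Finset ι} {w : ι} {ω : Sym2 ι → Bool} {lam : ℝ}
    (hw : w ∉ T) (hI : I ⊆ T) (hJ : J ⊆ T) (hlam : lam ≤ |per ω I J|) :
    1 / 2 ≤ condProb (T.sym2 : Set (Sym2 ι)) ω fun η =>
      lam ≤ |per η (insert w I) (insert w J)| := by
  have key := half_pow_le_condProb (S := (T.sym2 : Set (Sym2 ι))) (ω := ω) (B := {s(w, w)})
    (by simp [hw]) (G := fun η => lam ≤ |per η (insert w I) (insert w J)|) fun η hη => ?_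
  · simpa using key
  · obtain ⟨η', hη', hle⟩ := exists_abs_per_le_abs_per_insert_insert η (fun h => hw (hI h))
      (fun h => hw (hJ h))
    exact ⟨η', by simpa using hη', (hlam.trans_eq (by rw [per_congr_sym2 hη hI hJ])).trans hle⟩

lemma condProb_not_exists_union_le {T Q I J : Finset ι} {ω : Sym2 ι → Bool} {lam : ℝ} (c : ℕ)
    (hTQ : Disjoint T Q) (hI : I ⊆ T) (hJ : J ⊆ T) (hlam : lam ≤ |per ω I J|) :
    condProb (T.sym2 : Set (Sym2 ι)) ω (fun η => ¬∃ W ⊆ Q, #W = c ∧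
      lam ≤ |per η (I ∪ W) (J ∪ W)|) ≤ 2 ^ c * (3 / 4) ^ #Q := by
  let P (T' : Finset ι) (R : ℕ) (η : Sym2 ι → Bool) : Prop := T ⊆ T' ∧ ∃ W ⊆ T' \ T,
    #W + R = c ∧ lam ≤ |per η (I ∪ W) (J ∪ W)|
  have key := condProb_trials (F := fun T => (T.sym2 : Set (Sym2 ι))) (P := P) (s := 1)
    (c := 1 / 2) (fun T T' h => coe_subset.2 (sym2_mono h)) (by norm_num) ?_ ?_ subset_rfl hTQ
    (one_mul _).symm (ω := ω) (R := c)
    ⟨subset_rfl, ∅, by simp, by simp, by simpa⟩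
  · norm_num only at key
    refine (condProb_mono fun η _ hnot => ?_).trans key
    rintro ⟨-, W, hW, hc, hper⟩
    exact hnot ⟨W, by grind, by omega, hper⟩
  · rintro T' D R η - hTD hD ⟨hTT', W, hW, hc, hper⟩
    obtain ⟨w, rfl⟩ := card_eq_one.1 hD
    have hw : w ∉ T' := disjoint_singleton_right.1 hTD
    refine (one_half_le_condProb_insert_insert hw (by grind) (by grind) hper).trans
      (condProb_mono fun ζ _ hζ => ⟨by grind, insert w W, by grind, by grind, ?_⟩)
    rwa [union_insert, union_insert]
  · rintro T' D R η η' - - ⟨hTT', W, hW, hc, hper⟩ hη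
    exact ⟨by grind, W, by grind, hc, by rwa [per_congr_sym2 hη (by grind) (by grind)]⟩

/-- The new indices of `F₁` replace the unused ones, and those of `F₂` bring the number of unused
indices, which this increases, down again. -/
lemma condProb_not_exists_superset_sdiff_card_eq_le {T A F₁ F₂ : Finset ι} {ω : Sym2 ι → Bool}
    {lam : ℝ} {r : ℕ} (hA : A ⊆ T) (hTA : #(T \ A) = 2 * r) (hF₁ : Disjoint T F₁)
    (hF₂ : Disjoint (T ∪ F₁) F₂) (hF₁c : #F₁ = 128 * r) (hF₂c : #F₂ = 124 * r)
    (hlam : lam ≤ |per ω A A|) :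
    condProb (T.sym2 : Set (Sym2 ι)) ω (fun η => ¬∃ A', T ⊆ A' ∧ A' ⊆ T ∪ F₁ ∪ F₂ ∧
      #((T ∪ F₁ ∪ F₂) \ A') = 2 * r ∧ lam ≤ |per η A' A'|) ≤
        2 ^ r * (31 / 32) ^ (64 * r) + 16 * (15 / 16) ^ (r + 1) := by
  refine condProb_not_chain (S' := (T ∪ F₁).sym2) (coe_subset.2 (sym2_mono subset_union_left))
    (by positivity) (condProb_not_exists_superset_le hF₁ hA (by omega) hTA hlam) ?_
  rintro η - ⟨A', hTA', hA', hA'c, hper⟩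
  have hcard : #((T ∪ F₁) \ A') = 2 * r + 2 * (62 * r) := by
    have := card_union_of_disjoint hF₁
    have := card_sdiff_add_card_eq_card hA
    have := card_sdiff_add_card_eq_card hA'
    omega
  refine (condProb_mono fun ζ _ hnot => ?_).trans
    ((condProb_not_exists_sdiff_card_eq_le (2 * r) (62 * r) hF₂ hA' (by omega) hcard hper).trans ?_)
  · rintro ⟨A'', h₁, h₂⟩
    exact hnot ⟨A'', by grind, h₂⟩
  · rw [Nat.mul_div_cancel_left r two_pos]
    exact mul_le_of_le_one_right (by positivity) (sub_le_self _ (by positivity))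

lemma condProb_not_exists_shrink_superset_le {T A Q F₁ F₂ : Finset ι} {ω : Sym2 ι → Bool} {lam : ℝ}
    {r m : ℕ} (hA : A ⊆ T) (hTA : #(T \ A) = 2 * r + 2 * m) (hQ : Disjoint T Q)
    (hF₁ : Disjoint (T ∪ Q) F₁) (hF₂ : Disjoint (T ∪ Q ∪ F₁) F₂) (hQc : #Q = 2 * m)
    (hF₁c : #F₁ = 128 * r) (hF₂c : #F₂ = 124 * r) (hlam : lam ≤ |per ω A A|) :
    condProb (T.sym2 : Set (Sym2 ι)) ω (fun η => ¬∃ A', T ∪ Q ⊆ A' ∧ A' ⊆ T ∪ Q ∪ F₁ ∪ F₂ ∧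
      #((T ∪ Q ∪ F₁ ∪ F₂) \ A') = 2 * r ∧ lam ≤ |per η A' A'|) ≤
        16 * (15 / 16) ^ (r + 1) + (2 ^ r * (31 / 32) ^ (64 * r) + 16 * (15 / 16) ^ (r + 1)) := by
  refine condProb_not_chain (S' := (T ∪ Q).sym2) (coe_subset.2 (sym2_mono subset_union_left))
    (by positivity)
    ((condProb_not_exists_sdiff_card_eq_le (2 * r) m hQ hA hQc hTA hlam).trans ?_) ?_
  · rw [Nat.mul_div_cancel_left r two_pos]
    exact mul_le_of_le_one_right (by positivity) (sub_le_self _ (by positivity))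
  · rintro η - ⟨A', -, hA', hc, hper⟩
    exact condProb_not_exists_superset_sdiff_card_eq_le hA' hc hF₁ hF₂ hF₁c hF₂c hper

lemma two_pow_mul_seven_eighths_pow_le {R x k : ℕ} (h : 8 * R + x ≤ k) :
    2 ^ R * (7 / 8 : ℝ) ^ k ≤ (7 / 8) ^ x :=
  calc 2 ^ R * (7 / 8 : ℝ) ^ k ≤ 2 ^ R * (7 / 8) ^ (8 * R + x) := by
        gcongr ?_ * ?_
        exact pow_le_pow_of_le_one (by norm_num) (by norm_num) h
    _ = (2 * (7 / 8) ^ 8) ^ R * (7 / 8) ^ x := by rw [pow_add, pow_mul, mul_pow, mul_assoc]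
    _ ≤ (7 / 8) ^ x :=
        mul_le_of_le_one_left (by positivity) (pow_le_one₀ (by norm_num) (by norm_num))

lemma condProb_not_exists_of_offdiag_le {T Q₁ Q₂ F₁ F₂ I J : Finset ι} {ω : Sym2 ι → Bool} {lam : ℝ}
    {r m x : ℕ} (hI : I ⊆ T) (hJ : J ⊆ T) (hc : #I = #J)
    (hlam : lam * (3 / 2) ^ #(I \ J) ≤ |per ω I J|) (hQ₁ : Disjoint T Q₁)
    (hQ₂ : Disjoint (T ∪ Q₁) Q₂) (hF₁ : Disjoint (T ∪ Q₁ ∪ Q₂) F₁)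
    (hF₂ : Disjoint (T ∪ Q₁ ∪ Q₂ ∪ F₁) F₂) (hQ₁c : 8 * #(I \ J) + x ≤ #Q₁)
    (hTc : #(T ∪ Q₁) = #I + 2 * #(I \ J) + 2 * r + 2 * m) (hQ₂c : #Q₂ = 2 * m)
    (hF₁c : #F₁ = 128 * r) (hF₂c : #F₂ = 124 * r) :
    condProb (T.sym2 : Set (Sym2 ι)) ω (fun η => ¬∃ A, T ∪ Q₁ ∪ Q₂ ⊆ A ∧
      A ⊆ T ∪ Q₁ ∪ Q₂ ∪ F₁ ∪ F₂ ∧ #((T ∪ Q₁ ∪ Q₂ ∪ F₁ ∪ F₂) \ A) = 2 * r ∧ lam ≤ |per η A A|) ≤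
        (7 / 8) ^ x + (16 * (15 / 16) ^ (r + 1) +
          (2 ^ r * (31 / 32) ^ (64 * r) + 16 * (15 / 16) ^ (r + 1))) := by
  refine condProb_not_chain (S' := (T ∪ Q₁).sym2) (coe_subset.2 (sym2_mono subset_union_left))
    (by positivity) ((condProb_not_exists_principal_le hQ₁ hI hJ hc hlam).trans
      (two_pow_mul_seven_eighths_pow_le hQ₁c)) ?_
  rintro η - ⟨A, hA, hAc, hper⟩
  exact condProb_not_exists_shrink_superset_le hA (by rw [card_sdiff_of_subset hA]; omega) hQ₂ hF₁
    hF₂ hQ₂c hF₁c hF₂c hper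

/-- The `c ≤ 3` diagonal entries used first adjust the size of the submatrix modulo `4`. -/
lemma condProb_not_exists_few_missing_le {T Q F₁ F₂ I J : Finset ι} {ω : Sym2 ι → Bool} {lam : ℝ}
    {d x r : ℕ} (hI : I ⊆ T) (hJ : J ⊆ T) (hc : #I = #J) (hd : #T ≤ #I + d) (h0 : 0 ≤ lam)
    (hlam : lam * (3 / 2) ^ d ≤ |per ω I J|) (hQ : Disjoint T Q) (hF₁ : Disjoint (T ∪ Q) F₁)
    (hF₂ : Disjoint (T ∪ Q ∪ F₁) F₂) (hQc : 17 * d + 4 * x + 2 * r + 3 ≤ #Q)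
    (hF₁c : #F₁ = 128 * r) (hF₂c : #F₂ = 124 * r) :
    condProb (T.sym2 : Set (Sym2 ι)) ω (fun η => ¬∃ A, T ∪ Q ⊆ A ∧ A ⊆ T ∪ Q ∪ F₁ ∪ F₂ ∧
      #((T ∪ Q ∪ F₁ ∪ F₂) \ A) = 2 * r ∧ lam ≤ |per η A A|) ≤
      8 * (3 / 4) ^ x + ((7 / 8) ^ x + (16 * (15 / 16) ^ (r + 1) +
        (2 ^ r * (31 / 32) ^ (64 * r) + 16 * (15 / 16) ^ (r + 1)))) := by
  have hRT : #I + #(I \ J) ≤ #T := by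
    rw [hc, add_comm, card_sdiff_add_card]
    exact card_le_card (union_subset hI hJ)
  obtain ⟨c, m, hc3, hcm⟩ : ∃ c m : ℕ, c ≤ 3 ∧ #Q + #T = 2 * r + #I + c + 2 * #(I \ J) + 4 * m :=
    ⟨(#Q + #T - (2 * r + #I + 2 * #(I \ J))) % 4, (#Q + #T - (2 * r + #I + 2 * #(I \ J))) / 4,
      by omega, by omega⟩
  obtain ⟨Q₂, hQ₂, hQ₂c⟩ := exists_subset_card_eq (show 2 * m ≤ #Q by omega)
  have hQ₂c' := card_sdiff_of_subset hQ₂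
  obtain ⟨Q₀, hQ₀, hQ₀c⟩ := exists_subset_card_eq (show x ≤ #(Q \ Q₂) by omega)
  set Q₁ := (Q \ Q₂) \ Q₀
  have hQ₁c : #Q₁ = #Q - 2 * m - x := by rw [card_sdiff_of_subset hQ₀]; omega
  have hunion : T ∪ Q₀ ∪ Q₁ ∪ Q₂ = T ∪ Q := by grind
  have hTQ₀ : Disjoint T Q₀ := hQ.mono_right (hQ₀.trans sdiff_subset)
  have hTQ₁ : Disjoint (T ∪ Q₀) Q₁ :=
    disjoint_union_left.2 ⟨hQ.mono_right (sdiff_subset.trans sdiff_subset), disjoint_sdiff⟩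
  refine condProb_not_chain (S' := (T ∪ Q₀).sym2) (coe_subset.2 (sym2_mono subset_union_left))
    (by positivity) ((condProb_not_exists_union_le c hTQ₀ hI hJ hlam).trans ?_) ?_
  · rw [hQ₀c]
    gcongr
    exact (pow_le_pow_right₀ one_le_two hc3).trans_eq (by norm_num)
  rintro η - ⟨W, hW, hWc, hper⟩
  have hIW : #(I ∪ W) = #I + c := by rw [card_union_of_disjoint (hTQ₀.mono hI hW), hWc]
  have hJW : #(J ∪ W) = #J + c := by rw [card_union_of_disjoint (hTQ₀.mono hJ hW), hWc]
  have hsdiff : (I ∪ W) \ (J ∪ W) = I \ J := by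
    have := disjoint_left.1 (hTQ₀.mono hI hW)
    grind
  have hsdiffc := congrArg card hsdiff
  have hTc : #(T ∪ Q₀ ∪ Q₁) = #T + #Q₀ + #Q₁ := by
    rw [card_union_of_disjoint hTQ₁, card_union_of_disjoint hTQ₀]
  have hTQ₂ : Disjoint (T ∪ Q₀ ∪ Q₁) Q₂ := disjoint_union_left.2
    ⟨disjoint_union_left.2 ⟨hQ.mono_right hQ₂, sdiff_disjoint.mono_left hQ₀⟩,
      sdiff_disjoint.mono_left sdiff_subset⟩
  rw [← hunion] at hF₁ hF₂ ⊢
  refine condProb_not_exists_of_offdiag_le (m := m) (union_subset_union hI hW)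
    (union_subset_union hJ hW) (by omega) ?_ hTQ₁ hTQ₂ hF₁ hF₂ (by omega)
    (by omega) hQ₂c hF₁c hF₂c
  rw [hsdiff]
  refine le_trans ?_ hper
  gcongr
  · norm_num
  · omega

end Shrinking

/-! ### Sums of squares of affine forms in random signs -/

section Forms

variable {E κ : Type*} [DecidableEq E]

lemma sum_insert_mul_rad_update [DecidableEq κ] {e : κ → E} (he : Function.Injective e)
    {D : Finset κ} {d₀ : κ} (hd : d₀ ∉ D) (b : κ → ℝ) (x : E → Bool) (s : Bool) :
    ∑ d ∈ insert d₀ D, b d * rad (Function.update x (e d₀) s (e d)) =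
      b d₀ * rad s + ∑ d ∈ D, b d * rad (x (e d)) := by
  rw [sum_insert hd, Function.update_self]
  congr 1
  refine sum_congr rfl fun d hdD => ?_
  rw [Function.update_of_ne fun h => hd (by rwa [← he h])]

variable [Fintype E]

lemma expect_update (e : E) (f : (E → Bool) → ℝ) :
    𝔼 x, f x = 𝔼 x, (f (Function.update x e true) + f (Function.update x e false)) / 2 := by
  have hinv : Function.Involutive fun x : E → Bool => Function.update x e (!x e) :=
    fun x => by simp
  have hflip : 𝔼 x : E → Bool, f (Function.update x e (!x e)) = 𝔼 x, f x :=
    Fintype.expect_equiv hinv.toPerm _ _ fun _ => rfl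
  have hpair (x : E → Bool) : f (Function.update x e true) + f (Function.update x e false) =
      f x + f (Function.update x e (!x e)) := by
    have hself := Function.update_eq_self e x
    rcases hx : x e with _ | _ <;> rw [hx] at hself
    · rw [hself, Bool.not_false, add_comm]
    · rw [hself, Bool.not_true]
  simp_rw [hpair, ← expect_div, expect_add_distrib, hflip]
  ring

lemma expect_affine_sq {e : κ → E} (he : Function.Injective e) (D : Finset κ) (a : ℝ) (b : κ → ℝ) :
    𝔼 x : E → Bool, (a + ∑ d ∈ D, b d * rad (x (e d))) ^ 2 = a ^ 2 + ∑ d ∈ D, b d ^ 2 := by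
  classical
  induction D using Finset.induction_on with
  | empty => simp
  | insert d₀ D hd ih =>
    rw [expect_update (e d₀), sum_insert hd, add_left_comm, ← ih,
      ← Fintype.expect_const (ι := E → Bool) (b d₀ ^ 2), ← expect_add_distrib]
    refine expect_congr rfl fun x _ => ?_
    rw [sum_insert_mul_rad_update he hd, sum_insert_mul_rad_update he hd, rad_true, rad_false]
    ring

lemma expect_affine_sq_mul_affine_sq_le {e : κ → E} (he : Function.Injective e) (D : Finset κ)
    (a a' : ℝ) (b b' : κ → ℝ) :
    𝔼 x : E → Bool, (a + ∑ d ∈ D, b d * rad (x (e d))) ^ 2 *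
      (a' + ∑ d ∈ D, b' d * rad (x (e d))) ^ 2 ≤
      3 * ((a ^ 2 + ∑ d ∈ D, b d ^ 2) * (a' ^ 2 + ∑ d ∈ D, b' d ^ 2)) := by
  classical
  induction D using Finset.induction_on with
  | empty =>
    simp only [sum_empty, add_zero, Fintype.expect_const]
    nlinarith [mul_nonneg (sq_nonneg a) (sq_nonneg a')]
  | insert d₀ D hd ih =>
    rw [expect_update (e d₀), sum_insert hd, sum_insert hd]
    simp_rw [sum_insert_mul_rad_update he hd, rad_true, rad_false]
    set X : (E → Bool) → ℝ := fun x => a + ∑ d ∈ D, b d * rad (x (e d)) with hXdef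
    set Y : (E → Bool) → ℝ := fun x => a' + ∑ d ∈ D, b' d * rad (x (e d)) with hYdef
    have hX : 𝔼 x, X x ^ 2 = a ^ 2 + ∑ d ∈ D, b d ^ 2 := expect_affine_sq he D a b
    have hY : 𝔼 x, Y x ^ 2 = a' ^ 2 + ∑ d ∈ D, b' d ^ 2 := expect_affine_sq he D a' b'
    have hpt (x : E → Bool) : ((a + (b d₀ * 1 + ∑ d ∈ D, b d * rad (x (e d)))) ^ 2 *
        (a' + (b' d₀ * 1 + ∑ d ∈ D, b' d * rad (x (e d)))) ^ 2 +
        (a + (b d₀ * -1 + ∑ d ∈ D, b d * rad (x (e d)))) ^ 2 *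
        (a' + (b' d₀ * -1 + ∑ d ∈ D, b' d * rad (x (e d)))) ^ 2) / 2 ≤
        X x ^ 2 * Y x ^ 2 + 3 * b d₀ ^ 2 * Y x ^ 2 + 3 * b' d₀ ^ 2 * X x ^ 2 +
          b d₀ ^ 2 * b' d₀ ^ 2 := by
      simp only [hXdef, hYdef]
      nlinarith [sq_nonneg (b d₀ * Y x - b' d₀ * X x)]
    refine (expect_le_expect fun x _ => hpt x).trans ?_
    simp_rw [expect_add_distrib, ← mul_expect, hX, hY, Fintype.expect_const]
    nlinarith [mul_nonneg (sq_nonneg (b d₀)) (sq_nonneg (b' d₀)), ih]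

lemma one_twelfth_le_uniformProb_half_le {Ω : Type*} [Fintype Ω] [Nonempty Ω] {f : Ω → ℝ}
    (hf : ∀ a, 0 ≤ f a) (h2 : 𝔼 a, f a ^ 2 ≤ 3 * (𝔼 a, f a) ^ 2) {m : ℝ} (hm : m ≤ 𝔼 a, f a) :
    1 / 12 ≤ uniformProb fun a => m / 2 ≤ f a := by
  set u := 𝔼 a, f a with hu
  have hu0 : 0 ≤ u := expect_nonneg fun a _ => hf a
  obtain h | hpos := hu0.eq_or_lt
  · rw [uniformProb_eq_one fun a => by linarith [hf a]]
    norm_num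
  have hsplit : u ≤ u / 2 + 𝔼 a, f a * ind (m / 2 ≤ f a) := by
    rw [← Fintype.expect_const (ι := Ω) (u / 2), ← expect_add_distrib, hu]
    refine expect_le_expect fun a _ => ?_
    by_cases ha : m / 2 ≤ f a
    · rw [ind_of_true ha]; linarith
    · rw [ind_of_false ha]; linarith
  have hcs := expect_mul_sq_le_sq_mul_sq univ f fun a => ind (m / 2 ≤ f a)
  have hind : 𝔼 a, ind (m / 2 ≤ f a) ^ 2 = uniformProb fun a => m / 2 ≤ f a :=
    expect_congr rfl fun a _ => by unfold ind; split_ifs <;> norm_num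
  rw [hind] at hcs
  have hprob := uniformProb_nonneg fun a => m / 2 ≤ f a
  have : (u / 2) ^ 2 ≤ 3 * u ^ 2 * uniformProb fun a => m / 2 ≤ f a :=
    ((pow_le_pow_left₀ (by positivity) (by linarith) 2).trans hcs).trans
      (mul_le_mul_of_nonneg_right h2 hprob)
  nlinarith [pow_pos hpos 2]

lemma one_twelfth_le_uniformProb_sum_affine_sq {α : Type*} (s : Finset α) {e : κ → E}
    (he : Function.Injective e) (D : Finset κ) (a : α → ℝ) (b : α → κ → ℝ) {m : ℝ}
    (hm : m ≤ ∑ K ∈ s, (a K ^ 2 + ∑ d ∈ D, b K d ^ 2)) :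
    1 / 12 ≤ uniformProb fun x : E → Bool =>
      m / 2 ≤ ∑ K ∈ s, (a K + ∑ d ∈ D, b K d * rad (x (e d))) ^ 2 := by
  have hmean : 𝔼 x : E → Bool, ∑ K ∈ s, (a K + ∑ d ∈ D, b K d * rad (x (e d))) ^ 2 =
      ∑ K ∈ s, (a K ^ 2 + ∑ d ∈ D, b K d ^ 2) := by
    rw [expect_sum_comm]
    exact sum_congr rfl fun K _ => expect_affine_sq he D _ _
  refine one_twelfth_le_uniformProb_half_le (fun x => sum_nonneg fun _ _ => sq_nonneg _) ?_
    (hm.trans_eq hmean.symm)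
  simp_rw [hmean, sq (∑ _ ∈ s, _), sum_mul_sum, mul_sum, expect_sum_comm]
  exact sum_le_sum fun K _ => sum_le_sum fun K' _ => expect_affine_sq_mul_affine_sq_le he D _ _ _ _

end Forms

/-! ### Growth of rectangular subpermanents -/

section Growth

lemma sum_powersetCard_erase {ι : Type*} [DecidableEq ι] (D : Finset ι) (k : ℕ)
    (g : Finset ι → ℝ) : ∑ K ∈ D.powersetCard (k + 1), ∑ d ∈ K, g (K.erase d) =
      ((#D : ℝ) - k) * ∑ K ∈ D.powersetCard k, g K := by
  have hcount : ∀ K ∈ D.powersetCard k, ((#D : ℝ) - k) * g K = ∑ _d ∈ D \ K, g K := by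
    intro K hK
    obtain ⟨hKD, rfl⟩ := mem_powersetCard.1 hK
    rw [sum_const, card_sdiff_of_subset hKD, nsmul_eq_mul, Nat.cast_sub (card_le_card hKD)]
  rw [mul_sum, sum_congr rfl hcount, sum_sigma', sum_sigma']
  refine sum_bij' (fun p _ => ⟨p.1.erase p.2, p.2⟩) (fun p _ => ⟨insert p.2 p.1, p.2⟩)
    ?_ ?_ ?_ ?_ fun _ _ => rfl <;>
    rintro ⟨K, d⟩ h <;> simp only [mem_sigma, mem_powersetCard, mem_sdiff] at h ⊢
  · grind
  · grind
  · rw [insert_erase h.2]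
  · rw [erase_insert h.2.2]

variable {ι : Type*} [DecidableEq ι]

/-- The sum of the squared subpermanents with row set `I` and column set `J ∪ K`, over the
`k`-element subsets `K` of `D`. -/
noncomputable def sumSqPer (D J : Finset ι) (k : ℕ) (ω : Sym2 ι → Bool) (I : Finset ι) : ℝ :=
  ∑ K ∈ D.powersetCard k, per ω I (J ∪ K) ^ 2

lemma sumSqPer_nonneg (D J : Finset ι) (k : ℕ) (ω : Sym2 ι → Bool) (I : Finset ι) :
    0 ≤ sumSqPer D J k ω I := sum_nonneg fun _ _ => sq_nonneg _

lemma sumSqPer_congr {D J I : Finset ι} {k : ℕ} {ω ω' : Sym2 ι → Bool}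
    (h : ∀ i ∈ I, ∀ j ∈ J ∪ D, ω s(i, j) = ω' s(i, j)) :
    sumSqPer D J k ω I = sumSqPer D J k ω' I :=
  sum_congr rfl fun K hK => by
    rw [per_congr fun i hi j hj => h i hi j
      (union_subset_union_right (mem_powersetCard.1 hK).1 hj)]

lemma exists_le_per_sq_of_le_sumSqPer {D J I : Finset ι} {k : ℕ} {ω : Sym2 ι → Bool} {lam : ℝ}
    (h0 : 0 ≤ lam) (hk : k ≤ #D) (h : lam ≤ sumSqPer D J k ω I) :
    ∃ K ⊆ D, #K = k ∧ lam / 2 ^ #D ≤ per ω I (J ∪ K) ^ 2 := by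
  obtain ⟨K, hK, hle⟩ := exists_le_of_sum_le (powersetCard_nonempty.2 hk)
    (f := fun _ => lam / 2 ^ #D) (g := fun K => per ω I (J ∪ K) ^ 2) (by
      rw [sum_const, card_powersetCard, nsmul_eq_mul]
      refine le_trans ?_ h
      rw [mul_div_left_comm]
      refine mul_le_of_le_one_right h0 (div_le_one_of_le₀ ?_ (by positivity))
      exact_mod_cast Nat.choose_le_two_pow _ _)
  exact ⟨K, (mem_powersetCard.1 hK).1, (mem_powersetCard.1 hK).2, hle⟩

lemma per_insert_union {ω η : Sym2 ι → Bool} {I J K : Finset ι} {w : ι} (hw : w ∉ I)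
    (hJK : Disjoint J K) (hI : ∀ i ∈ I, ∀ j ∈ J ∪ K, η s(i, j) = ω s(i, j))
    (hwJ : ∀ j ∈ J, η s(w, j) = ω s(w, j)) :
    per η (insert w I) (J ∪ K) = ∑ j ∈ J, rad (ω s(w, j)) * per ω I ((J ∪ K).erase j) +
      ∑ d ∈ K, per ω I (J ∪ K.erase d) * rad (η s(w, d)) := by
  have hper (j : ι) : per η I ((J ∪ K).erase j) = per ω I ((J ∪ K).erase j) :=
    per_congr fun i hi j' hj' => hI i hi j' (mem_of_mem_erase hj')
  rw [per_insert η hw, sum_union hJK]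
  congr 1
  · exact sum_congr rfl fun j hj => by rw [hper, hwJ j hj]
  · refine sum_congr rfl fun d hd => ?_
    rw [hper, mul_comm, erase_union_distrib, erase_eq_of_notMem (disjoint_right.1 hJK hd)]

variable [Fintype ι]

lemma one_twelfth_le_condProb_sumSqPer {S : Set (Sym2 ι)} {ω : Sym2 ι → Bool} {D I J : Finset ι}
    {w : ι} {k : ℕ} (hJD : Disjoint J D) (hw : w ∉ I) (hSI : ∀ i ∈ I, ∀ j ∈ J ∪ D, s(i, j) ∈ S)
    (hSJ : ∀ j ∈ J, s(w, j) ∈ S) (hSD : ∀ d ∈ D, s(w, d) ∉ S) {ν γ : ℝ}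
    (hν : ν ≤ sumSqPer D J k ω I) (hγ0 : 0 ≤ γ) (hγ : 2 * γ ≤ (#D : ℝ) - k) :
    1 / 12 ≤ condProb S ω fun η => ν * γ ≤ sumSqPer D J (k + 1) η (insert w I) := by
  let a (K : Finset ι) : ℝ := ∑ j ∈ J, rad (ω s(w, j)) * per ω I ((J ∪ K).erase j)
  let b (K : Finset ι) (d : ι) : ℝ := if d ∈ K then per ω I (J ∪ K.erase d) else 0
  have hval (ω' : Sym2 ι → Bool) : sumSqPer D J (k + 1) (resample S ω ω') (insert w I) =
      ∑ K ∈ D.powersetCard (k + 1), (a K + ∑ d ∈ D, b K d * rad (ω' s(w, d))) ^ 2 := by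
    refine sum_congr rfl fun K hK => ?_
    have hKD := (mem_powersetCard.1 hK).1
    rw [per_insert_union hw (hJD.mono_right hKD)
      (fun i hi j hj => resample_of_mem (hSI i hi j (union_subset_union_right hKD hj)) _ _)
      fun j hj => resample_of_mem (hSJ j hj) _ _]
    simp only [a, b, ite_mul, zero_mul, sum_ite_mem, inter_eq_right.2 hKD]
    congr 2
    exact sum_congr rfl fun d hd => by rw [resample_of_notMem (hSD d (hKD hd))]
  have hgrowth : 2 * (ν * γ) ≤
      ∑ K ∈ D.powersetCard (k + 1), (a K ^ 2 + ∑ d ∈ D, b K d ^ 2) := calc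
    2 * (ν * γ) ≤ ((#D : ℝ) - k) * sumSqPer D J k ω I := by
      nlinarith [sumSqPer_nonneg D J k ω I]
    _ = ∑ K ∈ D.powersetCard (k + 1), ∑ d ∈ K, per ω I (J ∪ K.erase d) ^ 2 :=
      (sum_powersetCard_erase D k fun K => per ω I (J ∪ K) ^ 2).symm
    _ ≤ _ := sum_le_sum fun K hK => by
      simp only [b, ite_pow, zero_pow two_ne_zero, sum_ite_mem,
        inter_eq_right.2 (mem_powersetCard.1 hK).1]
      exact le_add_of_nonneg_left (sq_nonneg _)
  refine (one_twelfth_le_uniformProb_sum_affine_sq _ (e := fun d => s(w, d))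
    (fun _ _ => Sym2.congr_right.1) D a b hgrowth).trans (uniformProb_mono fun ω' h => ?_)
  simp only [hval]
  linarith

/-- Expose the rows in `T \ I` on the fresh columns `D` one after the other, until `r` of them have
been added to `I`. -/
lemma condProb_not_exists_rectangle_le {T D I J : Finset ι} {ω : Sym2 ι → Bool} (hI : I ⊆ T)
    (hJ : J ⊆ T) (hD : Disjoint T D) {r : ℕ} {γ lam : ℝ} (hγ0 : 0 ≤ γ) (hγ : 2 * γ ≤ (#D : ℝ) - r)
    (h0 : 0 ≤ lam) (hlam : lam ≤ per ω I J ^ 2) :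
    condProb (T.sym2 : Set (Sym2 ι)) ω (fun η => ¬∃ I' ⊆ T, ∃ K ⊆ D, #I' = #I + r ∧ #K = r ∧
      lam * (γ ^ r / 2 ^ #D) ≤ per η I' (J ∪ K) ^ 2) ≤ 2 ^ r * (23 / 24) ^ (#T - #I) := by
  let F (T' : Finset ι) : Set (Sym2 ι) := {e | ∀ w ∉ T', ∀ d ∈ D, e ≠ s(w, d)}
  have hsym (T' : Finset ι) : (T.sym2 : Set (Sym2 ι)) ⊆ F T' := by
    rintro e he w - d hd rfl
    exact disjoint_right.1 hD hd (mk_mem_sym2_iff.1 (mem_coe.1 he)).2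
  have hF {T' I' : Finset ι} (hT' : T' ⊆ T) (hI' : I' ⊆ T') :
      ∀ i ∈ I', ∀ j ∈ J ∪ D, s(i, j) ∈ F T' := by
    rintro i hi j - w hw d hd h
    have := disjoint_left.1 hD (hT' (hI' hi))
    grind [Sym2.eq_iff]
  let P (T' : Finset ι) (R : ℕ) (η : Sym2 ι → Bool) : Prop := T' ⊆ T ∧ ∃ I' ⊆ T', ∃ k,
    k + R = r ∧ #I' = #I + k ∧ lam * γ ^ k ≤ sumSqPer D J k η I'
  refine condProb_le_of_forall (hsym I) fun η hη => ?_
  have key := condProb_trials (F := F) (P := P) (s := 1) (c := 1 / 12) (n := #(T \ I)) (ω := η)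
    (fun T₁ T₂ h e he w hw => he w fun hw' => hw (h hw')) (by norm_num) ?_ ?_ sdiff_subset
    disjoint_sdiff (one_mul _).symm
    ⟨hI, I, subset_rfl, 0, zero_add r, rfl, by
      rw [sumSqPer, powersetCard_zero, sum_singleton, union_empty, per_congr_sym2 hη hI hJ]
      simpa using hlam⟩
  · rw [card_sdiff_of_subset hI, union_sdiff_of_subset hI] at key
    norm_num only at key
    refine (condProb_mono fun ζ _ hnot => ?_).trans key
    rintro ⟨-, I', hI', k, rfl, hc, hsum⟩
    obtain ⟨K, hK, hKc, hper⟩ := exists_le_per_sq_of_le_sumSqPer (by positivity)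
      (by exact_mod_cast (by linarith : ((k + 0 : ℕ) : ℝ) ≤ #D)) hsum
    exact hnot ⟨I', hI', K, hK, hc, hKc, by rwa [← mul_div_assoc]⟩
  · rintro T' B R ζ hBT hTB hB ⟨hT', I', hI', k, hk, hc, hsum⟩
    obtain ⟨w, rfl⟩ := card_eq_one.1 hB
    have hw : w ∉ T' := disjoint_singleton_right.1 hTB
    refine (one_twelfth_le_condProb_sumSqPer (hD.mono_left hJ) (fun h => hw (hI' h)) (hF hT' hI')
      (fun j hj => hsym T' (mem_coe.2 (mk_mem_sym2_iff.2 ⟨hBT (mem_singleton_self w), hJ hj⟩)))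
      (fun d hd h => h w hw d hd rfl) hsum hγ0 ?_).trans (condProb_mono fun ξ _ hξ =>
        ⟨union_subset hT' hBT, insert w I', by grind, k + 1, by omega, by grind, ?_⟩)
    · have : (k : ℝ) ≤ r := by exact_mod_cast (by omega : k ≤ r)
      linarith
    · rwa [pow_succ, ← mul_assoc]
  · rintro T' B R ζ ζ' hBT - ⟨hT', I', hI', k, hk, hc, hsum⟩ hζ
    exact ⟨union_subset hT' hBT, I', hI'.trans subset_union_left, k, hk, hc, by
      rwa [sumSqPer_congr fun i hi j hj => hζ (hF hT' hI' i hi j hj)]⟩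

end Growth

section IteratedGrowth

variable {ι : Type*} [Fintype ι] [DecidableEq ι]

lemma uniformProb_not_exists_rectangle_le {s r : ℕ} {γ : ℝ} (hγ0 : 0 ≤ γ)
    (hγ : 2 * γ ≤ (s : ℝ) - r) (b : ℕ) {U : Finset ι} (hU : #U = (25 + b) * s) :
    uniformProb (fun ω : Sym2 ι → Bool => ¬∃ I ⊆ U, ∃ J ⊆ U, #I = b * r ∧ #J = b * r ∧
      (γ ^ r / 2 ^ s) ^ b ≤ per ω I J ^ 2) ≤ b * (2 ^ r * (23 / 24) ^ (25 * s)) := by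
  have hrs : r ≤ s := by exact_mod_cast (by linarith : (r : ℝ) ≤ s)
  induction b generalizing U with
  | zero =>
    have hempty (ω : Sym2 ι → Bool) : (γ ^ r / 2 ^ s) ^ 0 ≤ per ω ∅ ∅ ^ 2 := by
      simp [per, subperm_empty]
    refine (uniformProb_eq_zero fun ω => not_not.2 ?_).le.trans (by positivity)
    exact ⟨∅, empty_subset U, ∅, empty_subset U, by simp, by simp, hempty ω⟩
  | succ b ih =>
    obtain ⟨D, hDU, rfl⟩ := exists_subset_card_eq (s := U) (n := s) (by rw [hU]; nlinarith)
    have hT : #(U \ D) = (25 + b) * #D := by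
      rw [card_sdiff_of_subset hDU, hU, ← add_assoc, add_one_mul, Nat.add_sub_cancel]
    have hchain := condProb_not_chain (S' := ((U \ D).sym2 : Set (Sym2 ι))) (Set.empty_subset _)
      (ω := fun _ => true) (p := b * (2 ^ r * (23 / 24) ^ (25 * #D)))
      (q := 2 ^ r * (23 / 24) ^ (25 * #D))
      (G := fun ω => ∃ I ⊆ U \ D, ∃ J ⊆ U \ D, #I = b * r ∧ #J = b * r ∧
        (γ ^ r / 2 ^ #D) ^ b ≤ per ω I J ^ 2)
      (H := fun ω => ∃ I ⊆ U, ∃ J ⊆ U, #I = (b + 1) * r ∧ #J = (b + 1) * r ∧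
        (γ ^ r / 2 ^ #D) ^ (b + 1) ≤ per ω I J ^ 2)
      (by positivity) (by rw [condProb_empty]; exact ih hT) ?_
    · rw [condProb_empty] at hchain
      exact hchain.trans_eq (by push_cast; ring)
    · rintro η - ⟨I, hI, J, hJ, hIc, hJc, hper⟩
      refine (condProb_mono fun ζ _ hnot => ?_).trans
        ((condProb_not_exists_rectangle_le hI hJ sdiff_disjoint hγ0 hγ (by positivity)
          hper).trans ?_)
      · rintro ⟨I', hI', K, hK, hI'c, hKc, hle⟩
        refine hnot ⟨I', hI'.trans sdiff_subset, J ∪ K,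
          union_subset (hJ.trans sdiff_subset) (hK.trans hDU), ?_, ?_, by rwa [pow_succ]⟩
        · rw [hI'c, hIc, add_one_mul]
        · rw [card_union_of_disjoint (sdiff_disjoint.mono hJ hK), hJc, hKc, add_one_mul]
      · refine mul_le_mul_of_nonneg_left (pow_le_pow_of_le_one (by norm_num) (by norm_num) ?_)
          (by positivity)
        have : b * r ≤ b * #D := Nat.mul_le_mul_left _ hrs
        rw [hT, hIc, add_mul]
        omega

end IteratedGrowth

/-! ### Littlewood–Offord inequality -/

section LittlewoodOfford

/-- The largest point mass of the binomial distribution with `2 * n` trials, which is the bound in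
the Littlewood–Offord inequality for `2 * n` coefficients. -/
noncomputable def centralMass (n : ℕ) : ℝ := n.centralBinom / 4 ^ n

lemma centralMass_nonneg (n : ℕ) : 0 ≤ centralMass n := by unfold centralMass; positivity

lemma centralMass_succ (n : ℕ) :
    centralMass (n + 1) = centralMass n * ((2 * n + 1) / (2 * n + 2)) := by
  have h : ((n : ℝ) + 1) * (n + 1).centralBinom = 2 * (2 * n + 1) * n.centralBinom := by
    exact_mod_cast Nat.succ_mul_centralBinom_succ n
  unfold centralMass
  rw [pow_succ]
  field_simp
  linarith

lemma centralMass_sq_mul_le_one (n : ℕ) : centralMass n ^ 2 * (2 * n + 1) ≤ 1 := by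
  induction n with
  | zero => simp [centralMass]
  | succ n ih =>
    have hfactor : ((2 : ℝ) * n + 1) * (2 * n + 3) / (2 * n + 2) ^ 2 ≤ 1 := by
      rw [div_le_one (by positivity)]
      nlinarith
    calc centralMass (n + 1) ^ 2 * (2 * ((n + 1 : ℕ) : ℝ) + 1)
        = centralMass n ^ 2 * (2 * n + 1) * ((2 * n + 1) * (2 * n + 3) / (2 * n + 2) ^ 2) := by
          rw [centralMass_succ]
          push_cast
          field_simp
          ring
      _ ≤ 1 := mul_le_one₀ ih (by positivity) hfactor

lemma exists_centralMass_le {ε : ℝ} (hε : 0 < ε) : ∃ n : ℕ, centralMass n ≤ ε := by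
  obtain ⟨n, hn⟩ := exists_nat_gt (1 / ε ^ 2)
  refine ⟨n, le_of_not_gt fun h => ?_⟩
  have hsq : ε ^ 2 < centralMass n ^ 2 := by gcongr
  rw [div_lt_iff₀ (by positivity)] at hn
  nlinarith [centralMass_sq_mul_le_one n, (Nat.cast_nonneg n : (0 : ℝ) ≤ n)]

lemma isAntichain_abs_signed_sum_lt {κ : Type*} [Fintype κ] [DecidableEq κ] {a : κ → ℝ} {μ : ℝ}
    (ha : ∀ i, μ ≤ a i) (hμ : 0 ≤ μ) (c : ℝ) :
    IsAntichain (· ⊆ ·) {s : Finset κ | |c + ∑ i, a i * (if i ∈ s then 1 else -1)| < μ} := by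
  intro s hs t ht hne hst
  obtain ⟨i₀, hi₀t, hi₀s⟩ := exists_of_ssubset (hst.ssubset_of_ne hne)
  have hnonneg (i : κ) : 0 ≤ a i := hμ.trans (ha i)
  have hle : 2 * a i₀ ≤
      ∑ i, (a i * (if i ∈ t then 1 else -1) - a i * (if i ∈ s then 1 else -1)) := by
    refine le_trans (le_of_eq ?_) (single_le_sum (fun i _ => ?_) (mem_univ i₀))
    · simp only [hi₀t, hi₀s, if_true, if_false]
      ring
    · have := hnonneg i
      have := @hst i
      split_ifs <;> grind
  rw [sum_sub_distrib] at hle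
  rw [Set.mem_ofPred_eq, abs_lt] at hs ht
  linarith [hs.1, ht.2, ha i₀]

/-- After a change of signs, Sperner's theorem applies. -/
lemma uniformProb_abs_sum_lt_le {κ : Type*} [Fintype κ] [DecidableEq κ] {n : ℕ}
    (hn : Fintype.card κ = 2 * n) {a : κ → ℝ} {μ : ℝ} (ha : ∀ i, μ ≤ |a i|) (c : ℝ) :
    uniformProb (fun x : κ → Bool => |c + ∑ i, a i * rad (x i)| < μ) ≤ centralMass n := by
  classical
  rcases lt_or_ge μ 0 with hμ | hμ
  · rw [uniformProb_eq_zero fun x h => ((abs_nonneg _).trans_lt h).not_gt hμ]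
    exact centralMass_nonneg n
  let F (s : Finset κ) : ℝ := c + ∑ i, |a i| * (if i ∈ s then 1 else -1)
  let X (x : κ → Bool) : Finset κ := {i | x i = decide (0 ≤ a i)}
  have hFX (x : κ → Bool) : c + ∑ i, a i * rad (x i) = F (X x) := by
    refine congrArg (c + ·) (sum_congr rfl fun i _ => ?_)
    by_cases h0 : 0 ≤ a i
    · cases hx : x i <;> simp [X, h0, hx, rad, abs_of_nonneg h0]
    · cases hx : x i <;> simp [X, h0, hx, rad, abs_of_neg (not_le.1 h0)]
  have hXinj : Function.Injective X := fun x y h => by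
    ext i
    have hi : i ∈ X x ↔ i ∈ X y := by rw [h]
    simp only [X, mem_filter, mem_univ, true_and] at hi
    generalize decide (0 ≤ a i) = d at hi
    revert hi
    cases x i <;> cases y i <;> cases d <;> simp
  have hsperner : #({s | |F s| < μ} : Finset (Finset κ)) ≤ n.centralBinom := by
    have := IsAntichain.sperner (𝒜 := ({s | |F s| < μ} : Finset (Finset κ)))
      (by simpa only [coe_filter, mem_univ, true_and] using isAntichain_abs_signed_sum_lt ha hμ c)
    rwa [hn, Nat.mul_div_cancel_left n two_pos, ← Nat.centralBinom_eq_two_mul_choose] at this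
  have hcard : #({x | |c + ∑ i, a i * rad (x i)| < μ} : Finset (κ → Bool)) ≤ n.centralBinom :=
    (card_le_card_of_injOn X (fun x hx => by simpa [hFX] using hx) hXinj.injOn).trans hsperner
  rw [uniformProb_eq_card_div, Fintype.card_fun, hn, Fintype.card_bool, pow_mul, centralMass]
  norm_num
  gcongr

lemma uniformProb_abs_linear_lt_le {E κ : Type*} [Fintype E] [DecidableEq E]
    {e : κ → E} (he : Function.Injective e) {D A : Finset κ} (hAD : A ⊆ D) {n : ℕ}
    (hn : 2 * n ≤ #A) {b : κ → ℝ} {μ : ℝ} (hb : ∀ d ∈ A, μ ≤ |b d|) (c : ℝ) :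
    uniformProb (fun x : E → Bool => |c + ∑ d ∈ D, b d * rad (x (e d))| < μ) ≤ centralMass n := by
  classical
  obtain ⟨A', hA', hcard⟩ := exists_subset_card_eq hn
  let e' : A' → E := fun d => e d
  have he' : Function.Injective e' := he.comp Subtype.val_injective
  rw [← expect_condProb (Set.range e')ᶜ]
  refine expect_le univ_nonempty fun ω _ => ?_
  have hlin := uniformProb_abs_sum_lt_le (κ := A') (n := n) (by simp [hcard]) (a := fun d => b d)
    (fun d => hb d (hA' d.2)) (c + ∑ d ∈ D \ A', b d * rad (ω (e d)))
  rw [← uniformProb_comp_injective he'] at hlin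
  refine (uniformProb_mono fun ω' h => ?_).trans hlin
  convert h using 2
  rw [← sum_sdiff (hA'.trans hAD), ← add_assoc]
  congr 1
  · refine congrArg (c + ·) (sum_congr rfl fun d hd => ?_)
    rw [resample_of_mem]
    rintro ⟨a, ha⟩
    exact (mem_sdiff.1 hd).2 (he ha ▸ a.2)
  · rw [← sum_coe_sort A']
    refine sum_congr rfl fun d _ => ?_
    rw [resample_of_notMem (S := (Set.range e')ᶜ) fun h => h ⟨d, rfl⟩]
    rfl

end LittlewoodOfford

/-! ### Many large linear forms -/

section Rows

open Classical in
lemma uniformProb_card_filter_lt_le {Ω κ : Type*} [Fintype Ω] [Nonempty Ω] {R : Finset κ}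
    {good : κ → Ω → Prop} {q : ℝ} (hq0 : 0 ≤ q)
    (hq : ∀ a ∈ R, uniformProb (fun x => ¬good a x) ≤ q) {k : ℕ} (hk : 2 * k ≤ #R) :
    uniformProb (fun x => #{a ∈ R | good a x} < k) ≤ 2 * q := by
  rcases R.eq_empty_or_nonempty with rfl | hR
  · rw [uniformProb_eq_zero fun x h => by simp at hk; omega]
    positivity
  have : (0 : ℝ) < #R := by exact_mod_cast hR.card_pos
  have hbad (x : Ω) : ∑ a ∈ R, ind (¬good a x) = #R - #{a ∈ R | good a x} := by
    simp_rw [ind_not, sum_sub_distrib, ind, sum_boole, sum_const, nsmul_one]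
  have hmarkov := uniformProb_markov (f := fun x => ∑ a ∈ R, ind (¬good a x)) (c := #R / 2)
    (fun x => sum_nonneg fun a _ => ind_nonneg _) (by positivity)
  refine (uniformProb_mono fun x hx => ?_).trans (hmarkov.trans ?_)
  · have h1 : (#{a ∈ R | good a x} : ℝ) ≤ k := by exact_mod_cast hx.le
    have h2 : (2 : ℝ) * k ≤ #R := by exact_mod_cast hk
    rw [hbad]
    linarith
  · rw [div_le_iff₀ (by positivity), expect_sum_comm]
    calc ∑ a ∈ R, 𝔼 x, ind (¬good a x) ≤ #R • q := sum_le_card_nsmul _ _ _ hq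
      _ = 2 * q * (#R / 2) := by rw [nsmul_eq_mul]; ring

lemma exists_pairwise_not_of_card_filter_lt {κ : Type*} {r : κ → κ → Prop}
    [DecidableRel r] (hr : ∀ a b, r a b → r b a) {K : ℕ} (s : ℕ) {P : Finset κ} (hP : s * K ≤ #P)
    (hdeg : ∀ a ∈ P, #{b ∈ P | r a b} < K) (hK : 0 < K) :
    ∃ S ⊆ P, #S = s ∧ (S : Set κ).Pairwise fun a b => ¬r a b := by
  classical
  induction s generalizing P with
  | zero => exact ⟨∅, by simp, by simp, by simp⟩
  | succ s ih =>
    rw [add_one_mul] at hP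
    obtain ⟨a, ha⟩ := card_pos.1 (by omega : 0 < #P)
    let N : Finset κ := insert a {b ∈ P | r a b}
    have hN : N ⊆ P := insert_subset ha (filter_subset _ _)
    have hNc : #N ≤ K := (card_insert_le _ _).trans (hdeg a ha)
    obtain ⟨S, hSP, hSc, hS⟩ := ih (P := P \ N) (by rw [card_sdiff_of_subset hN]; omega) fun b hb =>
      (card_le_card (filter_subset_filter _ sdiff_subset)).trans_lt (hdeg b (mem_sdiff.1 hb).1)
    have hSN : ∀ b ∈ S, b ≠ a ∧ ¬r a b := fun b hb => by
      have := hSP hb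
      grind
    refine ⟨insert a S, insert_subset ha (hSP.trans sdiff_subset), ?_, ?_⟩
    · rw [card_insert_of_notMem fun h => (hSN a h).1 rfl, hSc]
    · rw [coe_insert, Set.pairwise_insert]
      exact ⟨hS, fun b hb _ => ⟨(hSN b hb).2, fun h => (hSN b hb).2 (hr _ _ h)⟩⟩

lemma le_abs_add_sum_of_diag {κ : Type*} {S : Finset κ} {a : κ} (ha : a ∈ S)
    {b : κ → ℝ} {x : κ → Bool} {c lam : ℝ} (h0 : 0 ≤ lam) (hdiag : lam ≤ |b a|)
    (hoff : ∀ d ∈ S, d ≠ a → |b d| ≤ lam / (4 * #S)) (hsign : 0 ≤ c * (b a * rad (x a))) :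
    lam / (4 * #S) ≤ |c + ∑ d ∈ S, b d * rad (x d)| := by
  classical
  have hS : (1 : ℝ) ≤ #S := by exact_mod_cast card_pos.2 ⟨a, ha⟩
  have hmain : lam ≤ |c + b a * rad (x a)| := calc
    lam ≤ |b a * rad (x a)| := by rwa [abs_mul, abs_rad, mul_one]
    _ ≤ |c + b a * rad (x a)| := sq_le_sq.1 (by nlinarith [sq_nonneg c])
  have hrest : |∑ d ∈ S.erase a, b d * rad (x d)| ≤ lam / 4 := calc
    _ ≤ ∑ d ∈ S.erase a, |b d * rad (x d)| := abs_sum_le_sum_abs _ _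
    _ ≤ #(S.erase a) • (lam / (4 * #S)) := sum_le_card_nsmul _ _ _ fun d hd => by
      rw [abs_mul, abs_rad, mul_one]
      exact hoff d (mem_of_mem_erase hd) (ne_of_mem_erase hd)
    _ ≤ #S * (lam / (4 * #S)) := by
      rw [nsmul_eq_mul]
      gcongr
      exact erase_subset _ _
    _ = lam / 4 := by field_simp
  have hlam : lam / (4 * #S) ≤ lam / 4 := by
    gcongr
    linarith
  have htri := abs_sub_abs_le_abs_add (c + b a * rad (x a)) (∑ d ∈ S.erase a, b d * rad (x d))
  rw [← add_sum_erase _ _ ha, ← add_assoc]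
  linarith

variable {E κ : Type*} [Fintype E] [DecidableEq E] {e : κ → E}

/-- The number of agreements is determined by a linear form in random signs, whose second moment is
the number of coordinates. -/
lemma uniformProb_card_agree_lt_le (he : Function.Injective e) {S : Finset κ} (hS : S.Nonempty)
    {k : ℕ} (hk : 4 * k ≤ #S) (g : κ → Bool) :
    uniformProb (fun x : E → Bool => #{a ∈ S | x (e a) = g a} < k) ≤ 4 / #S := by
  have : (0 : ℝ) < #S := by exact_mod_cast hS.card_pos
  have hagree (b b' : Bool) : rad b' * rad b = 2 * (if b = b' then 1 else 0) - 1 := by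
    cases b <;> cases b' <;> norm_num [rad]
  have hsum (x : E → Bool) :
      ∑ d ∈ S, rad (g d) * rad (x (e d)) = 2 * #{a ∈ S | x (e a) = g a} - #S := by
    simp_rw [hagree, sum_sub_distrib, ← mul_sum, sum_boole, sum_const, nsmul_one]
  have hmoment : 𝔼 x : E → Bool, (∑ d ∈ S, rad (g d) * rad (x (e d))) ^ 2 = #S := by
    simpa [sq, rad_mul_self] using expect_affine_sq he S 0 fun d => rad (g d)
  have hmarkov := uniformProb_markov
    (fun x : E → Bool => sq_nonneg (∑ d ∈ S, rad (g d) * rad (x (e d))))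
    (c := (#S : ℝ) ^ 2 / 4) (by positivity)
  rw [hmoment] at hmarkov
  refine (uniformProb_mono fun x hx => ?_).trans (hmarkov.trans_eq (by field_simp))
  have h1 : (#{a ∈ S | x (e a) = g a} : ℝ) ≤ k := by exact_mod_cast hx.le
  have h2 : (4 : ℝ) * k ≤ #S := by exact_mod_cast hk
  rw [hsum]
  nlinarith

open Classical in
/-- Each row whose diagonal sign is right is large, and about half of the rows are such. -/
lemma uniformProb_card_large_rows_lt_of_diag (he : Function.Injective e) {D S : Finset κ}
    (hSD : S ⊆ D) (hS : S.Nonempty) {k : ℕ} (hk : 4 * k ≤ #S) {B : κ → κ → ℝ} {lam : ℝ}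
    (h0 : 0 ≤ lam) (hdiag : ∀ a ∈ S, lam ≤ |B a a|)
    (hoff : (S : Set κ).Pairwise fun a b => |B a b| ≤ lam / (4 * #S)) :
    uniformProb (fun x : E → Bool =>
      #{a ∈ S | lam / (4 * #S) ≤ |∑ d ∈ D, B a d * rad (x (e d))|} < k) ≤ 4 / #S := by
  rw [← expect_condProb (e '' (S : Set κ))ᶜ]
  refine expect_le univ_nonempty fun ω _ => ?_
  let c (a : κ) : ℝ := ∑ d ∈ D \ S, B a d * rad (ω (e d))
  have hsplit (ω' : E → Bool) (a : κ) :
      ∑ d ∈ D, B a d * rad (resample (e '' (S : Set κ))ᶜ ω ω' (e d)) =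
      c a + ∑ d ∈ S, B a d * rad (ω' (e d)) := by
    rw [← sum_sdiff hSD]
    congr 1
    · refine sum_congr rfl fun d hd => ?_
      rw [resample_of_mem (by simpa [he.eq_iff] using (mem_sdiff.1 hd).2)]
    · refine sum_congr rfl fun d hd => ?_
      rw [resample_of_notMem (S := (e '' (S : Set κ))ᶜ) fun h => h ⟨d, hd, rfl⟩]
  refine (uniformProb_mono fun ω' hlt => ?_).trans
    (uniformProb_card_agree_lt_le he hS hk fun a => decide (0 ≤ c a * B a a))
  refine (card_le_card fun a ha => ?_).trans_lt hlt
  rw [mem_filter] at ha ⊢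
  rw [hsplit]
  refine ⟨ha.1, le_abs_add_sum_of_diag (x := fun d => ω' (e d)) ha.1 h0 (hdiag a ha.1)
    (fun d hd hda => hoff ha.1 hd hda.symm) ?_⟩
  rw [ha.2, ← mul_assoc]
  by_cases h : 0 ≤ c a * B a a
  · simp [h, rad]
  · simp [h, rad, (not_le.1 h).le]

open Classical in
/-- Either many rows have many large entries, so that the Littlewood–Offord inequality applies to
them, or there is a block in which the diagonal dominates. -/
lemma uniformProb_card_large_rows_lt (he : Function.Injective e) {D H : Finset κ} (hHD : H ⊆ D)
    {s k K : ℕ} (hs0 : 0 < s) (hK0 : 0 < K) (hk : 4 * k ≤ s) (hH : 2 * k + s * (2 * K) ≤ #H)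
    {B : κ → κ → ℝ} (hB : ∀ a b, B a b = B b a) {lam : ℝ} (h0 : 0 ≤ lam)
    (hdiag : ∀ a ∈ H, lam ≤ |B a a|) :
    uniformProb (fun x : E → Bool =>
      #{a ∈ D | lam / (4 * s) ≤ |∑ d ∈ D, B a d * rad (x (e d))|} < k) ≤
    2 * centralMass K + 4 / s := by
  set μ : ℝ := lam / (4 * s)
  let R : Finset κ := {a ∈ H | 2 * K ≤ #{b ∈ D | μ ≤ |B a b|}}
  have hRH : R ⊆ H := filter_subset _ _
  have hrestrict {S : Finset κ} (hS : S ⊆ D) : uniformProb (fun x : E → Bool =>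
      #{a ∈ D | μ ≤ |∑ d ∈ D, B a d * rad (x (e d))|} < k) ≤ uniformProb (fun x : E → Bool =>
      #{a ∈ S | μ ≤ |∑ d ∈ D, B a d * rad (x (e d))|} < k) :=
    uniformProb_mono fun x h => (card_le_card (filter_subset_filter _ hS)).trans_lt h
  have hmass := centralMass_nonneg K
  rcases le_or_gt (2 * k) #R with hcase | hcase
  · have hrow : ∀ a ∈ R, uniformProb (fun x : E → Bool =>
        ¬μ ≤ |∑ d ∈ D, B a d * rad (x (e d))|) ≤ centralMass K := fun a ha => by
      simpa only [zero_add, not_le] using uniformProb_abs_linear_lt_le he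
        (filter_subset (fun b => μ ≤ |B a b|) D) (mem_filter.1 ha).2
        (fun d hd => (mem_filter.1 hd).2) 0
    have := uniformProb_card_filter_lt_le hmass hrow hcase
    have : (0 : ℝ) ≤ 4 / s := by positivity
    linarith [hrestrict (hRH.trans hHD)]
  · have hdeg : ∀ a ∈ H \ R, #{b ∈ H \ R | μ ≤ |B a b|} < 2 * K := fun a ha =>
      (card_le_card (filter_subset_filter _ (sdiff_subset.trans hHD))).trans_lt (by grind)
    obtain ⟨S, hSP, rfl, hS⟩ := exists_pairwise_not_of_card_filter_lt
      (r := fun a b => μ ≤ |B a b|) (fun a b => (congrArg (μ ≤ |·|) (hB a b)).mp) s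
      (by rw [card_sdiff_of_subset hRH]; omega) hdeg (by omega)
    have hSH : S ⊆ H := hSP.trans sdiff_subset
    have := uniformProb_card_large_rows_lt_of_diag he (hSH.trans hHD) (card_pos.1 hs0) hk h0
      (fun a ha => hdiag a (hSH ha)) (hS.mono' fun a b h => (not_le.1 h).le)
    linarith [hrestrict (hSH.trans hHD)]

end Rows

/-! ### Rectangles from many large principal minors -/

section OffDiagonal

variable {ι : Type*} [Fintype ι] [DecidableEq ι]

/-- First the row of `p` makes many of the permanents of `C` against `C ∪ {p}` minus an index of `C`
large; these are the coefficients of the linear form in the row of `q`. -/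
lemma condProb_abs_per_insert_insert_lt_le {C H : Finset ι} {p q : ι} (hpq : p ≠ q) (hp : p ∉ C)
    (hq : q ∉ C) (hHC : H ⊆ C) {s K K' : ℕ} (hs0 : 0 < s) (hK0 : 0 < K) (hk : 8 * K' ≤ s)
    (hH : 4 * K' + s * (2 * K) ≤ #H) (ω : Sym2 ι → Bool) {lam : ℝ} (h0 : 0 ≤ lam)
    (hdiag : ∀ a ∈ H, lam ≤ |per ω (C.erase a) (C.erase a)|) :
    condProb C.sym2 ω (fun η => ¬lam / (4 * s) ≤ |per η (insert q C) (insert p C)|) ≤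
      2 * centralMass K + 4 / s + centralMass K' := by
  have hsub : (C.sym2 : Set (Sym2 ι)) ⊆ {e | q ∉ e} := fun e he hqe => hq (mem_sym2_iff.1 he q hqe)
  refine condProb_not_chain (p := 2 * centralMass K + 4 / s) (q := centralMass K') hsub
    (G := fun η => ¬#{a ∈ C | lam / (4 * s) ≤ |per η C ((insert p C).erase a)|} < 2 * K')
    (H := fun η => lam / (4 * s) ≤ |per η (insert q C) (insert p C)|)
    (centralMass_nonneg K') ?_ ?_
  · have hexpand (ω' : Sym2 ι → Bool) {a : ι} (ha : a ∈ C) :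
        per (resample (C.sym2 : Set (Sym2 ι)) ω ω') C ((insert p C).erase a) =
          ∑ b ∈ C, per ω (C.erase a) (C.erase b) * rad (ω' s(p, b)) := by
      rw [erase_insert_of_ne (by grind), per_comm, per_insert _ (by grind)]
      refine sum_congr rfl fun b _ => ?_
      rw [mul_comm, per_congr_sym2 (resample_eqOn _ ω ω') (erase_subset a C) (erase_subset b C),
        resample_of_notMem fun h => hp (mk_mem_sym2_iff.1 (mem_coe.1 h)).1]
    refine (uniformProb_mono fun ω' h => ?_).trans (uniformProb_card_large_rows_lt
      (fun _ _ => Sym2.congr_right.1) hHC hs0 hK0 (by omega : 4 * (2 * K') ≤ s) (by omega)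
      (fun a b => per_comm ω (C.erase a) (C.erase b)) h0 hdiag (e := fun b => s(p, b)))
    convert not_not.1 h using 4 with a ha
    rw [hexpand ω' ha]
  · intro η _ hG
    refine (uniformProb_mono fun ω' h => ?_).trans (uniformProb_abs_linear_lt_le
      (e := fun a => s(q, a)) (fun _ _ => Sym2.congr_right.1)
      ((filter_subset _ _).trans (subset_insert p C)) (not_lt.1 hG)
      (fun a ha => (mem_filter.1 ha).2) 0)
    have hexpand : per (resample {e | q ∉ e} η ω') (insert q C) (insert p C) =
        ∑ a ∈ insert p C, per η C ((insert p C).erase a) * rad (ω' s(q, a)) := by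
      rw [per_insert _ hq]
      refine sum_congr rfl fun a _ => ?_
      rw [mul_comm, resample_of_notMem (S := {e | q ∉ e}) fun h => h (Sym2.mem_mk_left q a)]
      congr 1
      refine per_congr fun i hi j hj => resample_of_mem (S := {e | q ∉ e}) (fun hmem => ?_) η ω'
      rcases Sym2.mem_iff.1 hmem with rfl | rfl <;> grind
    rw [zero_add, ← hexpand]
    exact not_le.1 h

end OffDiagonal

/-! ### Quadratic forms in random signs -/

section QuadraticForm

lemma uniformProb_sq_le {E β : Type*} [Fintype E] [DecidableEq E] [Fintype β] [Nonempty β]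
    (S : Set E) (P : (E → β) → Prop) :
    uniformProb P ^ 2 ≤
      𝔼 y', 𝔼 y, uniformProb fun x => P (resample S x y) ∧ P (resample S x y') := by
  calc uniformProb P ^ 2 = (𝔼 x, condProb S x P) ^ 2 := by rw [expect_condProb]
    _ ≤ 𝔼 x, condProb S x P ^ 2 := sq_expect_le _
    _ = 𝔼 x, 𝔼 y', 𝔼 y, ind (P (resample S x y) ∧ P (resample S x y')) := by
        refine expect_congr rfl fun x _ => ?_
        rw [sq, condProb, uniformProb, expect_mul_expect, expect_comm]
        refine expect_congr rfl fun y' _ => expect_congr rfl fun y _ => ?_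
        exact (ind_and _ _).symm
    _ = 𝔼 y', 𝔼 y, uniformProb fun x => P (resample S x y) ∧ P (resample S x y') := by
        rw [expect_comm]
        exact expect_congr rfl fun y' _ => expect_comm _ _ _

variable {ι : Type*} [DecidableEq ι]

/-- The quadratic form with coefficients `f` in the signs indexed by `A`. -/
noncomputable def quadForm (f : ι → ι → ℝ) (A : Finset ι) (x : ι → Bool) : ℝ :=
  ∑ q ∈ A, ∑ p ∈ A, rad (x q) * rad (x p) * f p q

lemma sum_sum_union_of_symm {X Y : Finset ι} (hXY : Disjoint X Y) {g : ι → ι → ℝ}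
    (hg : ∀ p q, g p q = g q p) :
    ∑ q ∈ X ∪ Y, ∑ p ∈ X ∪ Y, g p q =
      ∑ q ∈ X, ∑ p ∈ X, g p q + ∑ q ∈ Y, ∑ p ∈ Y, g p q + 2 * ∑ p ∈ X, ∑ q ∈ Y, g p q := by
  have hcross : ∑ q ∈ X, ∑ p ∈ Y, g p q = ∑ p ∈ X, ∑ q ∈ Y, g p q := by simp_rw [hg]
  simp_rw [sum_union hXY, sum_add_distrib]
  rw [hcross, sum_comm (s := Y) (t := X)]
  ring

lemma quadForm_union_sub {X Y : Finset ι} (hXY : Disjoint X Y) {f : ι → ι → ℝ}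
    (hf : ∀ a b, f a b = f b a) {z z' : ι → Bool} (hz : ∀ p ∈ X, z p = z' p) :
    quadForm f (X ∪ Y) z - quadForm f (X ∪ Y) z' = quadForm f Y z - quadForm f Y z' +
      ∑ p ∈ X, 2 * (-∑ q ∈ Y, f p q * rad (z' q) + ∑ q ∈ Y, f p q * rad (z q)) * rad (z p) := by
  have hexpand (z : ι → Bool) : quadForm f (X ∪ Y) z = quadForm f X z + quadForm f Y z +
      2 * ∑ p ∈ X, ∑ q ∈ Y, rad (z q) * rad (z p) * f p q :=
    sum_sum_union_of_symm hXY fun p q => by rw [hf p q, mul_comm (rad _)]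
  have hX : quadForm f X z = quadForm f X z' :=
    sum_congr rfl fun q hq => sum_congr rfl fun p hp => by rw [hz q hq, hz p hp]
  have hcross : ∑ p ∈ X, 2 * (-∑ q ∈ Y, f p q * rad (z' q) + ∑ q ∈ Y, f p q * rad (z q)) *
        rad (z p) =
      2 * ∑ p ∈ X, ∑ q ∈ Y, rad (z q) * rad (z p) * f p q -
        2 * ∑ p ∈ X, ∑ q ∈ Y, rad (z' q) * rad (z' p) * f p q := by
    rw [← mul_sub, ← sum_sub_distrib, mul_sum]
    refine sum_congr rfl fun p hp => ?_
    rw [← hz p hp, ← sum_sub_distrib, ← sum_neg_distrib, ← sum_add_distrib, mul_assoc, sum_mul]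
    exact congrArg (2 * ·) (sum_congr rfl fun q _ => by ring)
  rw [hexpand, hexpand, hX, hcross]
  ring

lemma quadForm_resample_sub {X Y : Finset ι} (hXY : Disjoint X Y) {f : ι → ι → ℝ}
    (hf : ∀ a b, f a b = f b a) (x y y' : ι → Bool) :
    quadForm f (X ∪ Y) (resample (Y : Set ι)ᶜ x y) -
        quadForm f (X ∪ Y) (resample (Y : Set ι)ᶜ x y') =
      quadForm f Y y - quadForm f Y y' +
        ∑ p ∈ X, 2 * (-∑ q ∈ Y, f p q * rad (y' q) + ∑ q ∈ Y, f p q * rad (y q)) * rad (x p) := by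
  let S : Set ι := (Y : Set ι)ᶜ
  have hX {p : ι} (hp : p ∈ X) (y : ι → Bool) : resample S x y p = x p :=
    resample_of_mem (S := S) (disjoint_left.1 hXY hp) x y
  have hY {q : ι} (hq : q ∈ Y) (y : ι → Bool) : resample S x y q = y q :=
    resample_of_notMem (S := S) (fun h => h hq) x y
  have hquad (y : ι → Bool) : quadForm f Y (resample S x y) = quadForm f Y y :=
    sum_congr rfl fun q hq => sum_congr rfl fun p hp => by rw [hY hq, hY hp]
  have hlin (y : ι → Bool) (p : ι) :
      ∑ q ∈ Y, f p q * rad (resample S x y q) = ∑ q ∈ Y, f p q * rad (y q) :=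
    sum_congr rfl fun q hq => by rw [hY hq]
  rw [quadForm_union_sub hXY hf fun p hp => (hX hp y).trans (hX hp y').symm, hquad, hquad]
  congr 1
  exact sum_congr rfl fun p hp => by rw [hX hp, hlin, hlin]

variable [Fintype ι]

/-- Decoupling: the coordinates in `Y` are resampled, and the difference of the two values is a
linear form in the coordinates in `X`. -/
lemma uniformProb_abs_quadForm_lt_sq_le {w : ι} {X Y : Finset ι} (hXY : Disjoint X Y)
    (hw : w ∉ Y) {f : ι → ι → ℝ} (hf : ∀ a b, f a b = f b a) {c μ : ℝ} {K : ℕ} {R : Finset ι}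
    (hRX : R ⊆ X) (hR : 2 * (2 * K) ≤ #R)
    (hRY : ∀ p ∈ R, ∃ A ⊆ Y, 2 * K ≤ #A ∧ ∀ q ∈ A, μ ≤ |f p q|) :
    uniformProb (fun x => |c * rad (x w) + quadForm f (X ∪ Y) x| < μ) ^ 2 ≤
      3 * centralMass K := by
  let S : Set ι := (Y : Set ι)ᶜ
  refine (uniformProb_sq_le S _).trans (expect_le univ_nonempty fun y' _ => ?_)
  let lin (y : ι → Bool) (p : ι) : ℝ := -∑ q ∈ Y, f p q * rad (y' q) + ∑ q ∈ Y, f p q * rad (y q)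
  have hdiff (x y : ι → Bool) :
      (c * rad (resample S x y w) + quadForm f (X ∪ Y) (resample S x y)) -
        (c * rad (resample S x y' w) + quadForm f (X ∪ Y) (resample S x y')) =
      (quadForm f Y y - quadForm f Y y') + ∑ p ∈ X, 2 * lin y p * rad (x p) := by
    rw [resample_of_mem (S := S) hw, resample_of_mem (S := S) hw, add_sub_add_left_eq_sub,
      quadForm_resample_sub hXY hf]
  have hlight : uniformProb (fun y => #{p ∈ R | μ ≤ |lin y p|} < 2 * K) ≤ 2 * centralMass K := by
    refine uniformProb_card_filter_lt_le (centralMass_nonneg K) (fun p hp => ?_) hR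
    obtain ⟨A, hA, hAc, hAf⟩ := hRY p hp
    simp_rw [not_le]
    exact uniformProb_abs_linear_lt_le (e := id) Function.injective_id hA hAc hAf _
  have hcond (y : ι → Bool) : uniformProb (fun x =>
      |c * rad (resample S x y w) + quadForm f (X ∪ Y) (resample S x y)| < μ ∧
        |c * rad (resample S x y' w) + quadForm f (X ∪ Y) (resample S x y')| < μ) ≤
      ind (#{p ∈ R | μ ≤ |lin y p|} < 2 * K) + centralMass K := by
    by_cases h : #{p ∈ R | μ ≤ |lin y p|} < 2 * K
    · rw [ind_of_true h]
      exact (uniformProb_le_one _).trans (le_add_of_nonneg_right (centralMass_nonneg K))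
    rw [ind_of_false h, zero_add]
    refine (uniformProb_mono fun x hx => ?_).trans (uniformProb_abs_linear_lt_le (e := id)
      (μ := 2 * μ) (b := fun p => 2 * lin y p) Function.injective_id
      ((filter_subset (fun p => μ ≤ |lin y p|) R).trans hRX) (not_lt.1 h) (fun p hp => ?_)
      (quadForm f Y y - quadForm f Y y'))
    · simp only [id, ← hdiff]
      exact (abs_sub _ _).trans_lt (by linarith [hx.1, hx.2])
    · rw [abs_mul, abs_two]
      linarith [(mem_filter.1 hp).2]
  calc _ ≤ 𝔼 y, (ind (#{p ∈ R | μ ≤ |lin y p|} < 2 * K) + centralMass K) :=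
        expect_le_expect fun y _ => hcond y
    _ ≤ 2 * centralMass K + centralMass K := by
        rw [expect_add_distrib, Fintype.expect_const]
        exact add_le_add_left hlight _
    _ = 3 * centralMass K := by ring

end QuadraticForm

/-! ### Quadratic forms with a dense set of large coefficients -/

section Dense

lemma half_le_uniformProb_half_le {Ω : Type*} [Fintype Ω] [Nonempty Ω] {u : Ω → ℝ}
    (hu : ∀ a, u a ≤ 1) {ρ : ℝ} (hρ0 : 0 ≤ ρ) (hρ : ρ ≤ 𝔼 a, u a) :
    ρ / 2 ≤ uniformProb fun a => ρ / 2 ≤ u a := by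
  have hle : 𝔼 a, u a ≤ 𝔼 a, (ind (ρ / 2 ≤ u a) + ρ / 2) := expect_le_expect fun a _ => by
    by_cases h : ρ / 2 ≤ u a
    · rw [ind_of_true h]; linarith [hu a]
    · rw [ind_of_false h]; linarith
  rw [expect_add_distrib, Fintype.expect_const] at hle
  linarith [uniformProb.eq_1 fun a => ρ / 2 ≤ u a]

variable {β : Type*} [Fintype β]

/-- A uniformly random set of indices separates each ordered pair with probability `1 / 4`. -/
lemma exists_split {P : β → β → Prop} (hP : ∀ p q, P p q → p ≠ q) {ρ : ℝ}
    (hρ : ρ ≤ 𝔼 p, uniformProb (P p)) :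
    ∃ Z : Finset β, ρ / 4 ≤ 𝔼 p, uniformProb fun q => p ∈ Z ∧ q ∉ Z ∧ P p q := by
  classical
  have hpair (p q : β) : ind (P p q) / 4 ≤
      uniformProb fun z : β → Bool => z p = true ∧ ¬z q = true ∧ P p q := by
    by_cases h : P p q
    · calc ind (P p q) / 4 = (1 / 2) ^ #{p, q} := by
            rw [ind_of_true h, card_pair (hP p q h)]; norm_num
        _ = uniformProb fun z => Set.EqOn z (fun b => decide (b = p)) ↑({p, q} : Finset β) :=
            (uniformProb_eqOn _ _).symm
        _ ≤ _ := uniformProb_mono fun z hz => by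
            simp [hz (by simp : p ∈ _), hz (by simp : q ∈ _), (hP p q h).symm, h]
    · rw [ind_of_false h, zero_div]
      exact uniformProb_nonneg _
  have hmean : ρ / 4 ≤ 𝔼 z : β → Bool, 𝔼 p, uniformProb fun q =>
      z p = true ∧ ¬z q = true ∧ P p q := by
    calc ρ / 4 ≤ 𝔼 p, 𝔼 q, ind (P p q) / 4 := by
          simp_rw [← expect_div]
          exact div_le_div_of_nonneg_right hρ (by norm_num)
      _ ≤ 𝔼 p, 𝔼 q, uniformProb fun z : β → Bool => z p = true ∧ ¬z q = true ∧ P p q :=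
          expect_le_expect fun p _ => expect_le_expect fun q _ => hpair p q
      _ = _ := by
          unfold uniformProb
          rw [expect_comm (s := (univ : Finset (β → Bool)))]
          exact expect_congr rfl fun p _ => expect_comm _ _ _
  obtain ⟨z, -, hz⟩ := exists_le_of_le_expect univ_nonempty hmean
  exact ⟨univ.filter (z · = true), by simpa only [mem_filter_univ] using hz⟩

variable {ι : Type*} [Fintype ι] [DecidableEq ι] [Nonempty β] {j : β → ι}

lemma uniformProb_abs_quadForm_lt_sq_le_of_dense (hj : Function.Injective j) {A : Finset ι}
    {w : ι} (hw : w ∉ A) {f : ι → ι → ℝ} (hf : ∀ a b, f a b = f b a) {c μ ρ : ℝ} {K : ℕ}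
    (hρ0 : 0 < ρ) (hK : 32 * (K : ℝ) ≤ ρ * Fintype.card β)
    (hρ : ρ ≤ 𝔼 p, uniformProb fun q => p ≠ q ∧ j p ∈ A ∧ j q ∈ A ∧ μ ≤ |f (j p) (j q)|) :
    uniformProb (fun x => |c * rad (x w) + quadForm f A x| < μ) ^ 2 ≤ 3 * centralMass K := by
  classical
  obtain ⟨Z, hZ⟩ := exists_split (fun p q h => h.1) hρ
  let heavy (p q : β) : Prop :=
    p ∈ Z ∧ q ∉ Z ∧ p ≠ q ∧ j p ∈ A ∧ j q ∈ A ∧ μ ≤ |f (j p) (j q)|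
  have hβ : (0 : ℝ) < Fintype.card β := by exact_mod_cast Fintype.card_pos
  let R : Finset β := {p | ρ / 4 / 2 ≤ uniformProb (heavy p)}
  have hR : 4 * K ≤ #R := by
    have h := half_le_uniformProb_half_le (fun p => uniformProb_le_one _) (by linarith) hZ
    rw [uniformProb_eq_card_div, le_div_iff₀ hβ] at h
    exact_mod_cast (by linarith : (4 * K : ℝ) ≤ #R)
  have hrow {p : β} (hp : p ∈ R) : 4 * K ≤ #{q | heavy p q} := by
    have h := (mem_filter.1 hp).2
    rw [uniformProb_eq_card_div, le_div_iff₀ hβ] at h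
    exact_mod_cast (by linarith : (4 * K : ℝ) ≤ #{q | heavy p q})
  have hne {p : β} (hp : p ∈ R) : ∃ q, heavy p q := by
    by_contra! hcon
    have h := (mem_filter.1 hp).2
    rw [uniformProb_eq_zero hcon] at h
    linarith
  let X : Finset ι := {i ∈ A | ∃ p ∈ Z, j p = i}
  rw [← union_sdiff_of_subset (filter_subset _ _ : X ⊆ A)]
  refine uniformProb_abs_quadForm_lt_sq_le (R := R.image j) disjoint_sdiff
    (fun h => hw (mem_sdiff.1 h).1) hf (fun i hi => ?_) ?_ fun i hi => ?_
  · obtain ⟨p, hp, rfl⟩ := mem_image.1 hi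
    obtain ⟨q, hpZ, -, -, hpA, -⟩ := hne hp
    exact mem_filter.2 ⟨hpA, p, hpZ, rfl⟩
  · rw [card_image_of_injective _ hj]
    omega
  · obtain ⟨p, hp, rfl⟩ := mem_image.1 hi
    refine ⟨({q | heavy p q} : Finset β).image j, fun i hi => ?_, ?_, fun i hi => ?_⟩
    · obtain ⟨q, hq, rfl⟩ := mem_image.1 hi
      obtain ⟨-, hqZ, -, -, hqA, -⟩ := (mem_filter.1 hq).2
      refine mem_sdiff.2 ⟨hqA, fun h => ?_⟩
      obtain ⟨-, q', hq', he⟩ := mem_filter.1 h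
      exact hqZ (hj he ▸ hq')
    · rw [card_image_of_injective _ hj]
      have := hrow hp
      omega
    · obtain ⟨q, hq, rfl⟩ := mem_image.1 hi
      exact (mem_filter.1 hq).2.2.2.2.2.2

lemma condProb_abs_per_insert_lt_sq_le_of_dense (hj : Function.Injective j) {A : Finset ι} {w : ι}
    (hw : w ∉ A) (ω : Sym2 ι → Bool) {μ ρ : ℝ} {K : ℕ} (hρ0 : 0 < ρ)
    (hK : 32 * (K : ℝ) ≤ ρ * Fintype.card β)
    (hρ : ρ ≤ 𝔼 p, uniformProb fun q =>
      p ≠ q ∧ j p ∈ A ∧ j q ∈ A ∧ μ ≤ |per ω (A.erase (j p)) (A.erase (j q))|) :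
    condProb A.sym2 ω (fun η => |per η (insert w A) (insert w A)| < μ) ^ 2 ≤
      3 * centralMass K := by
  refine le_of_eq_of_le ?_ (uniformProb_abs_quadForm_lt_sq_le_of_dense (c := per ω A A) hj hw
    (f := fun a b => per ω (A.erase a) (A.erase b)) (fun a b => per_comm _ _ _) hρ0 hK hρ)
  rw [← uniformProb_comp_injective (e := fun i => s(w, i)) fun _ _ => Sym2.congr_right.1]
  unfold condProb
  congr! 3 with ω'
  beta_reduce
  have hrow (i : ι) : resample (A.sym2 : Set (Sym2 ι)) ω ω' s(w, i) = ω' s(w, i) :=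
    resample_of_notMem (fun h => hw (mk_mem_sym2_iff.1 (mem_coe.1 h)).1) ω ω'
  have hper {I J : Finset ι} : I ⊆ A → J ⊆ A → per (resample (A.sym2 : Set (Sym2 ι)) ω ω') I J =
      per ω I J := per_congr_sym2 (resample_eqOn _ ω ω')
  rw [per_insert_insert _ hw hw, hper subset_rfl subset_rfl, mul_comm]
  simp only [hrow, hper (erase_subset _ A) (erase_subset _ A), quadForm, Function.comp_apply]

end Dense

/-! ### Densities of large principal minors -/

section DeletionMean

variable {ι β : Type*} [DecidableEq ι] [Fintype β]

/-- The average of `h (A \ {j b₁, …, j bₘ})` over `b₁, …, bₘ`, where the tuples for which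
`j b₁, …, j bₘ` are not distinct elements of `A` contribute `0`. -/
noncomputable def deletionMean (j : β → ι) : ℕ → (Finset ι → ℝ) → Finset ι → ℝ
  | 0, h, A => h A
  | m + 1, h, A => 𝔼 b, ind (j b ∈ A) * deletionMean j m h (A.erase (j b))

variable {j : β → ι}

lemma deletionMean_mono {h h' : Finset ι → ℝ} (m : ℕ) {A : Finset ι}
    (hh : ∀ A' ⊆ A, h A' ≤ h' A') : deletionMean j m h A ≤ deletionMean j m h' A := by
  induction m generalizing A with
  | zero => exact hh A subset_rfl
  | succ m ih =>
    exact expect_le_expect fun b _ => mul_le_mul_of_nonneg_left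
      (ih fun A' hA' => hh A' (hA'.trans (erase_subset _ _))) (ind_nonneg _)

lemma deletionMean_congr {h h' : Finset ι → ℝ} (m : ℕ) {A : Finset ι}
    (hh : ∀ A' ⊆ A, h A' = h' A') : deletionMean j m h A = deletionMean j m h' A :=
  (deletionMean_mono m fun A' hA' => (hh A' hA').le).antisymm
    (deletionMean_mono m fun A' hA' => (hh A' hA').ge)

lemma deletionMean_add (h h' : Finset ι → ℝ) (m : ℕ) (A : Finset ι) :
    deletionMean j m (fun A' => h A' + h' A') A = deletionMean j m h A + deletionMean j m h' A := by
  induction m generalizing A with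
  | zero => rfl
  | succ m ih => simp only [deletionMean, ih, mul_add, expect_add_distrib]

lemma deletionMean_const_le {c : ℝ} (hc : 0 ≤ c) (m : ℕ) (A : Finset ι) :
    deletionMean j m (fun _ => c) A ≤ c := by
  induction m generalizing A with
  | zero => exact le_rfl
  | succ m ih =>
    calc deletionMean j (m + 1) (fun _ => c) A ≤ 𝔼 _b : β, c :=
          expect_le_expect fun b _ =>
            (mul_le_mul_of_nonneg_left (ih _) (ind_nonneg _)).trans
              (mul_le_of_le_one_left hc (ind_le_one _))
      _ ≤ c := by
          cases isEmpty_or_nonempty β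
          · simpa using hc
          · rw [Fintype.expect_const]

lemma deletionMean_nonneg {h : Finset ι → ℝ} (hh : ∀ A, 0 ≤ h A) (m : ℕ) (A : Finset ι) :
    0 ≤ deletionMean j m h A := by
  induction m generalizing A with
  | zero => exact hh A
  | succ m ih => exact expect_nonneg fun b _ => mul_nonneg (ind_nonneg _) (ih _)

lemma deletionMean_add_left (h : Finset ι → ℝ) (m k : ℕ) (A : Finset ι) :
    deletionMean j (m + k) h A = deletionMean j m (deletionMean j k h) A := by
  induction m generalizing A with
  | zero => rw [zero_add]; rfl
  | succ m ih => rw [Nat.succ_add]; simp only [deletionMean, ih]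

lemma expect_deletionMean {α : Type*} [Fintype α] (h : α → Finset ι → ℝ) (m : ℕ) (A : Finset ι) :
    𝔼 a, deletionMean j m (h a) A = deletionMean j m (fun A' => 𝔼 a, h a A') A := by
  induction m generalizing A with
  | zero => rfl
  | succ m ih =>
    simp only [deletionMean]
    rw [expect_comm]
    simp only [← mul_expect, ih]

lemma deletionMean_insert {w : ι} (hw : ∀ b, j b ≠ w) (h : Finset ι → ℝ) (m : ℕ) (A : Finset ι) :
    deletionMean j m h (insert w A) = deletionMean j m (fun A' => h (insert w A')) A := by
  induction m generalizing A with
  | zero => rfl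
  | succ m ih =>
    refine expect_congr rfl fun b _ => ?_
    rw [erase_insert_of_ne (hw b).symm, ih]
    simp only [mem_insert, hw b, false_or]

end DeletionMean

section Density

lemma uniformProb_and_le {E β : Type*} [Fintype E] [DecidableEq E] [Fintype β] [Nonempty β]
    {S : Set E} {G H : (E → β) → Prop} {q : ℝ} (hq : 0 ≤ q)
    (hG : ∀ ω η, Set.EqOn η ω S → G η → G ω) (hH : ∀ ω, G ω → condProb S ω H ≤ q) :
    uniformProb (fun ω => G ω ∧ H ω) ≤ q := by
  rw [← expect_condProb S]
  refine expect_le univ_nonempty fun ω _ => ?_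
  by_cases h : G ω
  · exact (condProb_mono fun _ _ => And.right).trans (hH ω h)
  · rwa [condProb_eq_zero fun η hη hη' => h (hG ω η hη hη'.1)]

variable {ι β : Type*} [DecidableEq ι] [Fintype β]

/-- The indicator of the event that the permanent of the principal submatrix on `A` is at least
`lam` in absolute value. -/
noncomputable def largeMinor (lam : ℝ) (ω : Sym2 ι → Bool) (A : Finset ι) : ℝ :=
  ind (lam ≤ |per ω A A|)

/-- The density of the pairs `p ≠ q` for which the permanent of the submatrix on `A`, with row `j p`
and column `j q` deleted, is at least `μ` in absolute value. -/
noncomputable def offDiagDensity (j : β → ι) (μ : ℝ) (ω : Sym2 ι → Bool) (A : Finset ι) : ℝ :=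
  𝔼 p, uniformProb fun q =>
    p ≠ q ∧ j p ∈ A ∧ j q ∈ A ∧ μ ≤ |per ω (A.erase (j p)) (A.erase (j q))|

/-- The density of the pairs `p ≠ q` missing from `offDiagDensity j μ ω A` although, once `j p` and
`j q` are deleted from `A`, deleting one more index leaves a minor of size `lam` with density `ρ`.
This is what is lost in passing from principal to off-diagonal minors. -/
noncomputable def offDiagLoss (j : β → ι) (ρ lam μ : ℝ) (ω : Sym2 ι → Bool) (A : Finset ι) : ℝ :=
  𝔼 p, uniformProb fun q => p ≠ q ∧ j p ∈ A ∧ j q ∈ A ∧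
    ρ ≤ deletionMean j 1 (largeMinor lam ω) ((A.erase (j p)).erase (j q)) ∧
    ¬μ ≤ |per ω (A.erase (j p)) (A.erase (j q))|

/-- The indicator of the event that the off-diagonal minors of size `μ` have density `ρ` in `A`, but
adding `w` to `A` does not give a principal minor of size `μ`. -/
noncomputable def insertLoss (j : β → ι) (ρ μ : ℝ) (w : ι) (ω : Sym2 ι → Bool) (A : Finset ι) : ℝ :=
  ind (ρ ≤ offDiagDensity j μ ω A ∧ |per ω (insert w A) (insert w A)| < μ)

variable {j : β → ι}

lemma offDiagLoss_nonneg (ρ lam μ : ℝ) (ω : Sym2 ι → Bool) (A : Finset ι) :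
    0 ≤ offDiagLoss j ρ lam μ ω A :=
  expect_nonneg fun _ _ => uniformProb_nonneg _

lemma offDiagDensity_congr {μ : ℝ} {ω η : Sym2 ι → Bool} {A : Finset ι}
    (h : Set.EqOn η ω A.sym2) : offDiagDensity j μ η A = offDiagDensity j μ ω A := by
  simp only [offDiagDensity, per_congr_sym2 h (erase_subset _ A) (erase_subset _ A)]

lemma deletionMean_largeMinor_congr {lam : ℝ} {m : ℕ} {ω η : Sym2 ι → Bool} {A : Finset ι}
    (h : Set.EqOn η ω A.sym2) :
    deletionMean j m (largeMinor lam η) A = deletionMean j m (largeMinor lam ω) A :=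
  deletionMean_congr m fun A' hA' => by rw [largeMinor, per_congr_sym2 h hA' hA', largeMinor]

lemma deletionMean_one_largeMinor (lam : ℝ) (ω : Sym2 ι → Bool) (C : Finset ι) :
    deletionMean j 1 (largeMinor lam ω) C =
      uniformProb fun b => j b ∈ C ∧ lam ≤ |per ω (C.erase (j b)) (C.erase (j b))| :=
  expect_congr rfl fun _ _ => (ind_and _ _).symm

lemma deletionMean_three_le {ρ : ℝ} (hρ : 0 ≤ ρ) (lam μ : ℝ)
    (ω : Sym2 ι → Bool) (A : Finset ι) :
    deletionMean j 3 (largeMinor lam ω) A ≤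
      ρ + (offDiagDensity j μ ω A + offDiagLoss j ρ lam μ ω A) := by
  let rich (C : Finset ι) : Prop := ρ ≤ deletionMean j 1 (largeMinor lam ω) C
  have hrich (C : Finset ι) :
      deletionMean j 1 (largeMinor lam ω) C ≤ ρ + ind (rich C) := by
    by_cases hr : rich C
    · rw [ind_of_true hr, deletionMean_one_largeMinor]
      linarith [uniformProb_le_one fun b => j b ∈ C ∧ lam ≤ |per ω (C.erase (j b)) (C.erase (j b))|]
    · rw [ind_of_false hr, add_zero]
      exact (not_le.1 hr).le
  calc deletionMean j 3 (largeMinor lam ω) A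
      = deletionMean j 2 (deletionMean j 1 (largeMinor lam ω)) A := deletionMean_add_left _ 2 1 A
    _ ≤ deletionMean j 2 (fun C => ρ + ind (rich C)) A := deletionMean_mono 2 fun C _ => hrich C
    _ = deletionMean j 2 (fun _ => ρ) A + deletionMean j 2 (fun C => ind (rich C)) A :=
        deletionMean_add _ _ 2 A
    _ ≤ ρ + (offDiagDensity j μ ω A + offDiagLoss j ρ lam μ ω A) := by
        refine add_le_add (deletionMean_const_le hρ 2 A) ?_
        simp only [offDiagDensity, offDiagLoss, ← expect_add_distrib, deletionMean]
        refine expect_le_expect fun p _ => ?_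
        rw [mul_expect, uniformProb, uniformProb, ← expect_add_distrib]
        refine expect_le_expect fun q _ => ?_
        rw [← ind_and, ← ind_and]
        refine (ind_mono ?_).trans (ind_or_le _ _)
        rintro ⟨hp, hq, hr⟩
        obtain ⟨hqp, hq⟩ := mem_erase.1 hq
        have hne : p ≠ q := fun h => hqp (h ▸ rfl)
        by_cases hl : μ ≤ |per ω (A.erase (j p)) (A.erase (j q))|
        · exact .inl ⟨hne, hp, hq, hl⟩
        · exact .inr ⟨hne, hp, hq, hr, hl⟩

lemma offDiagDensity_le [Nonempty β] {ρ : ℝ} (hρ : 0 ≤ ρ) (μ : ℝ) (w : ι) (ω : Sym2 ι → Bool)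
    (A : Finset ι) :
    offDiagDensity j μ ω A ≤ ρ + (largeMinor μ ω (insert w A) + insertLoss j ρ μ w ω A) := by
  have hlarge : 0 ≤ largeMinor μ ω (insert w A) := ind_nonneg _
  have hloss : 0 ≤ insertLoss j ρ μ w ω A := ind_nonneg _
  by_cases hr : ρ ≤ offDiagDensity j μ ω A
  · have hone : offDiagDensity j μ ω A ≤ 1 :=
      expect_le univ_nonempty fun p _ => uniformProb_le_one _
    by_cases hl : μ ≤ |per ω (insert w A) (insert w A)|
    · have : largeMinor μ ω (insert w A) = 1 := ind_of_true hl
      linarith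
    · have : insertLoss j ρ μ w ω A = 1 := ind_of_true ⟨hr, not_le.1 hl⟩
      linarith
  · linarith

variable [Fintype ι] [Nonempty β]

lemma expect_offDiagLoss_le (hj : Function.Injective j) {ρ lam : ℝ} {s K K' : ℕ} (hs0 : 0 < s)
    (hK0 : 0 < K) (hk : 8 * K' ≤ s) (hρ : 4 * (K' : ℝ) + s * (2 * K) ≤ ρ * Fintype.card β)
    (h0 : 0 ≤ lam) (A : Finset ι) :
    𝔼 ω, offDiagLoss j ρ lam (lam / (4 * s)) ω A ≤
      2 * centralMass K + 4 / s + centralMass K' := by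
  have hβ : (0 : ℝ) < Fintype.card β := by exact_mod_cast Fintype.card_pos
  have hbound : 0 ≤ 2 * centralMass K + 4 / s + centralMass K' := by
    have := centralMass_nonneg K
    have := centralMass_nonneg K'
    positivity
  unfold offDiagLoss uniformProb
  rw [expect_comm]
  refine expect_le univ_nonempty fun p _ => ?_
  rw [expect_comm]
  refine expect_le univ_nonempty fun q _ => ?_
  by_cases hpq : p ≠ q ∧ j p ∈ A ∧ j q ∈ A
  swap
  · exact (uniformProb_eq_zero fun ω h => hpq ⟨h.1, h.2.1, h.2.2.1⟩).trans_le hbound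
  obtain ⟨hne, hpA, hqA⟩ := hpq
  have hjne : j p ≠ j q := hj.ne hne
  set C := (A.erase (j p)).erase (j q)
  refine (uniformProb_mono fun ω h => h.2.2.2).trans (uniformProb_and_le (S := C.sym2) hbound
    (fun ω η hη h => h.trans_eq (deletionMean_largeMinor_congr hη))
    fun ω hrich => ?_)
  classical
  let H : Finset β := {b | j b ∈ C ∧ lam ≤ |per ω (C.erase (j b)) (C.erase (j b))|}
  have hH : 4 * K' + s * (2 * K) ≤ #(H.image j) := by
    rw [deletionMean_one_largeMinor, uniformProb_eq_card_div, le_div_iff₀ hβ] at hrich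
    rw [card_image_of_injective _ hj]
    exact_mod_cast hρ.trans hrich
  have hCq : insert (j q) C = A.erase (j p) := by grind
  have hCp : insert (j p) C = A.erase (j q) := by grind
  rw [← hCq, ← hCp]
  refine condProb_abs_per_insert_insert_lt_le hjne (by grind) (by grind) (fun i hi => ?_) hs0 hK0
    hk hH ω h0 fun i hi => ?_ <;>
  obtain ⟨b, hb, rfl⟩ := mem_image.1 hi
  · exact (mem_filter.1 hb).2.1
  · exact (mem_filter.1 hb).2.2

lemma expect_insertLoss_le (hj : Function.Injective j) {w : ι} {A : Finset ι} (hw : w ∉ A)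
    {ρ μ : ℝ} {K : ℕ} (hρ : 0 < ρ) (hK : 32 * (K : ℝ) ≤ ρ * Fintype.card β) :
    𝔼 ω, insertLoss j ρ μ w ω A ≤ √(3 * centralMass K) := by
  refine uniformProb_and_le (S := (A.sym2 : Set (Sym2 ι)))
    (G := fun ω => ρ ≤ offDiagDensity j μ ω A)
    (H := fun ω => |per ω (insert w A) (insert w A)| < μ) (Real.sqrt_nonneg _)
    (fun _ _ hη h => h.trans_eq (offDiagDensity_congr hη)) fun ω hdense => ?_
  exact Real.le_sqrt_of_sq_le (condProb_abs_per_insert_lt_sq_le_of_dense hj hw ω hρ hK hdense)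

lemma expect_posPart_deletionMean_sub_insert_le (hj : Function.Injective j) {w : ι} {T : Finset ι}
    (hwT : w ∉ T) (hwj : ∀ b, j b ≠ w) {ρ ρ' lam : ℝ} {s K K' K₂ : ℕ} (hs0 : 0 < s) (hK0 : 0 < K)
    (hk : 8 * K' ≤ s) (hρ : 0 < ρ) (hρ' : 0 < ρ')
    (hρs : 4 * (K' : ℝ) + s * (2 * K) ≤ ρ * Fintype.card β)
    (hρK : 32 * (K₂ : ℝ) ≤ ρ' * Fintype.card β) (h0 : 0 ≤ lam) (m : ℕ) :
    𝔼 ω, (deletionMean j (m + 3) (largeMinor lam ω) T -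
      deletionMean j m (largeMinor (lam / (4 * s)) ω) (insert w T))⁺ ≤
        ρ + ρ' + (2 * centralMass K + 4 / s + centralMass K') + √(3 * centralMass K₂) := by
  set μ : ℝ := lam / (4 * s)
  let loss (ω : Sym2 ι → Bool) (A : Finset ι) : ℝ :=
    ρ + ρ' + offDiagLoss j ρ lam μ ω A + insertLoss j ρ' μ w ω A
  have hloss0 (ω A) : 0 ≤ loss ω A := by
    have := offDiagLoss_nonneg (j := j) ρ lam μ ω A
    have : 0 ≤ insertLoss j ρ' μ w ω A := ind_nonneg _
    positivity
  have hloss (A : Finset ι) (hA : A ⊆ T) : 𝔼 ω, loss ω A ≤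
      ρ + ρ' + (2 * centralMass K + 4 / s + centralMass K') + √(3 * centralMass K₂) := by
    rw [expect_add_distrib, expect_add_distrib, Fintype.expect_const]
    exact add_le_add (add_le_add_right (expect_offDiagLoss_le hj hs0 hK0 hk hρs h0 A) _)
      (expect_insertLoss_le hj (fun h => hwT (hA h)) hρ' hρK)
  calc _ ≤ 𝔼 ω, deletionMean j m (loss ω) T := by
        refine expect_le_expect fun ω _ => sup_le ?_ (deletionMean_nonneg (hloss0 ω) m T)
        rw [sub_le_iff_le_add', deletionMean_add_left, deletionMean_insert hwj, ← deletionMean_add]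
        refine deletionMean_mono m fun A _ => ?_
        linarith [deletionMean_three_le (j := j) hρ.le lam μ ω A,
          offDiagDensity_le (j := j) hρ'.le μ w ω A]
    _ = deletionMean j m (fun A => 𝔼 ω, loss ω A) T := expect_deletionMean loss m T
    _ ≤ _ := by
        have := centralMass_nonneg K
        have := centralMass_nonneg K'
        exact (deletionMean_mono m hloss).trans (deletionMean_const_le (by positivity) m T)

lemma expect_posPart_sub_le {Ω : Type*} [Fintype Ω] (f g h : Ω → ℝ) :
    𝔼 ω, (f ω - h ω)⁺ ≤ 𝔼 ω, (f ω - g ω)⁺ + 𝔼 ω, (g ω - h ω)⁺ := by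
  rw [← expect_add_distrib]
  refine expect_le_expect fun ω _ => sup_le ?_ (add_nonneg (posPart_nonneg _) (posPart_nonneg _))
  linarith [le_posPart (f ω - g ω), le_posPart (g ω - h ω)]

lemma exists_pos_centralMass_le {ε : ℝ} (hε : 0 < ε) : ∃ n, 0 < n ∧ centralMass n ≤ ε := by
  obtain ⟨n, hn⟩ := exists_centralMass_le (ε := min ε (1 / 2)) (by positivity)
  refine ⟨n, Nat.pos_of_ne_zero ?_, hn.trans (min_le_left _ _)⟩
  rintro rfl
  have := hn.trans (min_le_right _ _)
  norm_num [centralMass] at this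

lemma exists_const_expect_posPart_le {ε : ℝ} (hε : 0 < ε) : ∃ c : ℝ, 0 < c ∧ ∃ g₀ : ℕ,
    ∀ n g : ℕ, 0 < g → g₀ ≤ g → ∀ j : Fin g → Fin n, Function.Injective j →
    ∀ (w : Fin n) (T : Finset (Fin n)), w ∉ T → (∀ b, j b ≠ w) → ∀ lam : ℝ, 0 ≤ lam → ∀ m : ℕ,
    𝔼 ω, (deletionMean j (m + 3) (largeMinor lam ω) T -
      deletionMean j m (largeMinor (c * lam) ω) (insert w T))⁺ ≤ ε := by
  obtain ⟨K, hK0, hK⟩ := exists_pos_centralMass_le (ε := ε / 10) (by positivity)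
  obtain ⟨K₂, hK₂⟩ := exists_centralMass_le (ε := (ε / 10) ^ 2 / 3) (by positivity)
  obtain ⟨s₁, hs₁⟩ := exists_nat_ge (40 / ε)
  set s : ℕ := s₁ + 8 * K with hs
  have hs0 : 0 < s := by omega
  obtain ⟨g₀, hg₀⟩ := exists_nat_ge ((4 * (K : ℝ) + s * (2 * K) + 32 * K₂) / (ε / 10))
  refine ⟨1 / (4 * s), by positivity, g₀, ?_⟩
  intro n g hg hgg j hj w T hwT hwj lam h0 m
  have : Nonempty (Fin g) := ⟨⟨0, hg⟩⟩
  have hcard : 4 * (K : ℝ) + s * (2 * K) + 32 * K₂ ≤ ε / 10 * (Fintype.card (Fin g) : ℝ) := by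
    rw [Fintype.card_fin, ← div_le_iff₀' (by positivity)]
    exact hg₀.trans (mod_cast hgg)
  have hsmall : 4 / (s : ℝ) ≤ ε / 10 := by
    have : 40 / ε ≤ s := hs₁.trans (by rw [hs]; push_cast; linarith)
    rw [div_le_iff₀ hε] at this
    rw [div_le_iff₀ (by positivity)]
    linarith
  have hsqrt : √(3 * centralMass K₂) ≤ ε / 10 := by
    rw [Real.sqrt_le_left (by positivity)]
    linarith
  have : (0 : ℝ) ≤ 32 * K₂ := by positivity
  have hsR : 0 ≤ 4 * (K : ℝ) + s * (2 * K) := by positivity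
  rw [show 1 / (4 * (s : ℝ)) * lam = lam / (4 * s) by ring]
  refine (expect_posPart_deletionMean_sub_insert_le hj hwT hwj (ρ := ε / 10) (ρ' := ε / 10)
    (K := K) (K' := K) (K₂ := K₂) hs0 hK0 (by omega) (by positivity) (by positivity) (by linarith)
    (by linarith) h0 m).trans ?_
  linarith

lemma expect_posPart_deletionMean_sub_union_le {ι β : Type*} [DecidableEq ι] [Fintype ι] [Fintype β]
    {j : β → ι} {c ε : ℝ} (hc : 0 ≤ c)
    (hinsert : ∀ (w : ι) (T : Finset ι), w ∉ T → (∀ b, j b ≠ w) → ∀ lam : ℝ, 0 ≤ lam → ∀ m : ℕ,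
      𝔼 ω, (deletionMean j (m + 3) (largeMinor lam ω) T -
        deletionMean j m (largeMinor (c * lam) ω) (insert w T))⁺ ≤ ε)
    {W T : Finset ι} (hWT : Disjoint W T) (hjW : ∀ b, j b ∉ W) {lam : ℝ} (h0 : 0 ≤ lam) :
    𝔼 ω, (deletionMean j (3 * #W) (largeMinor lam ω) T -
      largeMinor (c ^ #W * lam) ω (T ∪ W))⁺ ≤ #W * ε := by
  induction W using Finset.induction_on generalizing T lam with
  | empty => simp [deletionMean]
  | insert w W hw ih =>
    rw [disjoint_insert_left] at hWT
    rw [union_insert, ← insert_union, card_insert_of_notMem hw, mul_add, pow_succ, mul_assoc]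
    refine (expect_posPart_sub_le _
      (fun ω => deletionMean j (3 * #W) (largeMinor (c * lam) ω) (insert w T)) _).trans ?_
    have h₁ := hinsert w T hWT.1 (fun b h => hjW b (h ▸ mem_insert_self _ _)) lam h0 (3 * #W)
    have h₂ := ih (disjoint_insert_right.2 ⟨hw, hWT.2⟩)
      (fun b h => hjW b (mem_insert_of_mem h)) (mul_nonneg hc h0)
    push_cast
    linarith

end Density

section Tuples

lemma uniformProb_exists_mem_le_sum {Ω κ : Type*} [Fintype Ω] (s : Finset κ) (P : κ → Ω → Prop) :
    uniformProb (fun a => ∃ i ∈ s, P i a) ≤ ∑ i ∈ s, uniformProb (P i) := by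
  unfold uniformProb
  rw [← expect_sum_comm]
  refine expect_le_expect fun a _ => ?_
  by_cases h : ∃ i ∈ s, P i a
  · obtain ⟨i, hi, hPi⟩ := h
    rw [ind_of_true ⟨i, hi, hPi⟩, ← ind_of_true hPi]
    exact single_le_sum (f := fun i => ind (P i a)) (fun _ _ => ind_nonneg _) hi
  · rw [ind_of_false h]
    exact sum_nonneg fun _ _ => ind_nonneg _

variable {ι β : Type*} [DecidableEq ι] [Fintype β] {j : β → ι}

lemma uniformProb_sdiff_image_le_deletionMean (hj : Function.Injective j) (P : Finset ι → Prop)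
    (l : ℕ) (A : Finset ι) :
    uniformProb (fun z : Fin l → β => Function.Injective z ∧ (∀ i, j (z i) ∈ A) ∧
      P (A \ univ.image (j ∘ z))) ≤ deletionMean j l (fun A => ind (P A)) A := by
  induction l generalizing A with
  | zero =>
    refine expect_le univ_nonempty fun z _ => ind_mono fun h => ?_
    simpa using h.2.2
  | succ l ih =>
    rw [← uniformProb_comp_equiv (Fin.consEquiv fun _ : Fin (l + 1) => β), uniformProb, expect_prod]
    refine expect_le_expect fun b _ => ?_
    by_cases hb : j b ∈ A
    · rw [ind_of_true hb, one_mul]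
      refine (uniformProb_mono fun z => ?_).trans (ih (A.erase (j b)))
      change Function.Injective (Fin.cons b z : Fin (l + 1) → β) ∧
        (∀ i, j ((Fin.cons b z : Fin (l + 1) → β) i) ∈ A) ∧
        P (A \ univ.image (j ∘ (Fin.cons b z : Fin (l + 1) → β))) → _
      rintro ⟨hinj, hmem, hP⟩
      obtain ⟨hbz, hz⟩ := Fin.cons_injective_iff.1 hinj
      refine ⟨hz, fun i => mem_erase.2 ⟨fun h => hbz ⟨i, hj h⟩, hmem i.succ⟩, ?_⟩
      convert hP using 1
      ext x
      simp only [mem_sdiff, mem_erase, mem_image, mem_univ, true_and, Function.comp_apply,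
        Fin.exists_fin_succ, Fin.cons_zero, Fin.cons_succ, not_or]
      tauto
    · rw [ind_of_false hb, zero_mul]
      exact (uniformProb_eq_zero fun z h => hb (h.2.1 0)).le

variable {κ : Type*} [Fintype κ] [DecidableEq κ] [Nonempty β]

lemma uniformProb_apply_eq_apply {i k : κ} (hik : i ≠ k) :
    uniformProb (fun φ : κ → β => φ i = φ k) = 1 / Fintype.card β := by
  classical
  have hpair : Function.Injective ![i, k] := by
    intro a b h
    fin_cases a <;> fin_cases b <;> simp_all
  have hcomp := uniformProb_comp_injective (β := β) hpair (fun z => z 0 = z 1)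
  refine hcomp.trans ?_
  rw [← uniformProb_comp_equiv (finTwoArrowEquiv β).symm]
  unfold uniformProb
  rw [expect_prod]
  have hfiber (a : β) : 𝔼 b : β, ind (a = b) = 1 / Fintype.card β := by
    refine (uniformProb_eq_card_div _).trans ?_
    simp [filter_eq]
  exact (expect_congr rfl fun a _ => hfiber a).trans (Fintype.expect_const _)

lemma uniformProb_not_injective_le :
    uniformProb (fun φ : κ → β => ¬Function.Injective φ) ≤
      (Fintype.card κ : ℝ) ^ 2 / Fintype.card β :=
  calc uniformProb (fun φ : κ → β => ¬Function.Injective φ)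
      ≤ uniformProb (fun φ : κ → β => ∃ p ∈ (univ : Finset κ).offDiag, φ p.1 = φ p.2) := by
        refine uniformProb_mono fun φ h => ?_
        obtain ⟨i, k, he, hne⟩ := Function.not_injective_iff.1 h
        exact ⟨(i, k), mem_offDiag.2 ⟨mem_univ i, mem_univ k, hne⟩, he⟩
    _ ≤ ∑ p ∈ (univ : Finset κ).offDiag, uniformProb fun φ : κ → β => φ p.1 = φ p.2 :=
        uniformProb_exists_mem_le_sum _ _
    _ = #(univ : Finset κ).offDiag / Fintype.card β := by
        rw [sum_congr rfl fun p hp => uniformProb_apply_eq_apply (mem_offDiag.1 hp).2.2, sum_const,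
          nsmul_eq_mul, mul_one_div]
    _ ≤ (Fintype.card κ : ℝ) ^ 2 / Fintype.card β := by
        gcongr
        rw [offDiag_card, sq]
        exact_mod_cast Nat.sub_le _ _

lemma uniformProb_exists_subset_image_le (hj : Function.Injective j) {A : Finset ι}
    (hjA : ∀ b, j b ∈ A) (P : Finset ι → Prop) (l : ℕ) :
    uniformProb (fun φ : κ → β => Function.Injective φ ∧
      ∃ Z ⊆ univ.image (j ∘ φ), #Z = l ∧ P (A \ Z)) ≤
    (Fintype.card κ : ℝ) ^ l * deletionMean j l (fun A => ind (P A)) A := by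
  classical
  let good (z : Fin l → β) : Prop :=
    Function.Injective z ∧ (∀ i, j (z i) ∈ A) ∧ P (A \ univ.image (j ∘ z))
  calc uniformProb (fun φ : κ → β => Function.Injective φ ∧
        ∃ Z ⊆ univ.image (j ∘ φ), #Z = l ∧ P (A \ Z))
      ≤ uniformProb (fun φ : κ → β =>
          ∃ e ∈ ({e | Function.Injective e} : Finset (Fin l → κ)), good (φ ∘ e)) := by
        refine uniformProb_mono fun φ ⟨hφ, Z, hZ, hZl, hP⟩ => ?_
        have hpre (i : Fin l) : ∃ k, j (φ k) = ((Z.equivFinOfCardEq hZl).symm i : ι) := by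
          simpa using hZ ((Z.equivFinOfCardEq hZl).symm i).2
        choose e he using hpre
        have hinj : Function.Injective e := fun a b hab =>
          (Z.equivFinOfCardEq hZl).symm.injective (Subtype.ext (by rw [← he, ← he, hab]))
        have himage : univ.image (j ∘ φ ∘ e) = Z := by
          rw [show j ∘ φ ∘ e = fun i => ((Z.equivFinOfCardEq hZl).symm i : ι) from funext he]
          ext x
          simp only [mem_image, mem_univ, true_and]
          exact ⟨fun ⟨i, hi⟩ => hi ▸ coe_mem _,
            fun hx => ⟨Z.equivFinOfCardEq hZl ⟨x, hx⟩, by rw [Equiv.symm_apply_apply]⟩⟩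
        exact ⟨e, mem_filter.2 ⟨mem_univ _, hinj⟩, hφ.comp hinj, fun i => hjA _, by rwa [himage]⟩
    _ ≤ ∑ _e ∈ ({e | Function.Injective e} : Finset (Fin l → κ)), uniformProb good := by
        refine (uniformProb_exists_mem_le_sum _ _).trans (sum_le_sum fun e he => ?_)
        exact (uniformProb_comp_injective (mem_filter.1 he).2 good).le
    _ ≤ (Fintype.card κ : ℝ) ^ l * deletionMean j l (fun A => ind (P A)) A := by
        rw [sum_const, nsmul_eq_mul]
        refine mul_le_mul ?_ (uniformProb_sdiff_image_le_deletionMean hj P l A)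
          (uniformProb_nonneg _) (by positivity)
        exact_mod_cast (card_filter_le _ _).trans (by simp)

end Tuples

/-! ### The lower bound -/

section AllIndices

variable {ι β : Type*} [Fintype ι] [DecidableEq ι] [Fintype β]

lemma few_missing_error_le (r : ℕ) :
    8 * (3 / 4) ^ r + ((7 / 8) ^ r + (16 * (15 / 16) ^ (r + 1) +
      (2 ^ r * (31 / 32) ^ (64 * r) + 16 * (15 / 16) ^ (r + 1)))) ≤ (42 * (15 / 16) ^ r : ℝ) := by
  have h₁ : (3 / 4 : ℝ) ^ r ≤ (15 / 16) ^ r :=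
    pow_le_pow_left₀ (by norm_num) (by norm_num) r
  have h₂ : (7 / 8 : ℝ) ^ r ≤ (15 / 16) ^ r :=
    pow_le_pow_left₀ (by norm_num) (by norm_num) r
  have h₃ : (15 / 16 : ℝ) ^ (r + 1) ≤ (15 / 16) ^ r :=
    pow_le_pow_of_le_one (by norm_num) (by norm_num) r.le_succ
  have h₄ : (2 ^ r * (31 / 32) ^ (64 * r) : ℝ) ≤ (15 / 16) ^ r := by
    rw [pow_mul, ← mul_pow]
    gcongr
    norm_num
  linarith

lemma growth_error_le {r s : ℕ} (h : r ≤ s) :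
    (2 ^ r * (23 / 24) ^ (25 * s) : ℝ) ≤ (7 / 10) ^ s :=
  calc (2 ^ r * (23 / 24) ^ (25 * s) : ℝ) ≤ 2 ^ s * (23 / 24) ^ (25 * s) := by gcongr; norm_num
    _ = (2 * (23 / 24) ^ 25) ^ s := by rw [pow_mul, ← mul_pow]
    _ ≤ (7 / 10) ^ s := by gcongr; norm_num

lemma condProb_not_exists_subset_le {A U F I J : Finset ι} (hUA : U ⊆ A) (hF : F ⊆ A \ U) {r : ℕ}
    (hFc : #F = 252 * r) {ω : Sym2 ι → Bool} {lam : ℝ} (h0 : 0 ≤ lam) {d : ℕ} (hI : I ⊆ U)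
    (hJ : J ⊆ U) (hc : #I = #J) (hd : #U ≤ #I + d) (hlam : lam * (3 / 2) ^ d ≤ |per ω I J|)
    (hA : #U + 252 * r + (17 * d + 6 * r + 3) ≤ #A) :
    condProb (U.sym2 : Set (Sym2 ι)) ω
      (fun η => ¬∃ Z ⊆ F, #Z = 2 * r ∧ lam ≤ |per η (A \ Z) (A \ Z)|) ≤ 42 * (15 / 16) ^ r := by
  obtain ⟨F₁, hF₁, hF₁c⟩ := exists_subset_card_eq (show 128 * r ≤ #F by omega)
  have hF₂c : #(F \ F₁) = 124 * r := by rw [card_sdiff_of_subset hF₁]; omega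
  have hFA : F ⊆ A := hF.trans sdiff_subset
  have hFU (i : ι) (hi : i ∈ F) : i ∉ U := (mem_sdiff.1 (hF hi)).2
  set Q := (A \ U) \ F with hQ
  have hQc : #Q = #A - #U - #F := by
    rw [hQ, card_sdiff_of_subset hF, card_sdiff_of_subset hUA]
  have hunion : U ∪ Q ∪ F₁ ∪ F \ F₁ = A := by grind
  refine (condProb_mono ?_).trans ((condProb_not_exists_few_missing_le (Q := Q) (F₁ := F₁)
    (F₂ := F \ F₁) (x := r) hI hJ hc hd h0 hlam (disjoint_left.2 (by grind))
    (disjoint_left.2 (by grind)) (disjoint_left.2 (by grind)) (by omega) hF₁c hF₂c).trans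
    (few_missing_error_le r))
  rintro η - hnot ⟨B, hQB, hBA, hB, hper⟩
  rw [hunion] at hBA hB
  exact hnot ⟨A \ B, by grind, hB, by rwa [Finset.sdiff_sdiff_eq_self hBA]⟩

lemma uniformProb_not_exists_subset_le {A U F : Finset ι} (hUA : U ⊆ A) (hF : F ⊆ A \ U) {r : ℕ}
    (hFc : #F = 252 * r) {s R b : ℕ} {γ : ℝ} (hγ0 : 0 ≤ γ) (hγ : 2 * γ ≤ s - R)
    (hU : #U = (25 + b) * s) {lam : ℝ} (h0 : 0 ≤ lam) {d : ℕ}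
    (hlam : (lam * (3 / 2) ^ d) ^ 2 ≤ (γ ^ R / 2 ^ s) ^ b) (hd : (25 + b) * s ≤ b * R + d)
    (hA : #U + 252 * r + (17 * d + 6 * r + 3) ≤ #A) :
    uniformProb (fun ω : Sym2 ι → Bool =>
      ¬∃ Z ⊆ F, #Z = 2 * r ∧ lam ≤ |per ω (A \ Z) (A \ Z)|) ≤
      b * (7 / 10) ^ s + 42 * (15 / 16) ^ r := by
  have hRs : R ≤ s := by exact_mod_cast (by linarith : (R : ℝ) ≤ s)
  have hchain := condProb_not_chain (Set.empty_subset (U.sym2 : Set (Sym2 ι)))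
    (ω := fun _ : Sym2 ι => true)
    (p := b * (7 / 10) ^ s) (q := 42 * (15 / 16) ^ r)
    (G := fun η => ∃ I ⊆ U, ∃ J ⊆ U, #I = b * R ∧ #J = b * R ∧
      (γ ^ R / 2 ^ s) ^ b ≤ per η I J ^ 2)
    (H := fun η => ∃ Z ⊆ F, #Z = 2 * r ∧ lam ≤ |per η (A \ Z) (A \ Z)|) (by positivity) ?_ ?_
  · rwa [condProb_empty] at hchain
  · rw [condProb_empty]
    exact (uniformProb_not_exists_rectangle_le hγ0 hγ b hU).trans
      (mul_le_mul_of_nonneg_left (growth_error_le hRs) b.cast_nonneg)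
  · rintro η - ⟨I, hI, J, hJ, hIc, hJc, hIJ⟩
    exact condProb_not_exists_subset_le hUA hF hFc h0 hI hJ (hIc.trans hJc.symm)
      (by omega) ((le_abs_self _).trans (sq_le_sq.1 (hlam.trans hIJ))) hA

variable [Nonempty β] {j : β → ι}

/-- The index set `F` is the image of a random map to `β`, so that the probability of success for
each `F` becomes the density of the good index sets. -/
lemma expect_posPart_one_sub_deletionMean_le (hj : Function.Injective j) {A : Finset ι}
    (hjA : ∀ b, j b ∈ A) {f l : ℕ} {δ : ℝ} {P : (Sym2 ι → Bool) → Finset ι → Prop}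
    (hδ0 : 0 ≤ δ) (hδ : ∀ F : Finset ι, (∀ i ∈ F, i ∈ Set.range j) → #F = f →
      uniformProb (fun ω => ¬∃ Z ⊆ F, #Z = l ∧ P ω (A \ Z)) ≤ δ) :
    𝔼 ω, (1 - f ^ l * deletionMean j l (fun A' => ind (P ω A')) A)⁺ ≤
      δ + (f : ℝ) ^ 2 / Fintype.card β := by
  let success (φ : Fin f → β) (ω : Sym2 ι → Bool) : Prop :=
    Function.Injective φ ∧ ∃ Z ⊆ univ.image (j ∘ φ), #Z = l ∧ P ω (A \ Z)
  have hfail (φ : Fin f → β) :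
      uniformProb (fun ω => ¬success φ ω) ≤ δ + ind (¬Function.Injective φ) := by
    by_cases hφ : Function.Injective φ
    · have hcard : #(univ.image (j ∘ φ)) = f := by
        rw [card_image_of_injective _ (hj.comp hφ), card_univ, Fintype.card_fin]
      refine (uniformProb_mono fun ω h hZ => h ⟨hφ, hZ⟩).trans
        ((hδ _ (fun i hi => ?_) hcard).trans (le_add_of_nonneg_right (ind_nonneg _)))
      obtain ⟨k, -, rfl⟩ := mem_image.1 hi
      exact ⟨φ k, rfl⟩
    · rw [ind_of_true hφ]
      exact (uniformProb_le_one _).trans (le_add_of_nonneg_left hδ0)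
  have hinj := uniformProb_not_injective_le (κ := Fin f) (β := β)
  have hdensity (ω) : uniformProb (fun φ => success φ ω) ≤
      f ^ l * deletionMean j l (fun A' => ind (P ω A')) A := by
    simpa using uniformProb_exists_subset_image_le (κ := Fin f) hj hjA (P ω) l
  calc 𝔼 ω, (1 - f ^ l * deletionMean j l (fun A' => ind (P ω A')) A)⁺
      ≤ 𝔼 ω, uniformProb fun φ => ¬success φ ω := by
        refine expect_le_expect fun ω _ => sup_le ?_ (uniformProb_nonneg _)
        rw [uniformProb_not]
        exact sub_le_sub_left (hdensity ω) 1
    _ = 𝔼 φ, uniformProb fun ω => ¬success φ ω := expect_comm ..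
    _ ≤ 𝔼 φ, (δ + ind (¬Function.Injective φ)) := expect_le_expect fun φ _ => hfail φ
    _ ≤ δ + (f : ℝ) ^ 2 / Fintype.card β := by
        rw [expect_add_distrib, Fintype.expect_const]
        rw [Fintype.card_fin] at hinj
        exact add_le_add_right hinj δ

lemma uniformProb_not_le_abs_per_univ_le (hj : Function.Injective j) {W : Finset ι}
    (hjW : ∀ b, j b ∉ W) {c ε : ℝ} (hc : 0 ≤ c)
    (hinsert : ∀ (w : ι) (T : Finset ι), w ∉ T → (∀ b, j b ≠ w) → ∀ lam : ℝ, 0 ≤ lam → ∀ m : ℕ,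
      𝔼 ω, (deletionMean j (m + 3) (largeMinor lam ω) T -
        deletionMean j m (largeMinor (c * lam) ω) (insert w T))⁺ ≤ ε)
    {lam δ : ℝ} (h0 : 0 ≤ lam) (hδ0 : 0 ≤ δ) {f : ℕ}
    (hδ : ∀ F : Finset ι, (∀ i ∈ F, i ∈ Set.range j) → #F = f → uniformProb (fun ω =>
      ¬∃ Z ⊆ F, #Z = 3 * #W ∧ lam ≤ |per ω ((univ \ W) \ Z) ((univ \ W) \ Z)|) ≤ δ) :
    uniformProb (fun ω : Sym2 ι → Bool => ¬c ^ #W * lam ≤ |per ω univ univ|) ≤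
      δ + (f : ℝ) ^ 2 / Fintype.card β + f ^ (3 * #W) * (#W * ε) := by
  set A := univ \ W
  set mean := fun ω : Sym2 ι → Bool => deletionMean j (3 * #W) (largeMinor lam ω) A
  have hone := expect_posPart_one_sub_deletionMean_le hj
    (fun b => mem_sdiff.2 ⟨mem_univ _, hjW b⟩) (P := fun ω A => lam ≤ |per ω A A|) hδ0 hδ
  have hboost := expect_posPart_deletionMean_sub_union_le hc hinsert
    (disjoint_sdiff : Disjoint W A) hjW h0
  rw [show A ∪ W = univ from sdiff_union_of_subset (subset_univ W)] at hboost
  calc uniformProb (fun ω : Sym2 ι → Bool => ¬c ^ #W * lam ≤ |per ω univ univ|)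
      ≤ 𝔼 ω, ((1 - f ^ (3 * #W) * mean ω)⁺ +
          f ^ (3 * #W) * (mean ω - largeMinor (c ^ #W * lam) ω univ)⁺) := by
        refine expect_le_expect fun ω _ => ?_
        by_cases h : c ^ #W * lam ≤ |per ω univ univ|
        · rw [ind_of_false (not_not.2 h)]
          positivity
        · rw [ind_of_true h, show largeMinor (c ^ #W * lam) ω univ = 0 from ind_of_false h,
            sub_zero]
          have := mul_le_mul_of_nonneg_left (le_posPart (mean ω))
            (by positivity : (0 : ℝ) ≤ f ^ (3 * #W))
          linarith [le_posPart (1 - f ^ (3 * #W) * mean ω)]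
    _ ≤ δ + (f : ℝ) ^ 2 / Fintype.card β + f ^ (3 * #W) * (#W * ε) := by
        rw [expect_add_distrib, ← mul_expect]
        exact add_le_add hone (mul_le_mul_of_nonneg_left hboost (by positivity))

end AllIndices

section LowerBound

open Filter

/-- The size of the permanent reached with `2 * b` stages of rectangular growth, each of which
exposes `(b + 1) * t` indices and adds `b * t` rows and columns, followed by the removal of the
`(27 * b + 25) * t` indices missing at the end. -/
noncomputable def grownSize (b t : ℕ) : ℝ :=
  (((t : ℝ) / 2) ^ (b * t) / 2 ^ ((b + 1) * t)) ^ b / (3 / 2) ^ ((27 * b + 25) * t)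

lemma exists_disjoint_sets_and_injective {n a b g : ℕ} (h : a + b + g ≤ n) :
    ∃ (W U : Finset (Fin n)) (j : Fin g → Fin n), Function.Injective j ∧ #W = a ∧ #U = b ∧
      Disjoint W U ∧ (∀ i, j i ∉ W) ∧ ∀ i, j i ∉ U := by
  obtain ⟨W, hW⟩ := exists_subset_card_eq (show a ≤ #(univ : Finset (Fin n)) by simp; omega)
  obtain ⟨U, hU⟩ := exists_subset_card_eq (show b ≤ #Wᶜ by simp [card_compl, hW.2]; omega)
  have hWU : Disjoint W U := disjoint_compl_right.mono_right hU.1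
  obtain ⟨V, hV⟩ := exists_subset_card_eq
    (show g ≤ #(W ∪ U)ᶜ by
      rw [card_compl, card_union_of_disjoint hWU, hW.2, hU.2, Fintype.card_fin]; omega)
  have hmem (i : Fin g) := mem_compl.1 (hV.1 (V.orderEmbOfFin_mem hV.2 i))
  exact ⟨W, U, V.orderEmbOfFin hV.2, (V.orderEmbOfFin hV.2).injective, hW.2, hU.2, hWU,
    fun i h => hmem i (mem_union_left _ h), fun i h => hmem i (mem_union_right _ h)⟩

lemma uniformProb_not_mul_grownSize_le {n g κ b t : ℕ} (hg : 0 < g) {c ε : ℝ} (hc : 0 ≤ c)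
    (hinsert : ∀ j : Fin g → Fin n, Function.Injective j → ∀ (w : Fin n) (T : Finset (Fin n)),
      w ∉ T → (∀ b, j b ≠ w) → ∀ lam : ℝ, 0 ≤ lam → ∀ m : ℕ,
      𝔼 ω, (deletionMean j (m + 3) (largeMinor lam ω) T -
        deletionMean j m (largeMinor (c * lam) ω) (insert w T))⁺ ≤ ε)
    (ht : 776 * κ + 3 + g ≤ t) (hn : (2 * b ^ 2 + 486 * b + 451) * t ≤ n) :
    uniformProb (fun ω : Sym2 (Fin n) → Bool =>
      ¬c ^ (2 * κ) * grownSize b t ≤ |per ω univ univ|) ≤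
      (2 * b : ℕ) * (7 / 10) ^ ((b + 1) * t) + 42 * (15 / 16) ^ (3 * κ) +
        ((756 * κ : ℕ) : ℝ) ^ 2 / g + ((756 * κ : ℕ) : ℝ) ^ (6 * κ) * ((2 * κ : ℕ) * ε) := by
  have : Nonempty (Fin g) := ⟨⟨0, hg⟩⟩
  have hsize : (25 + 2 * b) * ((b + 1) * t) + 17 * ((27 * b + 25) * t) + t ≤ n := by
    convert hn using 1
    ring
  obtain ⟨W, U, j, hj, hW, hU, hWU, hjW, hjU⟩ := exists_disjoint_sets_and_injective
    (show 2 * κ + (25 + 2 * b) * ((b + 1) * t) + g ≤ n by omega)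
  have hA : #(univ \ W) = n - 2 * κ := by
    rw [card_sdiff_of_subset (subset_univ _), hW, card_univ, Fintype.card_fin]
  have hpos : 0 ≤ grownSize b t := by unfold grownSize; positivity
  have key := uniformProb_not_le_abs_per_univ_le hj hjW hc (hinsert j hj) hpos (f := 756 * κ)
    (δ := (2 * b : ℕ) * (7 / 10) ^ ((b + 1) * t) + 42 * (15 / 16) ^ (3 * κ)) (by positivity) ?_
  · rwa [hW, Fintype.card_fin, show 3 * (2 * κ) = 6 * κ by ring] at key
  · intro F hF hFc
    rw [hW, show 3 * (2 * κ) = 2 * (3 * κ) by ring]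
    refine uniformProb_not_exists_subset_le (U := U) (R := b * t) (γ := (t : ℝ) / 2)
      (d := (27 * b + 25) * t) (fun i hi => ?_) (fun i hi => ?_) (by omega) (by positivity) ?_ hU
      hpos ?_ (le_of_eq (by ring)) (by omega)
    · exact mem_sdiff.2 ⟨mem_univ i, fun h => disjoint_left.1 hWU h hi⟩
    · obtain ⟨k, rfl⟩ := hF i hi
      exact mem_sdiff.2 ⟨mem_sdiff.2 ⟨mem_univ _, hjW k⟩, hjU k⟩
    · push_cast
      linarith
    · rw [grownSize, div_mul_cancel₀ _ (by positivity), ← pow_mul, mul_comm b 2]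

lemma exists_const_eventually_uniformProb_le {δ : ℝ} (hδ : 0 < δ) :
    ∃ c : ℝ, 0 < c ∧ ∀ b : ℕ, ∀ᶠ t : ℕ in atTop, ∀ n : ℕ, (2 * b ^ 2 + 486 * b + 451) * t ≤ n →
      uniformProb (fun ω : Sym2 (Fin n) → Bool => ¬c * grownSize b t ≤ |per ω univ univ|) ≤ δ := by
  obtain ⟨κ, hκ⟩ : ∃ κ : ℕ, 42 * (15 / 16 : ℝ) ^ (3 * κ) ≤ δ / 4 := by
    obtain ⟨κ, hκ⟩ := exists_pow_lt_of_lt_one (show 0 < δ / 4 / 42 by positivity)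
      (show ((15 / 16) ^ 3 : ℝ) < 1 by norm_num)
    exact ⟨κ, by rw [pow_mul]; linarith⟩
  set f : ℝ := ((756 * κ : ℕ) : ℝ)
  set ε : ℝ := δ / 4 / (f ^ (6 * κ) * (2 * κ : ℕ) + 1) with hε
  obtain ⟨c, hc, g₀, hinsert⟩ := exists_const_expect_posPart_le (show 0 < ε by positivity)
  obtain ⟨g₁, hg₁⟩ := exists_nat_ge (f ^ 2 / (δ / 4))
  have hdensity : f ^ (6 * κ) * ((2 * κ : ℕ) * ε) ≤ δ / 4 := by
    rw [hε, ← mul_assoc, mul_div_assoc', div_le_iff₀ (by positivity), mul_comm]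
    exact mul_le_mul_of_nonneg_left (by linarith) (by positivity)
  have hinj : f ^ 2 / (g₀ + g₁ + 1 : ℕ) ≤ δ / 4 := by
    rw [div_le_comm₀ (by positivity) (by positivity)]
    exact hg₁.trans (by exact_mod_cast (by omega))
  refine ⟨c ^ (2 * κ), by positivity, fun b => ?_⟩
  have hgrowth : ∀ᶠ t : ℕ in atTop, (2 * b : ℕ) * (7 / 10 : ℝ) ^ t < δ / 4 := by
    have := (tendsto_pow_atTop_nhds_zero_of_lt_one (r := (7 / 10 : ℝ)) (by norm_num)
      (by norm_num)).const_mul ((2 * b : ℕ) : ℝ)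
    rw [mul_zero] at this
    exact this.eventually_lt_const (by positivity)
  filter_upwards [hgrowth, eventually_ge_atTop (776 * κ + 3 + (g₀ + g₁ + 1))] with t ht htg n hn
  have hpow : (7 / 10 : ℝ) ^ ((b + 1) * t) ≤ (7 / 10) ^ t :=
    pow_le_pow_of_le_one (by norm_num) (by norm_num) (Nat.le_mul_of_pos_left t b.succ_pos)
  have hstages := mul_le_mul_of_nonneg_left hpow ((2 * b).cast_nonneg (α := ℝ))
  refine (uniformProb_not_mul_grownSize_le (g₀ + g₁).succ_pos hc.le
    (hinsert n _ (g₀ + g₁).succ_pos (by omega)) htg hn).trans ?_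
  linarith

lemma eventually_mul_log_add_le {a θ : ℝ} (h : θ < a) (C₀ C₁ C₂ : ℝ) :
    ∀ᶠ t : ℕ in atTop, θ * (t + 1) * (Real.log t + C₀) ≤ a * t * Real.log t - C₁ * t - C₂ := by
  have hlarge : ∀ᶠ t : ℕ in atTop,
      (|θ| + (θ * C₀ + C₁ + |θ * C₀ + C₂|)) / (a - θ) ≤ Real.log t :=
    (Real.tendsto_log_atTop.comp tendsto_natCast_atTop_atTop).eventually_ge_atTop _
  filter_upwards [hlarge, eventually_ge_atTop 1] with t ht ht1
  have ht1 : (1 : ℝ) ≤ t := by exact_mod_cast ht1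
  rw [div_le_iff₀ (sub_pos.2 h)] at ht
  have hlog : Real.log t ≤ t := (Real.log_le_sub_one_of_pos (by linarith)).trans (by linarith)
  have hθ : θ * Real.log t ≤ |θ| * t :=
    mul_le_mul (le_abs_self θ) hlog (Real.log_nonneg ht1) (abs_nonneg θ)
  have hC : θ * C₀ + C₂ ≤ |θ * C₀ + C₂| * t :=
    (le_abs_self _).trans (le_mul_of_one_le_right (abs_nonneg _) ht1)
  have hmain := mul_le_mul_of_nonneg_right ht (by linarith : (0 : ℝ) ≤ t)
  linarith

lemma log_grownSize {t : ℕ} (ht : 0 < t) (b : ℕ) :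
    Real.log (grownSize b t) = (b : ℝ) ^ 2 * t * Real.log t -
      ((b ^ 2 + b * (b + 1)) * Real.log 2 + (27 * b + 25) * Real.log (3 / 2)) * t := by
  unfold grownSize
  rw [Real.log_div (by positivity) (by positivity), Real.log_pow, Real.log_pow,
    Real.log_div (by positivity) (by positivity), Real.log_pow, Real.log_pow,
    Real.log_div (by positivity) (by norm_num)]
  push_cast
  ring

/-- The exponents compare as `n / 2 - ε * n` with `n = (2 * b ^ 2 + O(b)) * t`, against
`b ^ 2 * t`, up to terms of lower order in `t`. -/
lemma exists_eventually_rpow_le_mul_grownSize {ε : ℝ} (hε : 0 < ε) (hε2 : ε ≤ 1 / 2) {c : ℝ}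
    (hc : 0 < c) : ∃ b : ℕ, ∀ᶠ t : ℕ in atTop, ∀ n : ℕ, (2 * b ^ 2 + 486 * b + 451) * t ≤ n →
      n ≤ (2 * b ^ 2 + 486 * b + 451) * (t + 1) →
      (n : ℝ) ^ ((n : ℝ) / 2 - ε * n) ≤ c * grownSize b t := by
  obtain ⟨b, hb⟩ := exists_nat_ge (500 / ε)
  refine ⟨b, ?_⟩
  set M : ℝ := 2 * b ^ 2 + 486 * b + 451 with hM
  have hM1 : 1 ≤ M := by nlinarith [b.cast_nonneg (α := ℝ)]
  have hexp : (1 / 2 - ε) * M < (b : ℝ) ^ 2 := by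
    rw [div_le_iff₀ hε] at hb
    have : (1 : ℝ) ≤ b := by nlinarith
    nlinarith
  filter_upwards [eventually_mul_log_add_le hexp (Real.log (2 * M))
    ((b ^ 2 + b * (b + 1)) * Real.log 2 + (27 * b + 25) * Real.log (3 / 2)) (-Real.log c),
    eventually_ge_atTop 1] with t hlog ht n hn₁ hn₂
  have ht1 : (1 : ℝ) ≤ t := by exact_mod_cast ht
  have hnle : (n : ℝ) ≤ M * (t + 1) := by rw [hM]; exact_mod_cast hn₂
  have hn1 : (1 : ℝ) ≤ n := by
    refine (one_le_mul_of_one_le_of_one_le hM1 ht1).trans ?_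
    rw [hM]
    exact_mod_cast hn₁
  have hsize : 0 < grownSize b t := by unfold grownSize; positivity
  have hlogn : Real.log n ≤ Real.log t + Real.log (2 * M) := by
    rw [← Real.log_mul (by positivity) (by positivity)]
    exact Real.log_le_log (by linarith) (by nlinarith)
  rw [← Real.log_le_log_iff (by positivity) (by positivity), Real.log_rpow (by linarith),
    Real.log_mul hc.ne' hsize.ne', log_grownSize ht]
  calc ((n : ℝ) / 2 - ε * n) * Real.log n = (1 / 2 - ε) * n * Real.log n := by ring
    _ ≤ (1 / 2 - ε) * (M * (t + 1)) * (Real.log t + Real.log (2 * M)) := by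
        have h0 : 0 ≤ 1 / 2 - ε := by linarith
        exact mul_le_mul (mul_le_mul_of_nonneg_left hnle h0) hlogn (Real.log_nonneg hn1)
          (by positivity)
    _ ≤ _ := by linarith

lemma eventually_uniformProb_not_rpow_le {ε δ : ℝ} (hε : 0 < ε) (hε2 : ε ≤ 1 / 2) (hδ : 0 < δ) :
    ∀ᶠ n : ℕ in atTop, uniformProb (fun ω : Sym2 (Fin n) → Bool =>
      ¬(n : ℝ) ^ ((n : ℝ) / 2 - ε * n) ≤ |per ω univ univ|) ≤ δ := by
  obtain ⟨c, hc, hprob⟩ := exists_const_eventually_uniformProb_le hδ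
  obtain ⟨b, hsize⟩ := exists_eventually_rpow_le_mul_grownSize hε hε2 hc
  have hdiv : Tendsto (fun n : ℕ => n / (2 * b ^ 2 + 486 * b + 451)) atTop atTop :=
    Nat.tendsto_div_const_atTop (by omega)
  filter_upwards [hdiv.eventually (hprob b), hdiv.eventually hsize] with n hprob hsize
  have hle := Nat.mul_div_le n (2 * b ^ 2 + 486 * b + 451)
  have hlt := Nat.lt_mul_div_succ n (show 0 < 2 * b ^ 2 + 486 * b + 451 by omega)
  exact (uniformProb_mono fun ω h h' => h ((hsize n hle hlt.le).trans h')).trans (hprob n hle)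

end LowerBound

/-! ### The upper bound -/

section UpperBound

open Filter

variable {ι : Type*} [DecidableEq ι]

lemma per_eq_sum_of_mem (ω : Sym2 ι → Bool) {w : ι} {I : Finset ι} (hw : w ∈ I) (J : Finset ι) :
    per ω I J = ∑ q ∈ J, rad (ω s(w, q)) * per ω (I.erase w) (J.erase q) := by
  rw [← per_insert ω (notMem_erase w I) J, insert_erase hw]

lemma per_sq_le_card_mul_sum (ω : Sym2 ι → Bool) {w : ι} {I : Finset ι} (hw : w ∈ I)
    (J : Finset ι) :
    per ω I J ^ 2 ≤ #J * ∑ q ∈ J, per ω (I.erase w) (J.erase q) ^ 2 := by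
  rw [per_eq_sum_of_mem ω hw]
  refine sq_sum_le_card_mul_sum_sq.trans_eq ?_
  simp_rw [mul_pow, sq (rad _), rad_mul_self, one_mul]

variable [Fintype ι]

/-- A bound for the second moment of the permanent with rows `I` and columns `J`; the symmetry of
the matrix costs an additional factor in the case `I = J`. -/
noncomputable def perSqBound (I J : Finset ι) : ℝ :=
  (2 * (Fintype.card ι : ℝ)) ^ #I * if I = J then (Fintype.card ι : ℝ) else 1

lemma sum_perSqBound_erase_le (I : Finset ι) {J : Finset ι} (hJ : #J = #I + 1) :
    ∑ q ∈ J, perSqBound I (J.erase q) ≤ (2 * (Fintype.card ι : ℝ)) ^ #J := by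
  have hterm (q : ι) : perSqBound I (J.erase q) ≤
      (2 * (Fintype.card ι : ℝ)) ^ #I *
        (1 + if I = J.erase q then (Fintype.card ι : ℝ) else 0) := by
    rw [perSqBound]
    gcongr
    split_ifs <;> linarith
  have hone : #(J.filter fun q => I = J.erase q) ≤ 1 := by
    simp only [card_le_one, mem_filter]
    exact fun a ha b hb => erase_injOn J ha.1 hb.1 (ha.2.symm.trans hb.2)
  calc ∑ q ∈ J, perSqBound I (J.erase q)
      ≤ (2 * (Fintype.card ι : ℝ)) ^ #I *
          (#J + #(J.filter fun q => I = J.erase q) * (Fintype.card ι : ℝ)) := by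
        refine (sum_le_sum fun q _ => hterm q).trans_eq ?_
        rw [← mul_sum, sum_add_distrib, ← sum_filter]
        simp
    _ ≤ (2 * (Fintype.card ι : ℝ)) ^ #I * (Fintype.card ι + (1 : ℕ) * (Fintype.card ι : ℝ)) := by
        gcongr
        exact card_le_univ J
    _ = (2 * (Fintype.card ι : ℝ)) ^ #J := by
        rw [hJ, pow_succ, Nat.cast_one, one_mul, two_mul]

/-- The entries of row `w` in the columns `J` are independent of the minors in the expansion along
this row, because `w` is not a column. -/
lemma expect_per_sq_eq_sum {w : ι} {I J : Finset ι} (hw : w ∈ I) (hwJ : w ∉ J) :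
    𝔼 ω : Sym2 ι → Bool, per ω I J ^ 2 =
      ∑ q ∈ J, 𝔼 ω : Sym2 ι → Bool, per ω (I.erase w) (J.erase q) ^ 2 := by
  set S : Set (Sym2 ι) := {e | w ∉ e}
  have hminor (ω ω' : Sym2 ι → Bool) (q : ι) :
      per (resample S ω ω') (I.erase w) (J.erase q) = per ω (I.erase w) (J.erase q) := by
    refine per_congr fun a ha b hb => resample_of_mem ?_ _ _
    rw [Set.mem_ofPred_eq, Sym2.mem_iff]
    grind
  have hentry (ω ω' : Sym2 ι → Bool) (q : ι) : resample S ω ω' s(w, q) = ω' s(w, q) :=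
    resample_of_notMem (S := S) (not_not.2 (Sym2.mem_mk_left w q)) _ _
  have hexpand (ω ω' : Sym2 ι → Bool) : per (resample S ω ω') I J =
      0 + ∑ q ∈ J, per ω (I.erase w) (J.erase q) * rad (ω' s(w, q)) := by
    rw [per_eq_sum_of_mem _ hw, zero_add]
    exact sum_congr rfl fun q _ => by rw [hminor, hentry, mul_comm]
  rw [← expect_resample S, ← expect_sum_comm]
  refine expect_congr rfl fun ω _ => ?_
  simp_rw [hexpand]
  rw [expect_affine_sq fun _ _ => Sym2.congr_right.1, zero_pow two_ne_zero, zero_add]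

/-- If `I ≠ J`, the expansion along a row in `I \ J` loses nothing. If `I = J`, the Cauchy–Schwarz
inequality loses a factor `#I`, but among the minors of an expansion this case occurs at most
once. -/
lemma expect_per_sq_le [Nonempty ι] (I J : Finset ι) :
    𝔼 ω : Sym2 ι → Bool, per ω I J ^ 2 ≤ perSqBound I J := by
  induction I using Finset.strongInduction generalizing J with
  | H I ih =>
  have hminors {w : ι} (hw : w ∈ I) (hIJ : #I = #J) :
      ∑ q ∈ J, 𝔼 ω : Sym2 ι → Bool, per ω (I.erase w) (J.erase q) ^ 2 ≤
        (2 * (Fintype.card ι : ℝ)) ^ #J :=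
    (sum_le_sum fun q _ => ih _ (erase_ssubset hw) _).trans
      (sum_perSqBound_erase_le _ (by rw [card_erase_add_one hw, hIJ]))
  have hpos : (1 : ℝ) ≤ Fintype.card ι := by exact_mod_cast Fintype.card_pos (α := ι)
  rcases ne_or_eq (#I) (#J) with hcard | hcard
  · simp only [per_of_card_ne _ hcard, zero_pow two_ne_zero, expect_const_zero]
    unfold perSqBound
    positivity
  rcases eq_or_ne I J with rfl | hne
  · rcases I.eq_empty_or_nonempty with rfl | ⟨w, hw⟩
    · simpa [per, subperm_empty, perSqBound] using hpos
    calc 𝔼 ω : Sym2 ι → Bool, per ω I I ^ 2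
        ≤ #I * ∑ q ∈ I, 𝔼 ω : Sym2 ι → Bool, per ω (I.erase w) (I.erase q) ^ 2 := by
          rw [← expect_sum_comm, mul_expect]
          exact expect_le_expect fun ω _ => per_sq_le_card_mul_sum ω hw I
      _ ≤ Fintype.card ι * (2 * (Fintype.card ι : ℝ)) ^ #I := by
          gcongr
          · exact card_le_univ I
          · exact hminors hw rfl
      _ = perSqBound I I := by rw [perSqBound, if_pos rfl, mul_comm]
  · obtain ⟨w, hw, hwJ⟩ := not_subset.1 fun h => hne (eq_of_subset_of_card_le h hcard.ge)
    rw [expect_per_sq_eq_sum hw hwJ, perSqBound, if_neg hne, mul_one, hcard]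
    exact hminors hw hcard

lemma rpow_half_add_mul_sq {n : ℕ} (hn : 0 < n) (ε : ℝ) :
    ((n : ℝ) ^ ((n : ℝ) / 2 + ε * n)) ^ 2 = (n : ℝ) ^ n * ((n : ℝ) ^ (2 * ε)) ^ n := by
  have hpos : (0 : ℝ) < n := by exact_mod_cast hn
  rw [← Real.rpow_mul_natCast hpos.le, ← Real.rpow_mul_natCast hpos.le, ← Real.rpow_natCast _ n,
    ← Real.rpow_add hpos]
  congr 1
  push_cast
  ring

lemma expect_per_univ_sq_le {n : ℕ} (hn : 0 < n) :
    𝔼 ω : Sym2 (Fin n) → Bool, per ω univ univ ^ 2 ≤ (4 * (n : ℝ)) ^ n := by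
  have : Nonempty (Fin n) := ⟨⟨0, hn⟩⟩
  have hpow : (n : ℝ) ≤ 2 ^ n := by exact_mod_cast Nat.lt_two_pow_self.le
  calc 𝔼 ω : Sym2 (Fin n) → Bool, per ω univ univ ^ 2
      ≤ (2 * (n : ℝ)) ^ n * n := by
        simpa [perSqBound] using expect_per_sq_le (univ : Finset (Fin n)) univ
    _ ≤ (2 * (n : ℝ)) ^ n * 2 ^ n := by gcongr
    _ = (4 * (n : ℝ)) ^ n := by rw [← mul_pow]; ring

lemma eventually_uniformProb_not_le_rpow {ε δ : ℝ} (hε : 0 < ε) (hδ : 0 < δ) :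
    ∀ᶠ n : ℕ in atTop, uniformProb (fun ω : Sym2 (Fin n) → Bool =>
      ¬|per ω univ univ| ≤ (n : ℝ) ^ ((n : ℝ) / 2 + ε * n)) ≤ δ := by
  have hlarge : ∀ᶠ n : ℕ in atTop, 8 ≤ (n : ℝ) ^ (2 * ε) :=
    ((tendsto_rpow_atTop (by positivity)).comp tendsto_natCast_atTop_atTop).eventually_ge_atTop 8
  have hsmall : ∀ᶠ n : ℕ in atTop, (1 / 2 : ℝ) ^ n < δ :=
    (tendsto_pow_atTop_nhds_zero_of_lt_one (by norm_num) (by norm_num)).eventually_lt_const hδ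
  filter_upwards [hlarge, hsmall, eventually_gt_atTop 0] with n h8 hδn hn
  set B : ℝ := (n : ℝ) ^ ((n : ℝ) / 2 + ε * n)
  have hB : 0 < B := by positivity
  calc uniformProb (fun ω : Sym2 (Fin n) → Bool => ¬|per ω univ univ| ≤ B)
      ≤ uniformProb (fun ω : Sym2 (Fin n) → Bool => B ^ 2 ≤ per ω univ univ ^ 2) :=
        uniformProb_mono fun ω h => sq_le_sq.2 (by rw [abs_of_pos hB]; exact (not_le.1 h).le)
    _ ≤ (𝔼 ω : Sym2 (Fin n) → Bool, per ω univ univ ^ 2) / B ^ 2 :=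
        uniformProb_markov (fun ω => sq_nonneg _) (by positivity)
    _ ≤ (1 / 2) ^ n := by
        rw [div_le_iff₀ (by positivity), rpow_half_add_mul_sq hn]
        calc 𝔼 ω : Sym2 (Fin n) → Bool, per ω univ univ ^ 2
            ≤ (4 * (n : ℝ)) ^ n := expect_per_univ_sq_le hn
          _ = (1 / 2) ^ n * ((n : ℝ) ^ n * 8 ^ n) := by
              rw [← mul_pow, ← mul_pow]
              ring
          _ ≤ (1 / 2) ^ n * ((n : ℝ) ^ n * ((n : ℝ) ^ (2 * ε)) ^ n) := by gcongr
    _ ≤ δ := hδn.le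

end UpperBound

/-! ### The conclusion -/

lemma injective_inf_sup_sym2 {α : Type*} [LinearOrder α] :
    Function.Injective fun z : Sym2 α => (z.inf, z.sup) := by
  intro y z h
  induction y with | _ a b =>
  induction z with | _ c d =>
  simp only [Sym2.inf_mk, Sym2.sup_mk, Prod.mk.injEq] at h
  rw [Sym2.eq_iff]
  grind

lemma perm_symMat_eq_per {n : ℕ} (ω : Fin n → Fin n → Bool) :
    perm (symMat n ω) = per (fun z => ω z.inf z.sup) univ univ := by
  rw [perm_eq_subperm]
  refine subperm_congr fun i _ k _ => ?_
  simp only [signMatrix, symMat, Sym2.inf_mk, Sym2.sup_mk]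
  split_ifs with hik
  · simp [hik]
  · simp [(not_le.1 hik).le]

lemma prob_eq_uniformProb (n : ℕ) (p : ℝ → Prop) : prob n (fun M => p (perm M)) =
    uniformProb fun ω : Sym2 (Fin n) → Bool => p (per ω univ univ) := by
  classical
  rw [← uniformProb_comp_injective injective_inf_sup_sym2,
    ← uniformProb_comp_equiv (Equiv.curry (Fin n) (Fin n) Bool).symm, uniformProb_eq_card_div, prob]
  simp only [perm_symMat_eq_per]
  congr 1
  simp [pow_mul]

lemma eventually_uniformProb_not_between_le {ε δ : ℝ} (hε : 0 < ε) (hδ : 0 < δ) :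
    ∀ᶠ n : ℕ in Filter.atTop, uniformProb (fun ω : Sym2 (Fin n) → Bool =>
      ¬((n : ℝ) ^ ((n : ℝ) / 2 - ε * n) ≤ |per ω univ univ| ∧
        |per ω univ univ| ≤ (n : ℝ) ^ ((n : ℝ) / 2 + ε * n))) ≤ δ := by
  have hmin : 0 < min ε (1 / 2) := lt_min hε (by norm_num)
  filter_upwards [eventually_uniformProb_not_rpow_le hmin (min_le_right _ _) (half_pos hδ),
    eventually_uniformProb_not_le_rpow hε (half_pos hδ), Filter.eventually_ge_atTop 1]
    with n hlower hupper hn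
  have hexp : (n : ℝ) ^ ((n : ℝ) / 2 - ε * n) ≤ (n : ℝ) ^ ((n : ℝ) / 2 - min ε (1 / 2) * n) :=
    Real.rpow_le_rpow_of_exponent_le (by exact_mod_cast hn) (by gcongr; exact min_le_left _ _)
  refine (uniformProb_mono fun ω h => ?_).trans
    ((uniformProb_or_le _ _).trans ((add_le_add hlower hupper).trans_eq (add_halves δ)))
  exact (not_and_or.1 h).imp_left (mt hexp.trans)

/-- Asymptotically almost surely, `|per M_n| = n^(n/2 + o(n))`: for every `ε > 0`, the
probability that `n^(n/2-εn) ≤ |per M_n| ≤ n^(n/2+εn)` tends to `1` as `n → ∞`. -/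
theorem per_magnitude (ε : ℝ) (hε : 0 < ε) :
    Filter.Tendsto
      (fun n : ℕ => prob n fun M =>
        (n : ℝ) ^ ((n : ℝ) / 2 - ε * n) ≤ |perm M| ∧
          |perm M| ≤ (n : ℝ) ^ ((n : ℝ) / 2 + ε * n))
      Filter.atTop (nhds 1) := by
  refine tendsto_order.2 ⟨fun a ha => ?_, fun a ha => .of_forall fun n => ?_⟩
  · filter_upwards [eventually_uniformProb_not_between_le hε (half_pos (sub_pos.2 ha))] with n hn
    rw [prob_eq_uniformProb n fun y => (n : ℝ) ^ ((n : ℝ) / 2 - ε * n) ≤ |y| ∧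
      |y| ≤ (n : ℝ) ^ ((n : ℝ) / 2 + ε * n)]
    rw [uniformProb_not] at hn
    linarith
  · rw [prob_eq_uniformProb n fun y => (n : ℝ) ^ ((n : ℝ) / 2 - ε * n) ≤ |y| ∧
      |y| ≤ (n : ℝ) ^ ((n : ℝ) / 2 + ε * n)]
    exact (uniformProb_le_one _).trans_lt ha
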